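/- arXiv:2406.06268 — 6 statements merged into one kernel-verified Lean document; each statement's English description precedes it below -/
import Mathlib

section
/- Let q₀ ∈ (1, ∞), let N ≥ 1 be a real number, let 1 < p < ∞ and 1 ≤ q < ∞, and suppose that either p < q₀ or q > q₀' (where p' = p/(p−1) and q₀' = q₀/(q₀−1)). Let U : (0,∞) → [0,∞) be non-increasing and V : (0,∞) → (0,∞) be non-decreasing. If sup_{s>0} (∫₀^{1/s} U(t)^q t^{N−1} dt)^{1/q} · (∫₀^{s} V(t)^{−p'} t^{N−1} dt)^{1/p'} < ∞, then sup_{s>0} (∫_{1/s}^{∞} U(t)^q t^{−Nq/q₀' + N − 1} dt)^{1/q} · (∫_{s}^{∞} V(t)^{−p'} t^{−Np'/q₀' + N − 1} dt)^{1/p'} < ∞. -/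
open MeasureTheory Set ENNReal

lemma aux_pow_Ioo (N x : ℝ) (hN : 1 ≤ N) (hx : 0 < x) :
    ∫⁻ t in Ioo (0:ℝ) x, ENNReal.ofReal (t ^ (N - 1)) = ENNReal.ofReal (x ^ N / N) := by
  have hi : IntervalIntegrable (fun t : ℝ => t ^ (N - 1)) volume 0 x :=
    intervalIntegral.intervalIntegrable_rpow' (by linarith)
  rw [intervalIntegrable_iff_integrableOn_Ioo_of_le hx.le] at hi
  rw [← ofReal_integral_eq_lintegral_ofReal hi]
  · rw [← integral_Ioc_eq_integral_Ioo, ← intervalIntegral.integral_of_le hx.le,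
      integral_rpow (Or.inl (by linarith))]
    rw [sub_add_cancel, Real.zero_rpow (by linarith), sub_zero]
  · filter_upwards [ae_restrict_mem measurableSet_Ioo] with t ht
    exact Real.rpow_nonneg ht.1.le _

lemma aux_pow_Ioi (e x : ℝ) (he : 0 < e) (hx : 0 < x) :
    ∫⁻ t in Ioi x, ENNReal.ofReal (t ^ (- e - 1)) = ENNReal.ofReal (x ^ (-e) / e) := by
  have hi := integrableOn_Ioi_rpow_of_lt (a := -e - 1) (by linarith) hx
  rw [← ofReal_integral_eq_lintegral_ofReal hi]
  · rw [integral_Ioi_rpow_of_lt (by linarith) hx, sub_add_cancel, neg_div_neg_eq]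
  · filter_upwards [ae_restrict_mem measurableSet_Ioi] with t ht
    exact Real.rpow_nonneg (hx.trans ht).le _

lemma aux_lower (N x : ℝ) (hN : 1 ≤ N) (hx : 0 < x) (G : ℝ → ℝ≥0∞)
    (hG : AntitoneOn G (Ioi 0)) :
    G x * ENNReal.ofReal (x ^ N / N) ≤
      ∫⁻ t in Ioo (0:ℝ) x, G t * ENNReal.ofReal (t ^ (N - 1)) := by
  rw [← aux_pow_Ioo N x hN hx, ← lintegral_const_mul _ (by fun_prop)]
  apply setLIntegral_mono_ae' measurableSet_Ioo
  filter_upwards with t ht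
  gcongr
  exact hG ht.1 hx ht.2.le

lemma aux_doubling (N x s : ℝ) (hN : 1 ≤ N) (hx : 0 < x) (hxs : x ≤ s) (G : ℝ → ℝ≥0∞)
    (hG : AntitoneOn G (Ioi 0)) :
    ∫⁻ t in Ioo (0:ℝ) s, G t * ENNReal.ofReal (t ^ (N - 1)) ≤
      ENNReal.ofReal (2 * (s / x) ^ N) *
      ∫⁻ t in Ioo (0:ℝ) x, G t * ENNReal.ofReal (t ^ (N - 1)) := by
  have hs : 0 < s := hx.trans_le hxs
  set B := ∫⁻ t in Ioo (0:ℝ) x, G t * ENNReal.ofReal (t ^ (N - 1)) with hB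
  have h1 : ∫⁻ t in Ico x s, G t * ENNReal.ofReal (t ^ (N - 1)) ≤
      G x * ENNReal.ofReal (s ^ N / N) := by
    rw [← aux_pow_Ioo N s hN hs, ← lintegral_const_mul _ (by fun_prop)]
    calc _ ≤ ∫⁻ t in Ico x s, G x * ENNReal.ofReal (t ^ (N - 1)) := by
          apply setLIntegral_mono_ae' measurableSet_Ico
          filter_upwards with t ht
          gcongr
          exact hG hx (hx.trans_le ht.1) ht.1
      _ ≤ _ := lintegral_mono_set (fun t (ht : t ∈ Ico x s) => show t ∈ Ioo 0 s from ⟨hx.trans_le ht.1, ht.2⟩)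
  have h2 : s ^ N / N = (s / x) ^ N * (x ^ N / N) := by
    rw [Real.div_rpow hs.le hx.le]
    have := (Real.rpow_pos_of_pos hx N).ne'
    field_simp
  have h1x : 1 ≤ (s / x) ^ N :=
    Real.one_le_rpow ((one_le_div hx).2 hxs) (by linarith)
  have h3 : G x * ENNReal.ofReal (s ^ N / N) ≤ ENNReal.ofReal ((s / x) ^ N) * B := by
    rw [h2, ENNReal.ofReal_mul (by linarith), mul_left_comm]
    gcongr
    exact aux_lower N x hN hx G hG
  have h4 : Ioo (0:ℝ) s ⊆ Ioo 0 x ∪ Ico x s := by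
    intro t ht
    rcases lt_or_ge t x with h | h
    · exact Or.inl ⟨ht.1, h⟩
    · exact Or.inr ⟨h, ht.2⟩
  calc _ ≤ _ := lintegral_mono_set h4
    _ ≤ _ := lintegral_union_le _ _ _
    _ ≤ ENNReal.ofReal ((s / x) ^ N) * B + ENNReal.ofReal ((s / x) ^ N) * B := by
      gcongr
      · calc B = 1 * B := (one_mul _).symm
          _ ≤ _ := by
            gcongr
            rw [← ENNReal.ofReal_one]
            exact ENNReal.ofReal_le_ofReal h1x
      · exact h1.trans h3
    _ = _ := by
      rw [two_mul, ENNReal.ofReal_add (by linarith) (by linarith), add_mul]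

lemma aux_second (N r a s : ℝ) (hN : 1 ≤ N) (ha : 0 < a) (har : a < r) (hs : 0 < s)
    (G : ℝ → ℝ≥0∞) (hG : AntitoneOn G (Ioi 0)) :
    ∫⁻ t in Ioi s, G t * ENNReal.ofReal (t ^ (-(N * r / a) + N - 1)) ≤
      ENNReal.ofReal (s ^ (-(N * r / a)) / (r / a - 1)) *
      ∫⁻ t in Ioo (0:ℝ) s, G t * ENNReal.ofReal (t ^ (N - 1)) := by
  have hra : 0 < r / a - 1 := by
    rw [sub_pos, one_lt_div ha]; exact har
  have he : 0 < N * (r / a - 1) := by positivity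
  have hexp : -(N * r / a) + N - 1 = -(N * (r / a - 1)) - 1 := by ring
  have key : s ^ (-(N * (r / a - 1))) / (N * (r / a - 1)) =
      (s ^ (-(N * r / a)) / (r / a - 1)) * (s ^ N / N) := by
    have : -(N * (r / a - 1)) = -(N * r / a) + N := by ring
    rw [this, Real.rpow_add hs]
    field_simp
  calc _ ≤ ∫⁻ t in Ioi s, G s * ENNReal.ofReal (t ^ (-(N * (r / a - 1)) - 1)) := by
        rw [hexp]
        apply setLIntegral_mono_ae' measurableSet_Ioi
        filter_upwards with t ht
        gcongr
        exact hG hs (hs.trans ht) (le_of_lt ht)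
    _ = G s * ENNReal.ofReal (s ^ (-(N * (r / a - 1))) / (N * (r / a - 1))) := by
        rw [lintegral_const_mul _ (by fun_prop), aux_pow_Ioi _ _ he hs]
    _ ≤ _ := by
        rw [key, ENNReal.ofReal_mul (by positivity), mul_left_comm]
        gcongr
        exact aux_lower N s hN hs G hG

lemma aux_first (N q a x : ℝ) (hN : 1 ≤ N) (ha : 0 < a) (hq : 0 < q) (hx : 0 < x)
    (F : ℝ → ℝ≥0∞) :
    ∫⁻ t in Ioi x, F t * ENNReal.ofReal (t ^ (-(N * q / a) + N - 1)) ≤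
      ∑' k : ℕ, ENNReal.ofReal ((2 ^ k * x) ^ (-(N * q / a))) *
        ∫⁻ t in Ioo (0:ℝ) (2 ^ (k + 1) * x), F t * ENNReal.ofReal (t ^ (N - 1)) := by
  have hsub : Ioi x ⊆ ⋃ k : ℕ, Ico (2 ^ k * x) (2 ^ (k + 1) * x) := by
    intro t ht
    have h1 : 1 ≤ t / x := (one_le_div hx).2 (le_of_lt ht)
    obtain ⟨n, hn1, hn2⟩ := exists_nat_pow_near h1 (one_lt_two)
    exact mem_iUnion.2 ⟨n, (le_div_iff₀ hx).1 hn1, (div_lt_iff₀ hx).1 hn2⟩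
  calc _ ≤ _ := lintegral_mono_set hsub
    _ ≤ _ := lintegral_iUnion_le _ _
    _ ≤ _ := by
      apply ENNReal.tsum_le_tsum
      intro k
      have hk : 0 < 2 ^ k * x := by positivity
      rw [← lintegral_const_mul' _ _ ENNReal.ofReal_ne_top]
      calc _ ≤ ∫⁻ t in Ico (2 ^ k * x) (2 ^ (k + 1) * x),
            ENNReal.ofReal ((2 ^ k * x) ^ (-(N * q / a))) *
              (F t * ENNReal.ofReal (t ^ (N - 1))) := by
            apply setLIntegral_mono_ae' measurableSet_Ico
            filter_upwards with t ht
            have ht0 : 0 < t := hk.trans_le ht.1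
            have h0 : 0 ≤ N * q / a := by positivity
            have hle : t ^ (-(N * q / a)) ≤ (2 ^ k * x) ^ (-(N * q / a)) :=
              Real.rpow_le_rpow_of_nonpos hk ht.1 (by linarith)
            rw [mul_left_comm, ← ENNReal.ofReal_mul (by positivity), add_sub_assoc,
              Real.rpow_add ht0]
            exact mul_le_mul_right (ENNReal.ofReal_le_ofReal
              (mul_le_mul_of_nonneg_right hle (by positivity))) _
        _ ≤ _ := lintegral_mono_set (fun t (ht : t ∈ Ico _ _) => show t ∈ Ioo 0 (2 ^ (k + 1) * x) from ⟨hk.trans_le ht.1, ht.2⟩)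

lemma aux_main (N q r a : ℝ) (hN : 1 ≤ N) (ha : 0 < a) (hq : 0 < q) (har : a < r)
    (F G : ℝ → ℝ≥0∞) (hG : AntitoneOn G (Ioi 0)) (M : ℝ)
    (hloc : ∀ s : ℝ, 0 < s →
      (∫⁻ t in Ioo (0:ℝ) (1/s), F t * ENNReal.ofReal (t ^ (N - 1))) ^ (1/q) *
      (∫⁻ t in Ioo (0:ℝ) s, G t * ENNReal.ofReal (t ^ (N - 1))) ^ (1/r)
        ≤ ENNReal.ofReal M) :
    ∃ M : ℝ, ∀ s : ℝ, 0 < s →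
      (∫⁻ t in Ioi (1/s), F t * ENNReal.ofReal (t ^ (-(N*q/a) + N - 1))) ^ (1/q) *
      (∫⁻ t in Ioi s, G t * ENNReal.ofReal (t ^ (-(N*r/a) + N - 1))) ^ (1/r)
        ≤ ENNReal.ofReal M := by
  have hr : 0 < r := ha.trans har
  have hra : 0 < r / a - 1 := by
    rw [sub_pos, one_lt_div ha]; exact har
  set ρ : ℝ := 2 ^ (N * q / r - N * q / a) with hρ
  have hρ0 : 0 < ρ := by positivity
  have hρ1 : ρ < 1 := by
    apply Real.rpow_lt_one_of_one_lt_of_neg one_lt_two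
    rw [sub_neg]
    gcongr
  set K : ℝ := (2 * 2 ^ N) ^ (q / r) with hK
  have hK0 : 0 < K := by positivity
  set S : ℝ≥0∞ := ENNReal.ofReal M ^ q * (ENNReal.ofReal K * (1 - ENNReal.ofReal ρ)⁻¹) with hS
  have hStop : S ≠ ∞ := by
    refine ENNReal.mul_ne_top (ENNReal.rpow_ne_top_of_nonneg hq.le ENNReal.ofReal_ne_top)
      (ENNReal.mul_ne_top ENNReal.ofReal_ne_top ?_)
    rw [ENNReal.inv_ne_top]
    exact (tsub_pos_of_lt (by rw [← ENNReal.ofReal_one]; exact (ENNReal.ofReal_lt_ofReal_iff one_pos).2 hρ1)).ne'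
  set C : ℝ≥0∞ := S ^ (1/q) * ENNReal.ofReal (1 / (r / a - 1)) ^ (1/r) with hC
  have hCtop : C ≠ ∞ := ENNReal.mul_ne_top
    (ENNReal.rpow_ne_top_of_nonneg (by positivity) hStop)
    (ENNReal.rpow_ne_top_of_nonneg (by positivity) ENNReal.ofReal_ne_top)
  refine ⟨C.toReal, fun s hs => ?_⟩
  rw [ENNReal.ofReal_toReal hCtop]
  set b := ∫⁻ t in Ioo (0:ℝ) s, G t * ENNReal.ofReal (t ^ (N - 1)) with hb
  set I := ∫⁻ t in Ioi (1/s), F t * ENNReal.ofReal (t ^ (-(N*q/a) + N - 1)) with hI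
  have hterm : ∀ k : ℕ,
      ENNReal.ofReal ((2 ^ k * (1/s)) ^ (-(N * q / a))) *
        (∫⁻ t in Ioo (0:ℝ) (2 ^ (k + 1) * (1/s)), F t * ENNReal.ofReal (t ^ (N - 1))) *
          b ^ (q / r) ≤
      ENNReal.ofReal (s ^ (N * q / a)) *
        (ENNReal.ofReal M ^ q * (ENNReal.ofReal K * ENNReal.ofReal ρ ^ k)) := by
    intro k
    set x : ℝ := s / 2 ^ (k + 1) with hx
    have hx0 : 0 < x := by positivity
    have hx1 : 2 ^ (k + 1) * (1/s) = 1 / x := by rw [hx]; field_simp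
    have hxs : x ≤ s := div_le_self hs.le (one_le_pow₀ one_le_two)
    have hl := hloc x hx0
    have hd := aux_doubling N x s hN hx0 hxs G hG
    rw [hx1]
    set A := ∫⁻ t in Ioo (0:ℝ) (1/x), F t * ENNReal.ofReal (t ^ (N - 1)) with hA
    set B := ∫⁻ t in Ioo (0:ℝ) x, G t * ENNReal.ofReal (t ^ (N - 1)) with hB
    have hl2 : A * B ^ (q / r) ≤ ENNReal.ofReal M ^ q := by
      have := ENNReal.rpow_le_rpow hl hq.le
      rw [ENNReal.mul_rpow_of_nonneg _ _ hq.le, ← ENNReal.rpow_mul, ← ENNReal.rpow_mul,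
        one_div_mul_cancel hq.ne', ENNReal.rpow_one, one_div_mul_eq_div] at this
      exact this
    have hd2 : b ^ (q / r) ≤ ENNReal.ofReal ((2 * (s / x) ^ N) ^ (q / r)) * B ^ (q / r) := by
      have := ENNReal.rpow_le_rpow hd (show 0 ≤ q / r by positivity)
      rw [ENNReal.mul_rpow_of_nonneg _ _ (by positivity),
        ENNReal.ofReal_rpow_of_nonneg (by positivity) (by positivity)] at this
      exact this
    have hsx : s / x = 2 ^ (k + 1) := by rw [hx]; field_simp
    have hreal : (2 ^ k * (1/s)) ^ (-(N * q / a)) * (2 * (s / x) ^ N) ^ (q / r) =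
        s ^ (N * q / a) * (K * ρ ^ k) := by
      rw [hsx, hK, hρ, Real.mul_rpow (by positivity) (by positivity), one_div,
        Real.inv_rpow hs.le, Real.rpow_neg hs.le, inv_inv, pow_succ,
        Real.mul_rpow (x := (2 ^ k : ℝ)) (z := N) (by positivity) (by positivity),
        mul_comm ((2 ^ k : ℝ) ^ N), ← mul_assoc,
        Real.mul_rpow (x := 2 * 2 ^ N) (by positivity) (by positivity)]
      have e1 : (2 ^ k : ℝ) ^ (-(N * q / a)) * ((2 ^ k : ℝ) ^ N) ^ (q / r) =
          ((2:ℝ) ^ (N * q / r - N * q / a)) ^ k := by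
        rw [← Real.rpow_mul (by positivity), ← Real.rpow_add (by positivity),
          ← Real.rpow_natCast, ← Real.rpow_mul (by positivity), ← Real.rpow_natCast,
          ← Real.rpow_mul (by positivity)]
        congr 1
        ring
      rw [← e1]
      ring
    calc _ ≤ ENNReal.ofReal ((2 ^ k * (1/s)) ^ (-(N * q / a))) * A *
          (ENNReal.ofReal ((2 * (s / x) ^ N) ^ (q / r)) * B ^ (q / r)) := by gcongr
      _ = ENNReal.ofReal ((2 ^ k * (1/s)) ^ (-(N * q / a)) * (2 * (s / x) ^ N) ^ (q / r)) *
          (A * B ^ (q / r)) := by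
        rw [ENNReal.ofReal_mul (by positivity)]; ring
      _ ≤ ENNReal.ofReal (s ^ (N * q / a) * (K * ρ ^ k)) * ENNReal.ofReal M ^ q := by
        rw [hreal]; gcongr
      _ = _ := by
        rw [ENNReal.ofReal_mul (by positivity), ENNReal.ofReal_mul (by positivity),
          ENNReal.ofReal_pow hρ0.le]; ring
  have hIb : I * b ^ (q / r) ≤ ENNReal.ofReal (s ^ (N * q / a)) * S := by
    calc _ ≤ _ := mul_le_mul_left (aux_first N q a (1/s) hN ha hq (by positivity) F) _
      _ ≤ ∑' k : ℕ, ENNReal.ofReal (s ^ (N * q / a)) *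
        (ENNReal.ofReal M ^ q * (ENNReal.ofReal K * ENNReal.ofReal ρ ^ k)) := by
        rw [← ENNReal.tsum_mul_right]
        exact ENNReal.tsum_le_tsum hterm
      _ = _ := by
        rw [ENNReal.tsum_mul_left, ENNReal.tsum_mul_left, ENNReal.tsum_mul_left,
          ENNReal.tsum_geometric]
  have hJ := aux_second N r a s hN ha har hs G hG
  rw [← hb] at hJ
  have hIb2 : I ^ (1/q) * b ^ (1/r) ≤ ENNReal.ofReal (s ^ (N / a)) * S ^ (1/q) := by
    have := ENNReal.rpow_le_rpow hIb (show 0 ≤ 1/q by positivity)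
    rw [ENNReal.mul_rpow_of_nonneg _ _ (by positivity), ← ENNReal.rpow_mul,
      ENNReal.mul_rpow_of_nonneg _ _ (by positivity),
      ENNReal.ofReal_rpow_of_nonneg (by positivity) (by positivity),
      ← Real.rpow_mul hs.le, show q / r * (1/q) = 1/r by field_simp,
      show N * q / a * (1/q) = N / a by field_simp] at this
    exact this
  have hJ2 := ENNReal.rpow_le_rpow hJ (show 0 ≤ 1/r by positivity)
  rw [ENNReal.mul_rpow_of_nonneg _ _ (by positivity),
    div_eq_mul_one_div (s ^ (-(N * r / a))),
    ENNReal.ofReal_mul (by positivity), ENNReal.mul_rpow_of_nonneg _ _ (by positivity),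
    ENNReal.ofReal_rpow_of_nonneg (x := s ^ (-(N * r / a))) (by positivity) (by positivity),
    ← Real.rpow_mul hs.le, show -(N * r / a) * (1/r) = -(N / a) by field_simp] at hJ2
  calc _ ≤ I ^ (1/q) * (ENNReal.ofReal (s ^ (-(N / a))) *
        ENNReal.ofReal (1 / (r / a - 1)) ^ (1/r) * b ^ (1/r)) := by gcongr
    _ = (I ^ (1/q) * b ^ (1/r)) * (ENNReal.ofReal (s ^ (-(N / a))) *
        ENNReal.ofReal (1 / (r / a - 1)) ^ (1/r)) := by ring
    _ ≤ (ENNReal.ofReal (s ^ (N / a)) * S ^ (1/q)) * (ENNReal.ofReal (s ^ (-(N / a))) *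
        ENNReal.ofReal (1 / (r / a - 1)) ^ (1/r)) := by gcongr
    _ = ENNReal.ofReal (s ^ (N / a) * s ^ (-(N / a))) * C := by
        rw [ENNReal.ofReal_mul (by positivity), hC]; ring
    _ = C := by
        rw [← Real.rpow_add hs, add_neg_cancel, Real.rpow_zero, ENNReal.ofReal_one, one_mul]

/-- If the "local" weight condition with power `t^(N-1)` holds for a
non-increasing `U` and a non-decreasing `V`, and either `p < q₀` or `q > q₀'`, then the
corresponding "global" condition with powers `t^(-Nq/q₀' + N - 1)`, `t^(-Np'/q₀' + N - 1)`
holds as well. -/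
theorem stmt0 (q₀ N p q p' q₀' : ℝ)
    (hq₀ : 1 < q₀) (hN : 1 ≤ N) (hp : 1 < p) (hq : 1 ≤ q)
    (hp'def : p' = p / (p - 1)) (hq₀'def : q₀' = q₀ / (q₀ - 1))
    (hcase : p < q₀ ∨ q > q₀')
    (U V : ℝ → ℝ)
    (hU0 : ∀ t ∈ Ioi (0:ℝ), 0 ≤ U t) (hV0 : ∀ t ∈ Ioi (0:ℝ), 0 < V t)
    (hUanti : AntitoneOn U (Ioi 0)) (hVmono : MonotoneOn V (Ioi 0))
    (hloc : ∃ M : ℝ, ∀ s : ℝ, 0 < s →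
      (∫⁻ t in Ioo (0:ℝ) (1/s), ENNReal.ofReal (U t ^ q * t ^ (N - 1))) ^ (1/q) *
      (∫⁻ t in Ioo (0:ℝ) s, ENNReal.ofReal (V t ^ (-p') * t ^ (N - 1))) ^ (1/p')
        ≤ ENNReal.ofReal M) :
    ∃ M : ℝ, ∀ s : ℝ, 0 < s →
      (∫⁻ t in Ioi (1/s), ENNReal.ofReal (U t ^ q * t ^ (-(N*q/q₀') + N - 1))) ^ (1/q) *
      (∫⁻ t in Ioi s, ENNReal.ofReal (V t ^ (-p') * t ^ (-(N*p'/q₀') + N - 1))) ^ (1/p')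
        ≤ ENNReal.ofReal M := by
  obtain ⟨M, hM⟩ := hloc
  have hp' : 1 < p' := by
    rw [hp'def, one_lt_div (by linarith)]; linarith
  have ha : 0 < q₀' := by
    rw [hq₀'def]; exact div_pos (by linarith) (by linarith)
  have hF : AntitoneOn (fun t => ENNReal.ofReal (U t ^ q)) (Ioi 0) := by
    intro x hx y hy hxy
    exact ENNReal.ofReal_le_ofReal
      (Real.rpow_le_rpow (hU0 y hy) (hUanti hx hy hxy) (by linarith))
  have hG : AntitoneOn (fun t => ENNReal.ofReal (V t ^ (-p'))) (Ioi 0) := by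
    intro x hx y hy hxy
    exact ENNReal.ofReal_le_ofReal
      (Real.rpow_le_rpow_of_nonpos (hV0 x hx) (hVmono hx hy hxy) (by linarith))
  have cU : ∀ (E : Set ℝ) (e : ℝ), MeasurableSet E → E ⊆ Ioi 0 →
      ∫⁻ t in E, ENNReal.ofReal (U t ^ q * t ^ e) =
      ∫⁻ t in E, ENNReal.ofReal (U t ^ q) * ENNReal.ofReal (t ^ e) := by
    intro E e hE hsub
    refine setLIntegral_congr_fun hE fun t ht => ?_
    exact ENNReal.ofReal_mul (Real.rpow_nonneg (hU0 t (hsub ht)) _)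
  have cV : ∀ (E : Set ℝ) (e : ℝ), MeasurableSet E → E ⊆ Ioi 0 →
      ∫⁻ t in E, ENNReal.ofReal (V t ^ (-p') * t ^ e) =
      ∫⁻ t in E, ENNReal.ofReal (V t ^ (-p')) * ENNReal.ofReal (t ^ e) := by
    intro E e hE hsub
    refine setLIntegral_congr_fun hE fun t ht => ?_
    exact ENNReal.ofReal_mul (Real.rpow_nonneg (hV0 t (hsub ht)).le _)
  have sub1 : ∀ s : ℝ, Ioo 0 s ⊆ Ioi 0 := fun s t ht => ht.1
  have sub2 : ∀ s : ℝ, 0 < s → Ioi s ⊆ Ioi 0 := fun s hs => Ioi_subset_Ioi hs.le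
  rcases hcase with h | h
  · have har : q₀' < p' := by
      rw [hp'def, hq₀'def, div_lt_div_iff₀ (by linarith) (by linarith)]
      nlinarith
    obtain ⟨C, hC⟩ := aux_main N q p' q₀' hN ha (by linarith) har _ _ hG M (fun s hs => by
      have := hM s hs
      rw [cU _ _ measurableSet_Ioo (sub1 _), cV _ _ measurableSet_Ioo (sub1 _)] at this
      exact this)
    refine ⟨C, fun s hs => ?_⟩
    rw [cU _ _ measurableSet_Ioi (sub2 _ (by positivity)),
      cV _ _ measurableSet_Ioi (sub2 _ hs)]
    exact hC s hs
  · obtain ⟨C, hC⟩ := aux_main N p' q q₀' hN ha (by linarith) h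
      (fun t => ENNReal.ofReal (V t ^ (-p'))) _ hF M (fun s hs => by
      have := hM (1/s) (by positivity)
      rw [cU _ _ measurableSet_Ioo (sub1 _), cV _ _ measurableSet_Ioo (sub1 _),
        one_div_one_div, mul_comm] at this
      exact this)
    refine ⟨C, fun s hs => ?_⟩
    rw [cU _ _ measurableSet_Ioi (sub2 _ (by positivity)),
      cV _ _ measurableSet_Ioi (sub2 _ hs)]
    have := hC (1/s) (by positivity)
    rw [one_div_one_div, mul_comm] at this
    exact this
end

section
/- Let (M₁, μ) and (M₂, ν) be σ-finite measure spaces, a ∈ (1, 2] with a' = a/(a−1), and let T be a sublinear operator on L¹(μ) ∩ L^a(μ) (i.e. |T(f+g)| ≤ |Tf| + |Tg| ν-a.e. and |T(cf)| = |c|·|Tf| ν-a.e.) satisfying ess sup_ν |Tf| ≤ A‖f‖_{L¹(μ)} and ‖Tf‖_{L^{a'}(ν)} ≤ B‖f‖_{L^{a}(μ)}. Let u be a non-negative ν-measurable function on M₂ and v a positive μ-measurable function on M₁; write U = u* (rearrangement with respect to ν) and 1/V = (1/v)* (rearrangement with respect to μ). Let 1 < p ≤ q < ∞ with p' = p/(p−1).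 If sup_{s>0} (∫₀^{1/s} U(t)^q dt)^{1/q} (∫₀^{s} V(t)^{−p'} dt)^{1/p'} < ∞ and sup_{s>0} (∫_{1/s}^{∞} U(t)^q t^{−q/a'} dt)^{1/q} (∫_{s}^{∞} V(t)^{−p'} t^{−p'/a'} dt)^{1/p'} < ∞, then there exists a constant C > 0 such that (∫_{M₂} (u |Tf|)^q dν)^{1/q} ≤ C (∫_{M₁} (v |f|)^p dμ)^{1/p} for all f ∈ L¹(μ) ∩ L^a(μ). -/
open MeasureTheory Set ENNReal

/-- The non-increasing rearrangement of `f` with respect to `μ`: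
`f*(t) = inf {α : μ({x : |f x| > α}) ≤ t}`. -/
noncomputable def rearr {X : Type*} [MeasurableSpace X] (μ : Measure X)
    (f : X → ℝ) (t : ℝ) : ℝ≥0∞ :=
  sInf {α : ℝ≥0∞ | μ {x | α < ENNReal.ofReal |f x|} ≤ ENNReal.ofReal t}


noncomputable def rE {X : Type*} [MeasurableSpace X] (μ : Measure X)
    (f : X → ℝ≥0∞) (t : ℝ) : ℝ≥0∞ :=
  sInf {α : ℝ≥0∞ | μ {x | α < f x} ≤ ENNReal.ofReal t}

theorem rE_antitone {X : Type*} [MeasurableSpace X] (μ : Measure X) (f : X → ℝ≥0∞) :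
    Antitone (rE μ f) := by
  intro s t hst
  apply sInf_le_sInf
  intro α hα
  exact le_trans hα (ENNReal.ofReal_le_ofReal hst)

theorem rE_le {X : Type*} [MeasurableSpace X] (μ : Measure X) (f : X → ℝ≥0∞) {t : ℝ} {α : ℝ≥0∞}
    (h : μ {x | α < f x} ≤ ENNReal.ofReal t) : rE μ f t ≤ α := sInf_le h

theorem rE_dom {X : Type*} [MeasurableSpace X] (μ : Measure X) (f : X → ℝ≥0∞) (t : ℝ) :
    μ {x | rE μ f t < f x} ≤ ENNReal.ofReal t := by
  set S := {α : ℝ≥0∞ | μ {x | α < f x} ≤ ENNReal.ofReal t} with hS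
  have hne : S.Nonempty := ⟨⊤, by simp [hS]⟩
  obtain ⟨w, hanti, htend, hw⟩ := exists_seq_tendsto_sInf hne (OrderBot.bddBelow S)
  have : {x | rE μ f t < f x} = ⋃ n, {x | w n < f x} := by
    ext x
    simp only [mem_ofPred_eq, mem_iUnion]
    constructor
    · intro h
      exact (htend.eventually_lt_const h).exists
    · rintro ⟨n, hn⟩
      exact lt_of_le_of_lt (sInf_le (hw n)) hn
  rw [this, Monotone.measure_iUnion]
  · exact iSup_le fun n => hw n
  · intro i j hij x hx
    exact lt_of_le_of_lt (hanti hij) hx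

theorem vol_lt (c : ℝ≥0∞) : volume ({α : ℝ | ENNReal.ofReal α < c} ∩ Ioi 0) = c := by
  rcases eq_or_ne c ⊤ with rfl | hc
  · simp
  · have : {α : ℝ | ENNReal.ofReal α < c} ∩ Ioi 0 = Ioo 0 c.toReal := by
      ext α
      simp only [mem_inter_iff, mem_ofPred_eq, mem_Ioi, mem_Ioo]
      constructor
      · rintro ⟨h1, h2⟩
        exact ⟨h2, (ENNReal.ofReal_lt_iff_lt_toReal h2.le hc).1 h1⟩
      · rintro ⟨h1, h2⟩
        exact ⟨(ENNReal.ofReal_lt_iff_lt_toReal h1.le hc).2 h2, h1⟩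
    rw [this]; simp [hc]

theorem layer {X : Type*} [MeasurableSpace X] (m : Measure X) [SFinite m] {g : X → ℝ≥0∞}
    (hg : Measurable g) :
    ∫⁻ x, g x ∂m = ∫⁻ α in Ioi (0:ℝ), m {x | ENNReal.ofReal α < g x} := by
  have hset : MeasurableSet {z : X × ℝ | ENNReal.ofReal z.2 < g z.1} :=
    measurableSet_lt (by fun_prop) (by fun_prop)
  have h1 : ∀ x, g x = ∫⁻ α in Ioi (0:ℝ),
      {z : X × ℝ | ENNReal.ofReal z.2 < g z.1}.indicator 1 (x, α) := by
    intro x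
    have : (fun α : ℝ => {z : X × ℝ | ENNReal.ofReal z.2 < g z.1}.indicator (1 : X × ℝ → ℝ≥0∞) (x, α))
       = {α : ℝ | ENNReal.ofReal α < g x}.indicator 1 := by
      ext α; simp [indicator]
    rw [this, lintegral_indicator_one (measurableSet_lt (by fun_prop) (by fun_prop)),
      Measure.restrict_apply (measurableSet_lt (by fun_prop) (by fun_prop)), vol_lt]
  rw [lintegral_congr h1, lintegral_lintegral_swap]
  · refine lintegral_congr fun α => ?_
    have : (fun x : X => {z : X × ℝ | ENNReal.ofReal z.2 < g z.1}.indicator (1 : X × ℝ → ℝ≥0∞) (x, α))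
       = {x : X | ENNReal.ofReal α < g x}.indicator 1 := by
      ext x; simp [indicator]
    rw [this, lintegral_indicator_one (measurableSet_lt (by fun_prop) (by fun_prop))]
  · exact ((measurable_const.indicator hset : Measurable ({z : X × ℝ | ENNReal.ofReal z.2 < g z.1}.indicator fun _ => (1:ℝ≥0∞)))).aemeasurable

theorem layer2 {X : Type*} [MeasurableSpace X] (m : Measure X) [SFinite m] {g k : X → ℝ≥0∞}
    (hg : Measurable g) (hk : Measurable k) :
    ∫⁻ x, g x * k x ∂m = ∫⁻ α in Ioi (0:ℝ), ∫⁻ β in Ioi (0:ℝ),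
      m ({x | ENNReal.ofReal β < k x} ∩ {x | ENNReal.ofReal α < g x}) := by
  have h := lintegral_withDensity_eq_lintegral_mul m hk hg
  have : ∫⁻ x, g x * k x ∂m = ∫⁻ x, g x ∂(m.withDensity k) := by
    rw [h]; refine lintegral_congr fun x => by simp [mul_comm]
  rw [this, layer _ hg]
  refine lintegral_congr fun α => ?_
  have hs : MeasurableSet {x | ENNReal.ofReal α < g x} := measurableSet_lt (by fun_prop) (by fun_prop)
  rw [withDensity_apply _ hs, layer _ hk]
  refine lintegral_congr fun β => ?_
  rw [Measure.restrict_apply (measurableSet_lt (by fun_prop) (by fun_prop))]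

theorem anti_meas {H : ℝ → ℝ≥0∞} (_ : Antitone H) {α : ℝ≥0∞} {c : ℝ≥0∞}
   (h : ∀ t : ℝ, 0 < t → H t ≤ α → c ≤ ENNReal.ofReal t) {r : ℝ} (hr : ENNReal.ofReal r < c) (hr0 : 0 < r) :
   α < H r := by
  by_contra hcon
  exact absurd (h r hr0 (not_lt.1 hcon)) (not_le.2 hr)

/-- Hardy–Littlewood with dominating antitone functions. -/
theorem HL {X : Type*} [MeasurableSpace X] (m : Measure X) [SFinite m] {g k : X → ℝ≥0∞}
    (hg : Measurable g) (hk : Measurable k) {H K : ℝ → ℝ≥0∞} (hH : Antitone H) (hK : Antitone K)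
    (hgH : ∀ t : ℝ, 0 < t → m {x | H t < g x} ≤ ENNReal.ofReal t)
    (hkK : ∀ t : ℝ, 0 < t → m {x | K t < k x} ≤ ENNReal.ofReal t) :
    ∫⁻ x, g x * k x ∂m ≤ ∫⁻ t in Ioi (0:ℝ), H t * K t := by
  rw [layer2 m hg hk, layer2 _ hH.measurable hK.measurable]
  refine lintegral_mono fun α => lintegral_mono fun β => ?_
  set c := min (m {x | ENNReal.ofReal β < k x}) (m {x | ENNReal.ofReal α < g x}) with hc
  have h1 : m ({x | ENNReal.ofReal β < k x} ∩ {x | ENNReal.ofReal α < g x}) ≤ c :=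
    le_min (measure_mono inter_subset_left) (measure_mono inter_subset_right)
  refine h1.trans ?_
  rw [Measure.restrict_apply ((measurableSet_lt measurable_const hK.measurable).inter
    (measurableSet_lt measurable_const hH.measurable))]
  rw [← vol_lt c]
  refine measure_mono ?_
  rintro r ⟨hr, hr0⟩
  refine ⟨⟨?_, ?_⟩, hr0⟩
  · refine anti_meas hK (c := c) ?_ hr hr0
    intro t ht hle
    refine (min_le_left _ _).trans (le_trans (measure_mono ?_) (hkK t ht))
    intro x hx; exact lt_of_le_of_lt hle hx
  · refine anti_meas hH (c := c) ?_ hr hr0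
    intro t ht hle
    refine (min_le_right _ _).trans (le_trans (measure_mono ?_) (hgH t ht))
    intro x hx; exact lt_of_le_of_lt hle hx

theorem HLpow {X : Type*} [MeasurableSpace X] (m : Measure X) [SFinite m] {g k : X → ℝ≥0∞}
    (hg : Measurable g) (hk : Measurable k) {H K : ℝ → ℝ≥0∞} (hH : Antitone H) (hK : Antitone K)
    (hgH : ∀ t : ℝ, 0 < t → m {x | H t < g x} ≤ ENNReal.ofReal t)
    (hkK : ∀ t : ℝ, 0 < t → m {x | K t < k x} ≤ ENNReal.ofReal t) {r : ℝ} (hr : 0 < r) :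
    ∫⁻ x, (g x * k x) ^ r ∂m ≤ ∫⁻ t in Ioi (0:ℝ), (H t * K t) ^ r := by
  simp only [ENNReal.mul_rpow_of_nonneg _ _ hr.le]
  refine HL m (hg.pow_const r) (hk.pow_const r) (fun s t h => ENNReal.rpow_le_rpow (hH h) hr.le)
     (fun s t h => ENNReal.rpow_le_rpow (hK h) hr.le) ?_ ?_
  · intro t ht
    simpa only [ENNReal.rpow_lt_rpow_iff hr] using hgH t ht
  · intro t ht
    simpa only [ENNReal.rpow_lt_rpow_iff hr] using hkK t ht

theorem rE_Lp {X : Type*} [MeasurableSpace X] (m : Measure X) [SFinite m] {g : X → ℝ≥0∞}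
    (hg : Measurable g) {r : ℝ} (hr : 0 < r) :
    ∫⁻ t in Ioi (0:ℝ), (rE m g t) ^ r ≤ ∫⁻ x, g x ^ r ∂m := by
  rw [layer _ (hg.pow_const r), layer _ ((rE_antitone m g).measurable.pow_const r)]
  refine lintegral_mono fun α => ?_
  rw [Measure.restrict_apply (measurableSet_lt measurable_const ((rE_antitone m g).measurable.pow_const r))]
  rw [← vol_lt (m _)]
  refine measure_mono ?_
  rintro t ⟨ht, ht0⟩
  refine ⟨?_, ht0⟩
  simp only [mem_ofPred_eq] at ht ⊢
  by_contra hcon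
  rw [not_lt] at hcon
  have h2 : ∀ y : ℝ≥0∞, ENNReal.ofReal α < y ^ r ↔ (ENNReal.ofReal α) ^ (1/r) < y := by
    intro y
    rw [one_div, ENNReal.rpow_inv_lt_iff hr]
  simp only [h2] at ht hcon
  exact absurd (rE_le m g hcon) (not_le.2 ht)

theorem cofinal_dn (L : Set ℝ) : ∃ D ⊆ L, D.Countable ∧ ∀ t ∈ L, ∃ d ∈ D, d ≤ t := by
  by_cases hm : ∃ m ∈ L, ∀ t ∈ L, m ≤ t
  · obtain ⟨m, hm, h⟩ := hm
    exact ⟨{m}, by simpa using hm, countable_singleton m, fun t ht => ⟨m, rfl, h t ht⟩⟩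
  · push Not at hm
    have : ∀ r : {r : ℚ // ∃ t ∈ L, t < r}, ∃ t ∈ L, t < (r.1 : ℝ) := fun r => r.2
    choose w hw hw2 using this
    refine ⟨range w, by rintro _ ⟨r, rfl⟩; exact hw r, countable_range w, ?_⟩
    intro t ht
    obtain ⟨t', ht', hlt⟩ := hm t ht
    obtain ⟨r, h1, h2⟩ := exists_rat_btwn hlt
    exact ⟨_, ⟨⟨r, t', ht', h1⟩, rfl⟩, ((hw2 _).trans h2).le⟩

theorem cofinal_up (L : Set ℝ) : ∃ D ⊆ L, D.Countable ∧ ∀ t ∈ L, ∃ d ∈ D, t ≤ d := by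
  obtain ⟨D, h1, h2, h3⟩ := cofinal_dn (Neg.neg '' L)
  refine ⟨Neg.neg '' D, ?_, h2.image _, ?_⟩
  · rintro _ ⟨d, hd, rfl⟩
    obtain ⟨e, he, rfl⟩ := h1 hd
    simpa using he
  · intro t ht
    obtain ⟨d, hd, hle⟩ := h3 (-t) ⟨t, ht, rfl⟩
    exact ⟨-d, ⟨d, hd, rfl⟩, by linarith⟩

theorem meas_L_le (η : Measure ℝ) (L : Set ℝ) (c : ℝ≥0∞) (h : ∀ s ∈ L, η (Ici s) ≤ c) :
    η L ≤ c := by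
  obtain ⟨D, h1, h2, h3⟩ := cofinal_dn L
  have : L ⊆ ⋃ d ∈ D, Ici d := by
    intro t ht
    obtain ⟨d, hd, hle⟩ := h3 t ht
    exact mem_biUnion hd hle
  refine (measure_mono this).trans ?_
  rw [measure_biUnion_eq_iSup h2]
  · exact iSup₂_le fun d hd => h d (h1 hd)
  · intro x hx y hy
    rcases le_total x y with hxy | hxy
    · exact ⟨x, hx, subset_rfl, Ici_subset_Ici.2 hxy⟩
    · exact ⟨y, hy, Ici_subset_Ici.2 hxy, subset_rfl⟩

theorem P_meas {Y : Type*} [MeasurableSpace Y] (m : Measure Y) (S : ℝ → Set Y) (hS : Monotone S)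
    (hSm : ∀ s, MeasurableSet (S s)) (L : Set ℝ) :
    MeasurableSet (⋃ s ∈ L, S s) ∧ ∀ c, (∀ s ∈ L, m (S s) ≤ c) → m (⋃ s ∈ L, S s) ≤ c := by
  obtain ⟨D, h1, h2, h3⟩ := cofinal_up L
  have : (⋃ s ∈ L, S s) = ⋃ d ∈ D, S d := by
    apply subset_antisymm
    · refine iUnion₂_subset fun t ht => ?_
      obtain ⟨d, hd, hle⟩ := h3 t ht
      exact (hS hle).trans (subset_biUnion_of_mem hd)
    · exact biUnion_subset_biUnion_left h1
  rw [this]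
  refine ⟨MeasurableSet.biUnion h2 fun d _ => hSm d, fun c hc => ?_⟩
  rw [measure_biUnion_eq_iSup h2]
  · exact iSup₂_le fun d hd => hc d (h1 hd)
  · intro x hx y hy
    rcases le_total x y with hxy | hxy
    · exact ⟨y, hy, hS hxy, subset_rfl⟩
    · exact ⟨x, hx, subset_rfl, hS hxy⟩

theorem tsum_rpow_le_aux {ι : Type*} (n : ι → ℝ≥0∞) {r : ℝ} (hr : 1 ≤ r) :
    ∑' k, n k ^ r ≤ (∑' k, n k) ^ r := by
  have e : ∀ x : ℝ≥0∞, x ^ r = x * x ^ (r - 1) := by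
    intro x
    conv_lhs => rw [show r = 1 + (r - 1) by ring]
    rw [ENNReal.rpow_add_of_nonneg _ _ (by norm_num) (by linarith), ENNReal.rpow_one]
  calc ∑' k, n k ^ r ≤ ∑' k, n k * (∑' k, n k) ^ (r - 1) := by
        refine ENNReal.tsum_le_tsum fun k => ?_
        rw [e]
        gcongr
        exact ENNReal.le_tsum k
    _ = (∑' k, n k) ^ r := by rw [ENNReal.tsum_mul_right, ← e]

theorem zp_succ (k : ℤ) : (2:ℝ≥0∞) ^ (k + 1) = 2 * 2 ^ k := by
  rw [ENNReal.zpow_add (by norm_num) (by norm_num), zpow_one, mul_comm]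

theorem hardy (η : Measure ℝ) {Y : Type*} [MeasurableSpace Y] (m : Measure Y) (S : ℝ → Set Y)
    (hS : Monotone S) (hSm : ∀ s, MeasurableSet (S s)) {ψ γ : Y → ℝ≥0∞} (hψ : Measurable ψ)
    (hγ : Measurable γ) {p q p' : ℝ} (hpp : p.HolderConjugate p') (hpq : p ≤ q) {M : ℝ≥0∞}
    (hM0 : M ≠ 0) (hMt : M ≠ ⊤)
    (h : ∀ s, η (Ici s) ^ (1/q) * (∫⁻ y in S s, ψ y ^ p' ∂m) ^ (1/p') ≤ M) :
    (∫⁻ s, (∫⁻ y in S s, γ y * ψ y ∂m) ^ q ∂η) ^ (1/q) ≤ 8 * M * (∫⁻ y, γ y ^ p ∂m) ^ (1/p) := by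
  have hp0 : 0 < p := hpp.pos
  have hp1 : 1 < p := hpp.lt
  have hp'0 : 0 < p' := hpp.symm.pos
  have hq0 : 0 < q := hp0.trans_le hpq
  set N := ∫⁻ y, γ y ^ p ∂m with hN
  rcases eq_or_ne N ⊤ with hNt | hNt
  · rw [hNt, ENNReal.top_rpow_of_pos (by positivity), ENNReal.mul_top]
    · exact le_top
    · exact mul_ne_zero (by norm_num) hM0
  set F : ℝ → ℝ≥0∞ := fun s => ∫⁻ y in S s, γ y * ψ y ∂m with hF
  have hFmono : Monotone F := fun s t hst => lintegral_mono_set (hS hst)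
  have hFm : Measurable F := hFmono.measurable
  set mρ := m.withDensity (fun y => γ y * ψ y) with hmρ
  have hFρ : ∀ s, mρ (S s) = F s := fun s => withDensity_apply _ (hSm s)
  -- Hölder on a set
  have hold : ∀ E : Set Y, ∫⁻ y in E, γ y * ψ y ∂m ≤
      (∫⁻ y in E, γ y ^ p ∂m) ^ (1/p) * (∫⁻ y in E, ψ y ^ p' ∂m) ^ (1/p') := fun E =>
    ENNReal.lintegral_mul_le_Lp_mul_Lq _ hpp hγ.aemeasurable hψ.aemeasurable
  -- the infinite part
  have hinf : η {s | F s = ⊤} = 0 := by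
    refine le_antisymm (meas_L_le η _ 0 ?_) bot_le
    intro s hs
    have h1 := hold (S s)
    rw [show ∫⁻ y in S s, γ y * ψ y ∂m = ⊤ from hs, top_le_iff] at h1
    have h2 : (∫⁻ y in S s, γ y ^ p ∂m) ^ (1/p) ≠ ⊤ := by
      refine ENNReal.rpow_ne_top_of_nonneg (by positivity) (ne_top_of_le_ne_top hNt ?_)
      exact setLIntegral_le_lintegral _ _
    have h3 : (∫⁻ y in S s, ψ y ^ p' ∂m) ^ (1/p') = ⊤ := by
      by_contra hcon
      exact ENNReal.mul_ne_top h2 hcon h1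
    have h4 := h s
    rw [h3] at h4
    by_contra hcon
    have h5 : η (Ici s) ^ (1/q) ≠ 0 := by
      intro h0
      rw [ENNReal.rpow_eq_zero_iff_of_pos (by positivity)] at h0
      exact hcon h0.le
    rw [ENNReal.mul_top h5, top_le_iff] at h4
    exact hMt h4
  set P : ℤ → Set Y := fun k => ⋃ s ∈ {s | F s ≤ 2 ^ k}, S s with hP
  have hPm : ∀ k, MeasurableSet (P k) := fun k => (P_meas mρ S hS hSm _).1
  have hPle : ∀ k, mρ (P k) ≤ 2 ^ k := fun k =>
    (P_meas mρ S hS hSm _).2 _ (fun s hs => by rw [hFρ]; exact hs)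
  have hPmono : Monotone P := by
    intro k l hkl
    refine biUnion_subset_biUnion_left fun s hs => ?_
    exact le_trans hs (ENNReal.zpow_le_of_le (by norm_num) hkl)
  set Q : ℤ → Set Y := fun k => P (k+1) \ P k with hQ
  have hQm : ∀ k, MeasurableSet (Q k) := fun k => (hPm _).diff (hPm _)
  have hQd : Pairwise (Function.onFun Disjoint Q) := by
    have key : ∀ k l, k < l → Disjoint (Q k) (Q l) := by
      intro k l hkl
      refine Set.disjoint_left.2 fun x hx hx' => hx'.2 (hPmono (by omega : k + 1 ≤ l) hx.1)
    intro k l hkl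
    rcases lt_or_gt_of_ne hkl with h' | h'
    · exact key _ _ h'
    · exact (key _ _ h').symm
  set n : ℤ → ℝ≥0∞ := fun k => ∫⁻ y in Q k, γ y ^ p ∂m with hn
  have hsum : ∑' k, n k ≤ N := by
    rw [← lintegral_iUnion hQm hQd]
    exact setLIntegral_le_lintegral _ _
  have hsum2 : ∑' k, (n k + n (k - 1)) ≤ 2 * N := by
    rw [ENNReal.tsum_add, two_mul]
    refine add_le_add hsum ?_
    have := (Equiv.subRight (1:ℤ)).tsum_eq n
    simp only [Equiv.subRight_apply] at this
    rw [this]; exact hsum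
  set L : ℤ → Set ℝ := fun k => F ⁻¹' (Ioc (2 ^ k) (2 ^ (k+1))) with hL
  have hLm : ∀ k, MeasurableSet (L k) := fun k => hFm measurableSet_Ioc
  have hkey : ∀ k, ((2:ℝ≥0∞) ^ (k+1)) ^ q * η (L k) ≤ (4 * M) ^ q * (n k + n (k-1)) ^ (q/p) := by
    intro k
    have z0 : (2:ℝ≥0∞) ^ (k-1) ≠ 0 := (ENNReal.zpow_pos (by norm_num) (by norm_num) _).ne'
    have zt : (2:ℝ≥0∞) ^ (k-1) ≠ ⊤ := ENNReal.zpow_ne_top (by norm_num) (by norm_num) _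
    have e1 : (2:ℝ≥0∞) ^ k = 2 * 2 ^ (k-1) := by
      rw [← zp_succ]; congr 1; ring
    have e2 : (2:ℝ≥0∞) ^ (k+1) = 4 * 2 ^ (k-1) := by
      rw [zp_succ, e1, ← mul_assoc]; norm_num
    have hb : η (L k) ≤ ((n k + n (k-1)) ^ (1/p) * M / 2 ^ (k-1)) ^ q := by
      refine meas_L_le η _ _ fun s hs => ?_
      have hs1 : 2 ^ k < F s := hs.1
      have hs2 : F s ≤ 2 ^ (k+1) := hs.2
      have a1 : (2:ℝ≥0∞) ^ (k-1) ≤ ∫⁻ y in S s \ P (k-1), γ y * ψ y ∂m := by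
        have b1 : F s ≤ mρ (S s \ P (k-1)) + mρ (P (k-1)) := by
          rw [← hFρ]
          refine (measure_mono ?_).trans (measure_union_le _ _)
          intro x hx
          by_cases hx' : x ∈ P (k-1)
          · exact Or.inr hx'
          · exact Or.inl ⟨hx, hx'⟩
        rw [← withDensity_apply _ ((hSm s).diff (hPm _))]
        have b2 : (2:ℝ≥0∞) ^ (k-1) + 2 ^ (k-1) ≤ mρ (S s \ P (k-1)) + 2 ^ (k-1) := by
          rw [← two_mul, ← e1]
          exact hs1.le.trans (b1.trans (add_le_add_right (hPle _) _))
        exact (ENNReal.add_le_add_iff_right zt).1 b2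
      have a2 : ∫⁻ y in S s \ P (k-1), γ y ^ p ∂m ≤ n k + n (k-1) := by
        refine le_trans (lintegral_mono_set ?_) (lintegral_union_le _ _ _)
        intro x hx
        by_cases hx' : x ∈ P k
        · right; exact ⟨by simpa using hx', hx.2⟩
        · left; exact ⟨mem_biUnion (show s ∈ {s | F s ≤ 2 ^ (k+1)} from hs2) hx.1, hx'⟩
      have a3 : ∫⁻ y in S s \ P (k-1), ψ y ^ p' ∂m ≤ ∫⁻ y in S s, ψ y ^ p' ∂m :=
        lintegral_mono_set sdiff_subset
      have a4 : (2:ℝ≥0∞) ^ (k-1) ≤ (n k + n (k-1)) ^ (1/p) * (∫⁻ y in S s, ψ y ^ p' ∂m) ^ (1/p') := by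
        refine a1.trans ((hold _).trans ?_)
        gcongr
      have a5 : η (Ici s) ^ (1/q) * 2 ^ (k-1) ≤ (n k + n (k-1)) ^ (1/p) * M := by
        calc η (Ici s) ^ (1/q) * 2 ^ (k-1)
            ≤ η (Ici s) ^ (1/q) * ((n k + n (k-1)) ^ (1/p) * (∫⁻ y in S s, ψ y ^ p' ∂m) ^ (1/p')) := by
              gcongr
          _ = (n k + n (k-1)) ^ (1/p) * (η (Ici s) ^ (1/q) * (∫⁻ y in S s, ψ y ^ p' ∂m) ^ (1/p')) := by
              ring
          _ ≤ _ := by gcongr; exact h s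
      have a6 : η (Ici s) ^ (1/q) ≤ (n k + n (k-1)) ^ (1/p) * M / 2 ^ (k-1) :=
        (ENNReal.le_div_iff_mul_le (Or.inl z0) (Or.inl zt)).2 a5
      rw [one_div, ENNReal.rpow_inv_le_iff hq0] at a6
      exact a6
    calc ((2:ℝ≥0∞) ^ (k+1)) ^ q * η (L k)
        ≤ ((2:ℝ≥0∞) ^ (k+1)) ^ q * ((n k + n (k-1)) ^ (1/p) * M / 2 ^ (k-1)) ^ q := by gcongr
      _ = (4 * M * (n k + n (k-1)) ^ (1/p)) ^ q := by
          rw [← ENNReal.mul_rpow_of_nonneg _ _ hq0.le, e2]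
          congr 1
          rw [mul_assoc, ENNReal.mul_div_cancel z0 zt]
          ring
      _ = (4 * M) ^ q * (n k + n (k-1)) ^ (q/p) := by
          rw [ENNReal.mul_rpow_of_nonneg _ _ hq0.le, ← ENNReal.rpow_mul]
          congr 2
          ring
  have hpt : ∀ᵐ s ∂η, F s ^ q ≤ ∑' k, (L k).indicator (fun _ => ((2:ℝ≥0∞) ^ (k+1)) ^ q) s := by
    have : ∀ᵐ s ∂η, F s ≠ ⊤ := by
      rw [ae_iff]; simpa using hinf
    filter_upwards [this] with s hs
    rcases eq_or_ne (F s) 0 with h0 | h0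
    · rw [h0, ENNReal.zero_rpow_of_pos hq0]; exact zero_le
    · obtain ⟨k, hk⟩ := ENNReal.exists_mem_Ioc_zpow h0 hs (y := 2) (by norm_num) (by norm_num)
      refine le_trans ?_ (ENNReal.le_tsum k)
      rw [indicator_of_mem (show s ∈ L k from hk)]
      exact ENNReal.rpow_le_rpow hk.2 hq0.le
  have hfin : ∫⁻ s, F s ^ q ∂η ≤ (4 * M) ^ q * (2 * N) ^ (q/p) := by
    calc ∫⁻ s, F s ^ q ∂η ≤ ∫⁻ s, ∑' k, (L k).indicator (fun _ => ((2:ℝ≥0∞) ^ (k+1)) ^ q) s ∂η :=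
          lintegral_mono_ae hpt
      _ = ∑' k, ((2:ℝ≥0∞) ^ (k+1)) ^ q * η (L k) := by
          rw [lintegral_tsum fun k => (measurable_const.indicator (hLm k)).aemeasurable]
          congr 1; ext k
          rw [lintegral_indicator_const (hLm k)]
      _ ≤ ∑' k, (4 * M) ^ q * (n k + n (k-1)) ^ (q/p) := ENNReal.tsum_le_tsum hkey
      _ = (4 * M) ^ q * ∑' k, (n k + n (k-1)) ^ (q/p) := ENNReal.tsum_mul_left
      _ ≤ (4 * M) ^ q * (∑' k, (n k + n (k-1))) ^ (q/p) := by
          gcongr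
          exact tsum_rpow_le_aux _ ((one_le_div hp0).2 hpq)
      _ ≤ _ := by gcongr
  calc (∫⁻ s, F s ^ q ∂η) ^ (1/q) ≤ ((4 * M) ^ q * (2 * N) ^ (q/p)) ^ (1/q) := by gcongr
    _ = 4 * M * (2 * N) ^ (1/p) := by
        rw [ENNReal.mul_rpow_of_nonneg _ _ (by positivity), ← ENNReal.rpow_mul, ← ENNReal.rpow_mul,
          mul_one_div_cancel hq0.ne', ENNReal.rpow_one]
        congr 2
        field_simp
    _ ≤ 4 * M * (2 * N ^ (1/p)) := by
        gcongr
        rw [ENNReal.mul_rpow_of_nonneg _ _ (by positivity)]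
        gcongr
        calc (2:ℝ≥0∞) ^ (1/p) ≤ 2 ^ (1:ℝ) :=
              ENNReal.rpow_le_rpow_of_exponent_le (by norm_num) ((div_le_one hp0).2 hp1.le)
          _ = 2 := ENNReal.rpow_one _
    _ = 8 * M * N ^ (1/p) := by ring

theorem lorentz {G : ℝ → ℝ≥0∞} (hG : Antitone G) {s a b : ℝ} (hs : 0 < s) (ha : 1 < a)
    (hb : b = 1 - 1 / a) :
    ∫⁻ r in Ioi (0:ℝ), G (max r s) ^ a ≤
      (ENNReal.ofReal (s ^ (1/a)) * G s + ∫⁻ r in Ioi s, ENNReal.ofReal (r ^ (-b)) * G r) ^ a := by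
  have ha0 : 0 < a := by linarith
  have hb0 : 0 < b := by
    rw [hb, sub_pos, div_lt_one ha0]; exact ha
  set K := ENNReal.ofReal (s ^ (1/a)) * G s + ∫⁻ r in Ioi s, ENNReal.ofReal (r ^ (-b)) * G r with hK
  have e : ∀ x : ℝ≥0∞, x ^ a = x * x ^ (a - 1) := by
    intro x
    conv_lhs => rw [show a = 1 + (a - 1) by ring]
    rw [ENNReal.rpow_add_of_nonneg _ _ (by norm_num) (by linarith), ENNReal.rpow_one]
  have hpow : ∀ r : ℝ, 0 < r → r ^ (1/a) = r * r ^ (-b) := by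
    intro r hr
    rw [hb]
    conv_rhs => rw [← Real.rpow_one r, ← Real.rpow_mul hr.le, ← Real.rpow_add hr]
    congr 1; ring
  have hpt : ∀ r, s < r → ENNReal.ofReal (r ^ (1/a)) * G r ≤ K := by
    intro r hr
    have hr0 : 0 < r := hs.trans hr
    have hrb : 0 ≤ r ^ (-b) := by positivity
    have h1 : ENNReal.ofReal (r ^ (1/a)) = ENNReal.ofReal (s * r ^ (-b)) +
        ENNReal.ofReal (r ^ (-b)) * ENNReal.ofReal (r - s) := by
      rw [← ENNReal.ofReal_mul hrb, ← ENNReal.ofReal_add (by positivity)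
        (mul_nonneg hrb (by linarith)), hpow r hr0]
      congr 1; ring
    rw [h1, add_mul, hK]
    refine add_le_add ?_ ?_
    · refine mul_le_mul' (ENNReal.ofReal_le_ofReal ?_) (hG hr.le)
      rw [hpow s hs]
      have := Real.rpow_le_rpow_of_nonpos hs hr.le (by linarith : -b ≤ 0)
      gcongr
    · calc ENNReal.ofReal (r ^ (-b)) * ENNReal.ofReal (r - s) * G r
          = ∫⁻ ρ in Ioc s r, ENNReal.ofReal (r ^ (-b)) * G r := by
            rw [setLIntegral_const, Real.volume_Ioc]; ring
        _ ≤ ∫⁻ ρ in Ioc s r, ENNReal.ofReal (ρ ^ (-b)) * G ρ := by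
            refine setLIntegral_mono' measurableSet_Ioc fun ρ hρ => ?_
            refine mul_le_mul' (ENNReal.ofReal_le_ofReal ?_) (hG hρ.2)
            exact Real.rpow_le_rpow_of_nonpos (hs.trans hρ.1) hρ.2 (by linarith)
        _ ≤ _ := lintegral_mono_set Ioc_subset_Ioi_self
  have hsplit : Ioi (0:ℝ) = Ioc 0 s ∪ Ioi s := (Ioc_union_Ioi_eq_Ioi hs.le).symm
  rw [hsplit, lintegral_union measurableSet_Ioi (by
    rw [Set.disjoint_left]; intro x hx hx'; exact absurd hx.2 (not_le.2 hx'))]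
  rw [e K, mul_comm K]
  nth_rewrite 2 [hK]
  rw [mul_add]
  refine add_le_add ?_ ?_
  · have : ∫⁻ r in Ioc 0 s, G (max r s) ^ a = ∫⁻ r in Ioc 0 s, G s ^ a := by
      refine setLIntegral_congr_fun measurableSet_Ioc fun r hr => ?_
      simp only [max_eq_right hr.2]
    rw [this, setLIntegral_const, Real.volume_Ioc, sub_zero]
    have h2 : ENNReal.ofReal s = ENNReal.ofReal (s ^ (1/a)) ^ a := by
      rw [ENNReal.ofReal_rpow_of_nonneg (by positivity) ha0.le, ← Real.rpow_mul hs.le,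
        one_div_mul_cancel ha0.ne', Real.rpow_one]
    rw [h2, ← ENNReal.mul_rpow_of_nonneg _ _ ha0.le, mul_comm (G s), e, mul_comm]
    gcongr
    exact le_self_add
  · rw [← lintegral_const_mul]
    · refine setLIntegral_mono' measurableSet_Ioi fun r hr => ?_
      have hr0 : 0 < r := hs.trans hr
      rw [max_eq_left (le_of_lt hr), e]
      have h3 : G r ^ (a-1) = (ENNReal.ofReal (r ^ (1/a)) * G r) ^ (a-1) * ENNReal.ofReal (r ^ (-b)) := by
        rw [ENNReal.mul_rpow_of_nonneg _ _ (by linarith),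
          ENNReal.ofReal_rpow_of_nonneg (by positivity) (by linarith), mul_right_comm,
          ← ENNReal.ofReal_mul (by positivity), ← Real.rpow_mul hr0.le, ← Real.rpow_add hr0]
        have : 1 / a * (a - 1) + -b = 0 := by rw [hb]; field_simp; ring
        rw [this]; simp
      rw [h3]
      calc G r * ((ENNReal.ofReal (r ^ (1/a)) * G r) ^ (a-1) * ENNReal.ofReal (r ^ (-b)))
          ≤ G r * (K ^ (a-1) * ENNReal.ofReal (r ^ (-b))) := by
            gcongr
            exact hpt r hr
        _ = _ := by ring
    · exact Measurable.mul (by fun_prop) hG.measurable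

theorem mul_le_int {G : ℝ → ℝ≥0∞} (hG : Antitone G) {s : ℝ} :
    ENNReal.ofReal s * G s ≤ ∫⁻ r in Ioo (0:ℝ) s, G r := by
  calc ENNReal.ofReal s * G s = ∫⁻ r in Ioo (0:ℝ) s, G s := by
        rw [setLIntegral_const, Real.volume_Ioo, sub_zero, mul_comm]
    _ ≤ _ := setLIntegral_mono' measurableSet_Ioo fun r hr => hG hr.2.le

theorem split1 {X : Type*} [MeasurableSpace X] (μ : Measure X) [SFinite μ] {g w : X → ℝ≥0∞}
    (hg : Measurable g) (hw : Measurable w) {s : ℝ} (hs : 0 < s) :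
    ∫⁻ x in {x | rE μ g s < g x} ∪ {x | rE μ w s < w x}, g x * w x ∂μ ≤
      2 * ∫⁻ r in Ioo (0:ℝ) s, rE μ g r * rE μ w r := by
  set E := {x | rE μ g s < g x} ∪ {x | rE μ w s < w x} with hE
  have hEm : MeasurableSet E := (measurableSet_lt measurable_const hg).union
    (measurableSet_lt measurable_const hw)
  have hEμ : μ E ≤ ENNReal.ofReal (2 * s) := by
    rw [two_mul, ENNReal.ofReal_add hs.le hs.le]
    exact (measure_union_le _ _).trans (add_le_add (rE_dom μ g s) (rE_dom μ w s))
  have hGa : Antitone (fun r => rE μ g r * rE μ w r) := fun r r' h =>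
    mul_le_mul' (rE_antitone μ g h) (rE_antitone μ w h)
  have h1 : ∫⁻ x in E, g x * w x ∂μ = ∫⁻ x, E.indicator g x * w x ∂μ := by
    rw [← lintegral_indicator hEm]
    refine lintegral_congr fun x => ?_
    by_cases hx : x ∈ E <;> simp [hx]
  have h2 : ∫⁻ x, E.indicator g x * w x ∂μ ≤
      ∫⁻ t in Ioi (0:ℝ), (Iio (2*s)).indicator (rE μ g) t * rE μ w t := by
    refine HL μ (hg.indicator hEm) hw ?_ (rE_antitone μ w) ?_ (fun t _ => rE_dom μ w t)
    · intro r r' h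
      by_cases hr' : r' ∈ Iio (2*s)
      · have hr : r ∈ Iio (2*s) := lt_of_le_of_lt h hr'
        rw [indicator_of_mem hr, indicator_of_mem hr']
        exact rE_antitone μ g h
      · rw [indicator_of_notMem hr']; exact zero_le
    · intro t ht
      by_cases hr' : t ∈ Iio (2*s)
      · rw [indicator_of_mem hr']
        refine (measure_mono ?_).trans (rE_dom μ g t)
        intro x hx
        exact lt_of_lt_of_le (mem_ofPred.1 hx) (indicator_le_self _ _ _)
      · rw [indicator_of_notMem hr']
        refine (measure_mono ?_).trans (hEμ.trans (ENNReal.ofReal_le_ofReal (not_lt.1 hr')))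
        intro x hx
        by_contra hcon
        simp [indicator_of_notMem hcon] at hx
  have h3 : ∫⁻ t in Ioi (0:ℝ), (Iio (2*s)).indicator (rE μ g) t * rE μ w t =
      ∫⁻ t in Iio (2*s) ∩ Ioi 0, rE μ g t * rE μ w t := by
    rw [← Measure.restrict_restrict measurableSet_Iio, ← lintegral_indicator measurableSet_Iio]
    refine lintegral_congr fun x => ?_
    by_cases hx : x ∈ Iio (2*s) <;> simp [indicator, hx]
  rw [h1]
  refine h2.trans ?_
  rw [h3]
  have h4 : Iio (2*s) ∩ Ioi 0 ⊆ Ioo 0 s ∪ Ico s (2*s) := by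
    rintro x ⟨hx, hx0⟩
    rcases lt_or_ge x s with h | h
    · left; exact ⟨hx0, h⟩
    · right; exact ⟨h, hx⟩
  refine (lintegral_mono_set h4).trans ((lintegral_union_le _ _ _).trans ?_)
  rw [two_mul (∫⁻ r in Ioo (0:ℝ) s, rE μ g r * rE μ w r)]
  refine add_le_add le_rfl (le_trans ?_ (mul_le_int hGa))
  calc ∫⁻ t in Ico s (2*s), rE μ g t * rE μ w t ≤ ∫⁻ t in Ico s (2*s), rE μ g s * rE μ w s :=
        setLIntegral_mono' measurableSet_Ico fun r hr => hGa hr.1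
    _ = _ := by rw [setLIntegral_const, Real.volume_Ico, mul_comm]; congr 2; ring

theorem split2 {X : Type*} [MeasurableSpace X] (μ : Measure X) [SFinite μ] {g w : X → ℝ≥0∞}
    (hg : Measurable g) (hw : Measurable w) {s a b : ℝ} (hs : 0 < s) (ha : 1 < a)
    (hb : b = 1 - 1 / a) :
    ∫⁻ x in ({x | rE μ g s < g x} ∪ {x | rE μ w s < w x})ᶜ, (g x * w x) ^ a ∂μ ≤
      (ENNReal.ofReal (s ^ (1/a)) * (rE μ g s * rE μ w s) +
        ∫⁻ r in Ioi s, ENNReal.ofReal (r ^ (-b)) * (rE μ g r * rE μ w r)) ^ a := by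
  have hGa : Antitone (fun r => rE μ g r * rE μ w r) := fun r r' h =>
    mul_le_mul' (rE_antitone μ g h) (rE_antitone μ w h)
  refine le_trans ?_ (lorentz hGa hs ha hb)
  have key : ∀ k : X → ℝ≥0∞, ∀ t : ℝ, 0 < t →
      μ {x | rE μ k (max t s) < {x | k x ≤ rE μ k s}.indicator k x} ≤ ENNReal.ofReal t := by
    intro k t ht
    rcases le_total s t with h | h
    · rw [max_eq_left h]
      refine (measure_mono ?_).trans (rE_dom μ k t)
      intro x hx
      exact lt_of_lt_of_le (mem_ofPred.1 hx) (indicator_le_self _ _ _)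
    · rw [max_eq_right h]
      have : {x | rE μ k s < {x | k x ≤ rE μ k s}.indicator k x} = ∅ := by
        ext x
        simp only [mem_ofPred_eq, mem_empty_iff_false, iff_false, not_lt]
        by_cases hx : x ∈ {x | k x ≤ rE μ k s}
        · rw [indicator_of_mem hx]; exact hx
        · rw [indicator_of_notMem hx]; exact zero_le
      rw [this]; simp
  have mk : ∀ k : X → ℝ≥0∞, Measurable k → Measurable ({x | k x ≤ rE μ k s}.indicator k) :=
    fun k hk => hk.indicator (measurableSet_le hk measurable_const)
  refine le_trans ?_ (HLpow μ (mk g hg) (mk w hw) (H := fun t => rE μ g (max t s))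
    (K := fun t => rE μ w (max t s)) (fun r r' h => rE_antitone μ g (max_le_max_right s h))
    (fun r r' h => rE_antitone μ w (max_le_max_right s h)) (key g) (key w) (by linarith : 0 < a))
  refine le_trans (le_of_eq ?_) (setLIntegral_le_lintegral
    ({x | rE μ g s < g x} ∪ {x | rE μ w s < w x})ᶜ _)
  refine setLIntegral_congr_fun ?_ ?_
  · exact ((measurableSet_lt measurable_const hg).union (measurableSet_lt measurable_const hw)).compl
  · intro x hx
    simp only [mem_compl_iff, mem_union, not_or, mem_ofPred_eq, not_lt] at hx
    simp [indicator, hx.1, hx.2]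

theorem cheb {X : Type*} [MeasurableSpace X] (ν : Measure X) {φ : X → ℝ≥0∞} (hφ : Measurable φ)
    {D : ℝ≥0∞} (hD : D ≠ ⊤) {a' t : ℝ} (ha' : 0 < a') (ht : 0 < t)
    (h : ∫⁻ y, φ y ^ a' ∂ν ≤ D ^ a') :
    ν {y | D * ENNReal.ofReal (t ^ (-(1/a'))) < φ y} ≤ ENNReal.ofReal t := by
  rcases eq_or_ne D 0 with rfl | hD0
  · rw [ENNReal.zero_rpow_of_pos ha', nonpos_iff_eq_zero, lintegral_eq_zero_iff (hφ.pow_const _)] at h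
    have : ν {y | 0 * ENNReal.ofReal (t ^ (-(1/a'))) < φ y} = 0 := by
      have h2 : ∀ᵐ y ∂ν, ¬ (0 * ENNReal.ofReal (t ^ (-(1/a'))) < φ y) := by
        filter_upwards [h] with y hy
        simp only [Pi.zero_apply, ENNReal.rpow_eq_zero_iff_of_pos ha'] at hy
        simp [hy]
      rw [ae_iff] at h2
      simpa only [not_not] using h2
    rw [this]; exact zero_le
  · set c := D * ENNReal.ofReal (t ^ (-(1/a'))) with hc
    have h1 := mul_meas_ge_le_lintegral (μ := ν) (hφ.pow_const a') (c ^ a')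
    have h2 : ν {y | c < φ y} ≤ ν {y | c ^ a' ≤ φ y ^ a'} :=
      measure_mono fun y hy => ENNReal.rpow_le_rpow (le_of_lt hy) ha'.le
    have h3 : c ^ a' = D ^ a' * (ENNReal.ofReal t)⁻¹ := by
      rw [hc, ENNReal.mul_rpow_of_nonneg _ _ ha'.le, ENNReal.ofReal_rpow_of_nonneg (by positivity) ha'.le,
        ← Real.rpow_mul ht.le, ← ENNReal.ofReal_inv_of_pos ht]
      congr 2
      rw [neg_mul, one_div_mul_cancel ha'.ne', Real.rpow_neg_one]
    have h4 : D ^ a' * ((ENNReal.ofReal t)⁻¹ * ν {y | c < φ y}) ≤ D ^ a' * 1 := by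
      rw [← mul_assoc, ← h3, mul_one]
      exact (mul_le_mul' le_rfl h2).trans (h1.trans h)
    have d0 : D ^ a' ≠ 0 := by
      rw [Ne, ENNReal.rpow_eq_zero_iff_of_pos ha']; exact hD0
    have dt : D ^ a' ≠ ⊤ := ENNReal.rpow_ne_top_of_nonneg ha'.le hD
    have h5 := (ENNReal.mul_le_mul_iff_right d0 dt).1 h4
    have t0 : ENNReal.ofReal t ≠ 0 := by simpa using ht
    calc ν {y | c < φ y} = ENNReal.ofReal t * ((ENNReal.ofReal t)⁻¹ * ν {y | c < φ y}) := by
          rw [← mul_assoc, ENNReal.mul_inv_cancel t0 ENNReal.ofReal_ne_top, one_mul]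
      _ ≤ ENNReal.ofReal t * 1 := by gcongr
      _ = _ := mul_one _

theorem pointwise {M₁ M₂ : Type*} [MeasurableSpace M₁] [MeasurableSpace M₂]
    (μ : Measure M₁) (ν : Measure M₂) [SigmaFinite μ] [SigmaFinite ν]
    (a a' b : ℝ) (ha1 : 1 < a) (ha' : 0 < a') (hb : b = 1 - 1 / a) (hb' : b = 1 / a')
    (T : (M₁ → ℂ) → M₂ → ℂ)
    (A B : ℝ)
    (hsub : ∀ f g : M₁ → ℂ, MemLp f 1 μ → MemLp f (ENNReal.ofReal a) μ →
      MemLp g 1 μ → MemLp g (ENNReal.ofReal a) μ →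
      ∀ᵐ y ∂ν, ‖T (f + g) y‖ ≤ ‖T f y‖ + ‖T g y‖)
    (hweak : ∀ f : M₁ → ℂ, MemLp f 1 μ → MemLp f (ENNReal.ofReal a) μ →
      eLpNorm (T f) ⊤ ν ≤ ENNReal.ofReal A * eLpNorm f 1 μ)
    (hstrong : ∀ f : M₁ → ℂ, MemLp f 1 μ → MemLp f (ENNReal.ofReal a) μ →
      eLpNorm (T f) (ENNReal.ofReal a') ν ≤ ENNReal.ofReal B * eLpNorm f (ENNReal.ofReal a) μ)
    (f : M₁ → ℂ) (hf1 : MemLp f 1 μ) (hfa : MemLp f (ENNReal.ofReal a) μ)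
    {g w : M₁ → ℝ≥0∞} (hg : Measurable g) (hw : Measurable w)
    (hgw : ∀ᵐ x ∂μ, ‖f x‖ₑ = g x * w x)
    {φ : M₂ → ℝ≥0∞} (hφ : Measurable φ) (hle : ∀ y, φ y ≤ ‖T f y‖ₑ) {t : ℝ} (ht : 0 < t) :
    rE ν φ t ≤ (2 * ENNReal.ofReal A + ENNReal.ofReal B) *
        (∫⁻ r in Ioo (0:ℝ) (1/t), rE μ g r * rE μ w r) +
      ENNReal.ofReal B * (ENNReal.ofReal (t ^ (-b)) *
        ∫⁻ r in Ioi (1/t), ENNReal.ofReal (r ^ (-b)) * (rE μ g r * rE μ w r)) := by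
  have ha0 : 0 < a := by linarith
  set s := 1 / t with hs
  have hs0 : 0 < s := by positivity
  set E := {x | rE μ g s < g x} ∪ {x | rE μ w s < w x} with hE
  have hEm : MeasurableSet E := (measurableSet_lt measurable_const hg).union
    (measurableSet_lt measurable_const hw)
  have hGa : Antitone (fun r => rE μ g r * rE μ w r) := fun r r' h =>
    mul_le_mul' (rE_antitone μ g h) (rE_antitone μ w h)
  set f0 := E.indicator f with hf0
  set f1 := Eᶜ.indicator f with hf1'
  have hadd : f0 + f1 = f := indicator_self_add_compl E f
  have m01 : MemLp f0 1 μ := hf1.indicator hEm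
  have m0a : MemLp f0 (ENNReal.ofReal a) μ := hfa.indicator hEm
  have m11 : MemLp f1 1 μ := hf1.indicator hEm.compl
  have m1a : MemLp f1 (ENNReal.ofReal a) μ := hfa.indicator hEm.compl
  set I := ∫⁻ r in Ioo (0:ℝ) s, rE μ g r * rE μ w r with hI
  set J := ∫⁻ r in Ioi s, ENNReal.ofReal (r ^ (-b)) * (rE μ g r * rE μ w r) with hJ
  have n0 : eLpNorm f0 1 μ ≤ 2 * I := by
    refine le_trans (le_of_eq ?_) (split1 μ hg hw hs0)
    rw [eLpNorm_one_eq_lintegral_enorm, ← lintegral_indicator hEm]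
    refine lintegral_congr_ae ?_
    filter_upwards [hgw] with x hx
    by_cases hxE : x ∈ E
    · rw [hf0, indicator_of_mem hxE, indicator_of_mem hxE, hx]
    · rw [hf0, indicator_of_notMem hxE, indicator_of_notMem hxE]; simp
  have atr : (ENNReal.ofReal a).toReal = a := ENNReal.toReal_ofReal ha0.le
  have a'tr : (ENNReal.ofReal a').toReal = a' := ENNReal.toReal_ofReal ha'.le
  have n1 : eLpNorm f1 (ENNReal.ofReal a) μ ≤
      ENNReal.ofReal (s ^ (1/a)) * (rE μ g s * rE μ w s) + J := by
    rw [eLpNorm_eq_lintegral_rpow_enorm_toReal (by simpa using ha0) ENNReal.ofReal_ne_top, atr,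
      one_div, ENNReal.rpow_inv_le_iff ha0, ← one_div]
    refine le_trans (le_of_eq ?_) (split2 μ hg hw hs0 ha1 hb)
    rw [← lintegral_indicator hEm.compl]
    refine lintegral_congr_ae ?_
    filter_upwards [hgw] with x hx
    by_cases hxE : x ∈ Eᶜ
    · rw [hf1', indicator_of_mem hxE, indicator_of_mem hxE, hx]
    · rw [hf1', indicator_of_notMem hxE, indicator_of_notMem hxE]; simp [ha0]
  set c := ENNReal.ofReal A * eLpNorm f0 1 μ with hc
  set D := ENNReal.ofReal B * eLpNorm f1 (ENNReal.ofReal a) μ with hD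
  have hDt : D ≠ ⊤ := ENNReal.mul_ne_top ENNReal.ofReal_ne_top m1a.2.ne
  have hT0 : ∀ᵐ y ∂ν, ‖T f0 y‖ₑ ≤ c := by
    have h1 := hweak f0 m01 m0a
    rw [eLpNorm_exponent_top] at h1
    filter_upwards [enorm_ae_le_eLpNormEssSup (T f0) ν] with y hy
    exact hy.trans h1
  have hT1 : ∫⁻ y, ‖T f1 y‖ₑ ^ a' ∂ν ≤ D ^ a' := by
    have h1 := hstrong f1 m11 m1a
    rwa [eLpNorm_eq_lintegral_rpow_enorm_toReal (by simpa using ha') ENNReal.ofReal_ne_top, a'tr,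
      one_div, ENNReal.rpow_inv_le_iff ha'] at h1
  have hφ1 : ∫⁻ y, (φ y - c) ^ a' ∂ν ≤ D ^ a' := by
    refine le_trans (lintegral_mono_ae ?_) hT1
    filter_upwards [hT0, hsub f0 f1 m01 m0a m11 m1a] with y h0 h1
    refine ENNReal.rpow_le_rpow ?_ ha'.le
    rw [tsub_le_iff_right]
    rw [hadd] at h1
    have h2 : ‖T f y‖ₑ ≤ ‖T f0 y‖ₑ + ‖T f1 y‖ₑ := by
      rw [← ofReal_norm, ← ofReal_norm, ← ofReal_norm,
        ← ENNReal.ofReal_add (norm_nonneg _) (norm_nonneg _)]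
      exact ENNReal.ofReal_le_ofReal h1
    rw [add_comm]
    exact (hle y).trans (h2.trans (add_le_add h0 le_rfl))
  have hch := cheb ν (hφ.sub_const c) hDt ha' ht hφ1
  have h6 : rE ν φ t ≤ c + D * ENNReal.ofReal (t ^ (-b)) := by
    refine rE_le ν φ ?_
    rw [hb']
    refine le_trans (measure_mono ?_) hch
    intro y hy
    exact lt_tsub_iff_left.2 (mem_ofPred.1 hy)
  refine h6.trans ?_
  have h7 : ENNReal.ofReal (s ^ (1/a)) * ENNReal.ofReal (t ^ (-b)) = ENNReal.ofReal s := by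
    rw [← ENNReal.ofReal_mul (by positivity)]
    congr 1
    have : t ^ (-b) = s ^ b := by
      rw [hs, one_div, Real.inv_rpow ht.le, Real.rpow_neg ht.le]
    rw [this, ← Real.rpow_add hs0, hb]
    simp
  have h8 : ENNReal.ofReal s * (rE μ g s * rE μ w s) ≤ I := mul_le_int hGa
  calc c + D * ENNReal.ofReal (t ^ (-b))
      ≤ ENNReal.ofReal A * (2 * I) + ENNReal.ofReal B *
        (ENNReal.ofReal (s ^ (1/a)) * (rE μ g s * rE μ w s) + J) * ENNReal.ofReal (t ^ (-b)) := by
        rw [hc, hD]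
        gcongr
    _ = 2 * ENNReal.ofReal A * I + ENNReal.ofReal B *
        ((ENNReal.ofReal (s ^ (1/a)) * ENNReal.ofReal (t ^ (-b))) * (rE μ g s * rE μ w s)) +
        ENNReal.ofReal B * (ENNReal.ofReal (t ^ (-b)) * J) := by ring
    _ ≤ 2 * ENNReal.ofReal A * I + ENNReal.ofReal B * I +
        ENNReal.ofReal B * (ENNReal.ofReal (t ^ (-b)) * J) := by
        rw [h7]; gcongr
    _ = _ := by ring

theorem hardy1 {U H W : ℝ → ℝ≥0∞} (hU : Measurable U) (hH : Measurable H) (hW : Measurable W)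
    {p q p' : ℝ} (hpp : p.HolderConjugate p') (hpq : p ≤ q) {M : ℝ≥0∞}
    (hM0 : M ≠ 0) (hMt : M ≠ ⊤)
    (h : ∀ s : ℝ, 0 < s → (∫⁻ t in Ioo (0:ℝ) (1/s), U t ^ q) ^ (1/q) *
      (∫⁻ t in Ioo (0:ℝ) s, W t ^ p') ^ (1/p') ≤ M) :
    (∫⁻ t in Ioi (0:ℝ), (U t * ∫⁻ r in Ioo (0:ℝ) (1/t), H r * W r) ^ q) ^ (1/q) ≤
      8 * M * (∫⁻ r in Ioi (0:ℝ), H r ^ p) ^ (1/p) := by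
  have hq0 : 0 < q := hpp.pos.trans_le hpq
  have hp'0 : 0 < p' := hpp.symm.pos
  set η0 := (volume.restrict (Ioi (0:ℝ))).withDensity (fun t => U t ^ q) with hη0
  have hS : Monotone (fun s : ℝ => Ioo (0:ℝ) s) := fun s t hst => Ioo_subset_Ioo_right hst
  have hres : ∀ s : ℝ, (volume.restrict (Ioi (0:ℝ))).restrict (Ioo 0 s) = volume.restrict (Ioo 0 s) :=
    fun s => Measure.restrict_restrict_of_subset Ioo_subset_Ioi_self
  have hinv : Measurable (fun t : ℝ => 1 / t) := by fun_prop
  have key := hardy (η0.map (fun t : ℝ => 1 / t)) (volume.restrict (Ioi (0:ℝ))) (fun s => Ioo (0:ℝ) s)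
    hS (fun s => measurableSet_Ioo) hW hH hpp hpq hM0 hMt ?_
  · simp only [hres] at key
    have hFm : Measurable fun s : ℝ => (∫⁻ r in Ioo (0:ℝ) s, H r * W r) ^ q :=
      (Monotone.measurable fun s t hst => lintegral_mono_set (hS hst)).pow_const q
    have hFm2 : Measurable fun t : ℝ => (∫⁻ r in Ioo (0:ℝ) (1/t), H r * W r) ^ q := hFm.comp hinv
    rw [lintegral_map hFm hinv, hη0, lintegral_withDensity_eq_lintegral_mul _ (hU.pow_const q)
      hFm2] at key
    refine le_trans (le_of_eq ?_) key
    congr 1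
    refine lintegral_congr fun t => ?_
    simp only [Pi.mul_apply, ENNReal.mul_rpow_of_nonneg _ _ hq0.le]
  · intro s
    simp only [hres]
    rcases le_or_gt s 0 with hs | hs
    · rw [Ioo_eq_empty (not_lt.2 hs)]
      simp [hp'0]
    · refine le_trans (le_of_eq ?_) (h s hs)
      congr 2
      rw [Measure.map_apply hinv measurableSet_Ici, hη0, withDensity_apply _ (hinv measurableSet_Ici),
        Measure.restrict_restrict (hinv measurableSet_Ici)]
      have : (fun t : ℝ => 1 / t) ⁻¹' Ici s ∩ Ioi 0 = Ioc 0 (1/s) := by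
        ext t
        simp only [mem_inter_iff, mem_preimage, mem_Ici, mem_Ioi, mem_Ioc]
        constructor
        · rintro ⟨h1, h2⟩
          exact ⟨h2, (le_one_div hs h2).1 h1⟩
        · rintro ⟨h1, h2⟩
          exact ⟨(le_one_div hs h1).2 h2, h1⟩
      rw [this]
      exact setLIntegral_congr Ioo_ae_eq_Ioc.symm

theorem hardy2 {U H W : ℝ → ℝ≥0∞} (hU : Measurable U) (hH : Measurable H) (hW : Measurable W)
    {p q p' a' b : ℝ} (hb' : b = 1 / a')
    (hpp : p.HolderConjugate p') (hpq : p ≤ q) {M : ℝ≥0∞}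
    (hM0 : M ≠ 0) (hMt : M ≠ ⊤)
    (h : ∀ s : ℝ, 0 < s → 
      (∫⁻ t in Ioi (1/s), U t ^ q * ENNReal.ofReal (t ^ (-(q/a')))) ^ (1/q) *
      (∫⁻ t in Ioi s, W t ^ p' * ENNReal.ofReal (t ^ (-(p'/a')))) ^ (1/p') ≤ M) :
    (∫⁻ t in Ioi (0:ℝ), (U t * (ENNReal.ofReal (t ^ (-b)) *
        ∫⁻ r in Ioi (1/t), ENNReal.ofReal (r ^ (-b)) * (H r * W r))) ^ q) ^ (1/q) ≤
      8 * M * (∫⁻ r in Ioi (0:ℝ), H r ^ p) ^ (1/p) := by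
  have hq0 : 0 < q := hpp.pos.trans_le hpq
  have hp'0 : 0 < p' := hpp.symm.pos
  have hpw : ∀ c t : ℝ, 0 < c → 0 < t → 
      ENNReal.ofReal (t ^ (-(c/a'))) = ENNReal.ofReal (t ^ (-b)) ^ c := by
    intro c t hc ht
    rw [ENNReal.ofReal_rpow_of_nonneg (by positivity) hc.le, ← Real.rpow_mul ht.le, hb']
    congr 2; ring
  set η0 := (volume.restrict (Ioi (0:ℝ))).withDensity
    (fun t => (U t * ENNReal.ofReal (t ^ (-b))) ^ q) with hη0
  set S : ℝ → Set ℝ := fun t => {y | 0 < y ∧ 1 < y * t} with hSdef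
  have hS : Monotone S := by
    rintro s t hst y ⟨h1, h2⟩
    exact ⟨h1, h2.trans_le (by gcongr)⟩
  have hSm : ∀ t, MeasurableSet (S t) := fun t =>
    (measurableSet_lt measurable_const measurable_id).inter
      (measurableSet_lt measurable_const (measurable_id.mul_const t))
  have hSpos : ∀ t, 0 < t → S t = Ioi (1/t) := by
    intro t ht
    ext y
    constructor
    · rintro ⟨h1, h2⟩
      exact (div_lt_iff₀ ht).2 h2
    · intro hy
      exact ⟨lt_trans (by positivity) (mem_Ioi.1 hy), (div_lt_iff₀ ht).1 hy⟩
  have hSneg : ∀ t, t ≤ 0 → S t = ∅ := by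
    intro t ht
    ext y
    simp only [mem_empty_iff_false, iff_false]
    rintro ⟨h1, h2⟩
    nlinarith
  have hres : ∀ s : ℝ, (volume.restrict (Ioi (0:ℝ))).restrict (S s) = volume.restrict (S s) :=
    fun s => Measure.restrict_restrict_of_subset fun y hy => hy.1
  have hwm : Measurable fun t : ℝ => ENNReal.ofReal (t ^ (-b)) := by fun_prop
  have key := hardy η0 (volume.restrict (Ioi (0:ℝ))) S hS hSm (hwm.mul hW) hH hpp hpq hM0 hMt ?_
  · simp only [hres] at key
    have hFm : Measurable fun s : ℝ => (∫⁻ y in S s, H y * 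
       ((fun t : ℝ => ENNReal.ofReal (t ^ (-b))) * W) y) ^ q :=
      (Monotone.measurable fun s t hst => lintegral_mono_set (hS hst)).pow_const q
    have hUw : Measurable fun t : ℝ => (U t * ENNReal.ofReal (t ^ (-b))) ^ q := (hU.mul hwm).pow_const q
    rw [hη0, lintegral_withDensity_eq_lintegral_mul _ hUw hFm] at key
    refine le_trans (le_of_eq ?_) key
    congr 1
    refine setLIntegral_congr_fun measurableSet_Ioi fun t ht => ?_
    simp only [Pi.mul_apply]
    rw [hSpos t ht, ← ENNReal.mul_rpow_of_nonneg _ _ hq0.le, mul_assoc]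
    congr 3
    refine lintegral_congr fun r => by ring
  · intro s
    simp only [hres]
    rcases le_or_gt s 0 with hs | hs
    · rw [hSneg s hs]
      simp [hp'0]
    · refine le_trans (le_of_eq ?_) (h (1/s) (by positivity))
      rw [hSpos s hs, one_div_one_div]
      congr 2
      · rw [hη0, withDensity_apply _ measurableSet_Ici, Measure.restrict_restrict measurableSet_Ici]
        have : Ici s ∩ Ioi 0 = Ici s := inter_eq_left.2 fun x hx => hs.trans_le hx
        rw [this, setLIntegral_congr Ioi_ae_eq_Ici.symm]
        refine setLIntegral_congr_fun measurableSet_Ioi fun t ht => ?_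
        rw [hpw q t hq0 (hs.trans ht), ENNReal.mul_rpow_of_nonneg _ _ hq0.le]
      · refine setLIntegral_congr_fun measurableSet_Ioi fun t ht => ?_
        simp only [Pi.mul_apply]
        rw [hpw p' t hp'0 (lt_trans (by positivity) ht), ENNReal.mul_rpow_of_nonneg _ _ hp'0.le, mul_comm]

/-- weighted `(L^p, L^q)` inequality for sublinear operators of strong
types `(1,∞)` and `(a,a')`, via the rearrangement conditions on the weights. -/
theorem stmt2 {M₁ M₂ : Type*} [MeasurableSpace M₁] [MeasurableSpace M₂]
    (μ : Measure M₁) (ν : Measure M₂) [SigmaFinite μ] [SigmaFinite ν]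
    (a a' : ℝ) (ha1 : 1 < a) (ha2 : a ≤ 2) (ha'def : a' = a / (a - 1))
    (T : (M₁ → ℂ) → M₂ → ℂ)
    (A B : ℝ) (hA : 0 < A) (hB : 0 < B)
    (hsub : ∀ f g : M₁ → ℂ, MemLp f 1 μ → MemLp f (ENNReal.ofReal a) μ →
      MemLp g 1 μ → MemLp g (ENNReal.ofReal a) μ →
      ∀ᵐ y ∂ν, ‖T (f + g) y‖ ≤ ‖T f y‖ + ‖T g y‖)
    (hscal : ∀ f : M₁ → ℂ, MemLp f 1 μ → MemLp f (ENNReal.ofReal a) μ →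
      ∀ c : ℂ, ∀ᵐ y ∂ν, ‖T (c • f) y‖ = ‖c‖ * ‖T f y‖)
    (hweak : ∀ f : M₁ → ℂ, MemLp f 1 μ → MemLp f (ENNReal.ofReal a) μ →
      eLpNorm (T f) ⊤ ν ≤ ENNReal.ofReal A * eLpNorm f 1 μ)
    (hstrong : ∀ f : M₁ → ℂ, MemLp f 1 μ → MemLp f (ENNReal.ofReal a) μ →
      eLpNorm (T f) (ENNReal.ofReal a') ν ≤ ENNReal.ofReal B * eLpNorm f (ENNReal.ofReal a) μ)
    (u : M₂ → ℝ) (v : M₁ → ℝ) (hu : Measurable u) (hv : Measurable v)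
    (hu0 : ∀ y, 0 ≤ u y) (hv0 : ∀ x, 0 < v x)
    (p q p' : ℝ) (hp : 1 < p) (hpq : p ≤ q) (hp'def : p' = p / (p - 1))
    (hloc : ∃ M : ℝ, ∀ s : ℝ, 0 < s →
      (∫⁻ t in Ioo (0:ℝ) (1/s), (rearr ν u t) ^ q) ^ (1/q) *
      (∫⁻ t in Ioo (0:ℝ) s, (rearr μ (fun x => 1 / v x) t) ^ p') ^ (1/p')
        ≤ ENNReal.ofReal M)
    (hglo : ∃ M : ℝ, ∀ s : ℝ, 0 < s →
      (∫⁻ t in Ioi (1/s), (rearr ν u t) ^ q * ENNReal.ofReal (t ^ (-(q/a')))) ^ (1/q) *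
      (∫⁻ t in Ioi s, (rearr μ (fun x => 1 / v x) t) ^ p' *
          ENNReal.ofReal (t ^ (-(p'/a')))) ^ (1/p')
        ≤ ENNReal.ofReal M) :
    ∃ C : ℝ, 0 < C ∧ ∀ f : M₁ → ℂ, MemLp f 1 μ → MemLp f (ENNReal.ofReal a) μ →
      (∫⁻ y, (ENNReal.ofReal (u y) * (‖T f y‖₊ : ℝ≥0∞)) ^ q ∂ν) ^ (1/q)
        ≤ ENNReal.ofReal C * (∫⁻ x, (ENNReal.ofReal (v x) * (‖f x‖₊ : ℝ≥0∞)) ^ p ∂μ) ^ (1/p) := by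
  obtain ⟨M1, hM1⟩ := hloc
  obtain ⟨M2, hM2⟩ := hglo
  have ha0 : 0 < a := by linarith
  have ha'0 : 0 < a' := by rw [ha'def]; exact div_pos ha0 (by linarith)
  have hp0 : 0 < p := by linarith
  have hq0 : 0 < q := by linarith
  have hpp : p.HolderConjugate p' := by
    rw [hp'def]; exact Real.HolderConjugate.conjExponent hp
  obtain ⟨b, hb⟩ : ∃ b : ℝ, b = 1 - 1 / a := ⟨_, rfl⟩
  have hb' : b = 1 / a' := by
    rw [hb, ha'def]; field_simp
  set U := rearr ν u with hU
  set w : M₁ → ℝ≥0∞ := fun x => ENNReal.ofReal |1 / v x| with hw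
  have hrw : rearr μ (fun x => 1 / v x) = rE μ w := rfl
  have hrU : U = rE ν (fun y => ENNReal.ofReal |u y|) := rfl
  rw [hrw] at hM1 hM2
  have hUa : Antitone U := rE_antitone _ _
  have hWa : Antitone (rE μ w) := rE_antitone _ _
  have hwm : Measurable w := by fun_prop
  set N1 := ENNReal.ofReal M1 + 1 with hN1
  set N2 := ENNReal.ofReal M2 + 1 with hN2
  have hN1t : N1 ≠ ⊤ := by simp [hN1]
  have hN2t : N2 ≠ ⊤ := by simp [hN2]
  have hN10 : N1 ≠ 0 := by simp [hN1]
  have hN20 : N2 ≠ 0 := by simp [hN2]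
  set c1 := 2 * ENNReal.ofReal A + ENNReal.ofReal B with hc1
  set c2 := ENNReal.ofReal B with hc2
  have hc1t : c1 ≠ ⊤ := by
    simp [hc1, hc2, ENNReal.mul_eq_top]
  have hc20 : c2 ≠ 0 := by simpa [hc2] using hB
  have hc2t : c2 ≠ ⊤ := ENNReal.ofReal_ne_top
  set C := c1 * (8 * N1) + c2 * (8 * N2) with hC
  have hCt : C ≠ ⊤ := ENNReal.add_ne_top.2
    ⟨ENNReal.mul_ne_top hc1t (ENNReal.mul_ne_top (by norm_num) hN1t),
      ENNReal.mul_ne_top hc2t (ENNReal.mul_ne_top (by norm_num) hN2t)⟩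
  have hC0 : C ≠ 0 := by
    simp [hC, hc20, hN20]
  refine ⟨C.toReal, ENNReal.toReal_pos hC0 hCt, ?_⟩
  intro f hf1 hfa
  rw [ENNReal.ofReal_toReal hCt]
  set f' := hf1.1.mk f with hf'
  have hf'm : Measurable f' := hf1.1.stronglyMeasurable_mk.measurable
  have hff' : f =ᵐ[μ] f' := hf1.1.ae_eq_mk
  set g : M₁ → ℝ≥0∞ := fun x => ENNReal.ofReal (v x) * ‖f' x‖ₑ with hg
  have hgm : Measurable g := by fun_prop
  have hgw : ∀ᵐ x ∂μ, ‖f x‖ₑ = g x * w x := by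
    filter_upwards [hff'] with x hx
    have hvx := hv0 x
    have : ENNReal.ofReal (v x) * ENNReal.ofReal |1 / v x| = 1 := by
      rw [← ENNReal.ofReal_mul hvx.le, abs_of_pos (by positivity), mul_one_div_cancel hvx.ne']
      simp
    rw [hx, hg, hw]
    simp only
    rw [mul_right_comm, this, one_mul]
  have hRHS : ∫⁻ x, (ENNReal.ofReal (v x) * (‖f x‖₊ : ℝ≥0∞)) ^ p ∂μ = ∫⁻ x, g x ^ p ∂μ := by
    refine lintegral_congr_ae ?_
    filter_upwards [hff'] with x hx
    rw [hx]; rfl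
  rw [hRHS]
  obtain ⟨h, hhm, hhle, hheq⟩ := exists_measurable_le_lintegral_eq ν
    (fun y => (ENNReal.ofReal (u y) * (‖T f y‖₊ : ℝ≥0∞)) ^ q)
  rw [hheq]
  set φ : M₂ → ℝ≥0∞ := fun y => h y ^ (1/q) / ENNReal.ofReal (u y) with hφ
  have hφm : Measurable φ := (hhm.pow_const _).div (by fun_prop)
  have hh1 : ∀ y, h y ^ (1/q) ≤ ENNReal.ofReal (u y) * ‖T f y‖ₑ := by
    intro y
    rw [one_div, ENNReal.rpow_inv_le_iff hq0]
    exact hhle y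
  have hφle : ∀ y, φ y ≤ ‖T f y‖ₑ := by
    intro y
    refine ENNReal.div_le_of_le_mul ?_
    rw [mul_comm]; exact hh1 y
  have hhφ : ∀ y, h y ≤ (ENNReal.ofReal |u y| * φ y) ^ q := by
    intro y
    rw [abs_of_nonneg (hu0 y)]
    rcases eq_or_ne (ENNReal.ofReal (u y)) 0 with h0 | h0
    · have := hh1 y
      rw [h0, zero_mul, nonpos_iff_eq_zero, ENNReal.rpow_eq_zero_iff_of_pos (by positivity)] at this
      rw [this]; exact zero_le
    · rw [hφ]
      simp only
      rw [ENNReal.mul_div_cancel h0 ENNReal.ofReal_ne_top, ← ENNReal.rpow_mul,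
        one_div_mul_cancel hq0.ne', ENNReal.rpow_one]
  set H := rE μ g with hH
  have hHa : Antitone H := rE_antitone _ _
  set I : ℝ → ℝ≥0∞ := fun t => ∫⁻ r in Ioo (0:ℝ) (1/t), H r * rE μ w r with hI
  set J : ℝ → ℝ≥0∞ := fun t => ENNReal.ofReal (t ^ (-b)) *
        ∫⁻ r in Ioi (1/t), ENNReal.ofReal (r ^ (-b)) * (H r * rE μ w r) with hJ
  have hIm : Measurable I := by
    have : Measurable fun s : ℝ => ∫⁻ r in Ioo (0:ℝ) s, H r * rE μ w r :=
      Monotone.measurable fun s t hst => lintegral_mono_set (Ioo_subset_Ioo_right hst)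
    exact this.comp (by fun_prop : Measurable fun t : ℝ => 1 / t)
  have hJm : Measurable J := by
    have : Measurable fun s : ℝ => ∫⁻ r in Ioi s, ENNReal.ofReal (r ^ (-b)) * (H r * rE μ w r) :=
      Antitone.measurable fun s t hst => lintegral_mono_set (Ioi_subset_Ioi hst)
    exact Measurable.mul (by fun_prop) (this.comp (by fun_prop : Measurable fun t : ℝ => 1 / t))
  have hpt : ∀ t : ℝ, 0 < t → rE ν φ t ≤ c1 * I t + c2 * J t := fun t ht =>
    pointwise μ ν a a' b ha1 ha'0 hb hb' T A B hsub hweak hstrong f hf1 hfa hgm hwm hgw hφm hφle ht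
  have hmain : ∫⁻ y, h y ∂ν ≤
      ∫⁻ t in Ioi (0:ℝ), ((fun t => c1 * (U t * I t)) + fun t => c2 * (U t * J t)) t ^ q := by
    calc ∫⁻ y, h y ∂ν ≤ ∫⁻ y, (ENNReal.ofReal |u y| * φ y) ^ q ∂ν := lintegral_mono hhφ
      _ ≤ ∫⁻ t in Ioi (0:ℝ), (U t * rE ν φ t) ^ q :=
          HLpow ν (by fun_prop) hφm hUa (rE_antitone ν φ) (fun t _ => rE_dom ν _ t)
            (fun t _ => rE_dom ν _ t) hq0
      _ ≤ _ := by
          refine setLIntegral_mono' measurableSet_Ioi fun t ht => ?_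
          refine ENNReal.rpow_le_rpow ?_ hq0.le
          refine (mul_le_mul' le_rfl (hpt t ht)).trans (le_of_eq ?_)
          simp only [Pi.add_apply]
          ring
  have hcm : ∀ (c : ℝ≥0∞) (k : ℝ → ℝ≥0∞), Measurable k →
      (∫⁻ t in Ioi (0:ℝ), (c * k t) ^ q) ^ (1/q) = c * (∫⁻ t in Ioi (0:ℝ), k t ^ q) ^ (1/q) := by
    intro c k hk
    simp only [ENNReal.mul_rpow_of_nonneg _ _ hq0.le]
    rw [lintegral_const_mul _ (hk.pow_const q), ENNReal.mul_rpow_of_nonneg _ _ (by positivity),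
      ← ENNReal.rpow_mul, mul_one_div_cancel hq0.ne', ENNReal.rpow_one]
  have hUm := hUa.measurable
  have H1 := hardy1 hUm hHa.measurable hWa.measurable hpp hpq hN10 hN1t
    (fun s hs => (hM1 s hs).trans le_self_add)
  have H2 := hardy2 hUm hHa.measurable hWa.measurable hb' hpp hpq hN20 hN2t
    (fun s hs => (hM2 s hs).trans le_self_add)
  have hHp : (∫⁻ r in Ioi (0:ℝ), H r ^ p) ^ (1/p) ≤ (∫⁻ x, g x ^ p ∂μ) ^ (1/p) :=
    ENNReal.rpow_le_rpow (rE_Lp μ hgm hp0) (by positivity)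
  calc (∫⁻ y, h y ∂ν) ^ (1/q)
      ≤ (∫⁻ t in Ioi (0:ℝ), ((fun t => c1 * (U t * I t)) + fun t => c2 * (U t * J t)) t ^ q) ^ (1/q) :=
        ENNReal.rpow_le_rpow hmain (by positivity)
    _ ≤ (∫⁻ t in Ioi (0:ℝ), (c1 * (U t * I t)) ^ q) ^ (1/q) +
        (∫⁻ t in Ioi (0:ℝ), (c2 * (U t * J t)) ^ q) ^ (1/q) :=
        ENNReal.lintegral_Lp_add_le ((hUm.mul hIm).const_mul c1).aemeasurable
          ((hUm.mul hJm).const_mul c2).aemeasurable (by linarith)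
    _ = c1 * (∫⁻ t in Ioi (0:ℝ), (U t * I t) ^ q) ^ (1/q) +
        c2 * (∫⁻ t in Ioi (0:ℝ), (U t * J t) ^ q) ^ (1/q) := by
        rw [hcm c1 (fun t => U t * I t) (hUm.mul hIm), hcm c2 (fun t => U t * J t) (hUm.mul hJm)]
    _ ≤ c1 * (8 * N1 * (∫⁻ x, g x ^ p ∂μ) ^ (1/p)) + c2 * (8 * N2 * (∫⁻ x, g x ^ p ∂μ) ^ (1/p)) := by
        refine add_le_add (mul_le_mul' le_rfl (H1.trans ?_)) (mul_le_mul' le_rfl (H2.trans ?_))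
        · gcongr
        · gcongr
    _ = C * (∫⁻ x, g x ^ p ∂μ) ^ (1/p) := by rw [hC]; ring
end

section
/- Let 1 < p ≤ q < ∞ with p' = p/(p−1), and let u, v be non-negative measurable functions on (0,∞). There exists a constant C > 0 such that (∫₀^{∞} ( u(t) ∫₀^{t} F(s) ds )^q dt)^{1/q} ≤ C (∫₀^{∞} ( v(t) F(t) )^p dt)^{1/p} for every non-negative measurable function F on (0,∞), if and only if sup_{s>0} (∫_{s}^{∞} u(t)^q dt)^{1/q} (∫₀^{s} v(t)^{−p'} dt)^{1/p'} < ∞. -/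
open MeasureTheory Set ENNReal

lemma rpow_anti {x y : ℝ≥0∞} {z : ℝ} (hz : z ≤ 0) (h : x ≤ y) : y ^ z ≤ x ^ z := by
  rw [← neg_neg z, ENNReal.rpow_neg, ENNReal.rpow_neg x]
  exact ENNReal.inv_le_inv.2 (ENNReal.rpow_le_rpow h (by linarith))

lemma up_meas (μ : Measure ℝ) [NullSingletonClass μ] (E : Set ℝ) (c : ℝ≥0∞)
    (h : ∀ t ∈ E, μ (Ioi t) ≤ c) : μ E ≤ c := by
  by_cases hb : ∃ b ∈ E, ∀ t ∈ E, b ≤ t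
  · obtain ⟨b, hbE, hb⟩ := hb
    calc μ E ≤ μ (Ici b) := measure_mono hb
      _ = μ (Ioi b) := (measure_congr Ioi_ae_eq_Ici).symm
      _ ≤ c := h b hbE
  · push Not at hb
    have hsub : E ⊆ ⋃ r : {r : ℚ // ∃ t ∈ E, t < (r : ℝ)}, Ioi ((r : ℚ) : ℝ) := by
      intro t ht
      obtain ⟨t', ht', hlt⟩ := hb t ht
      obtain ⟨r, hr1, hr2⟩ := exists_rat_btwn hlt
      exact mem_iUnion.2 ⟨⟨r, t', ht', hr1⟩, hr2⟩
    refine (measure_mono hsub).trans ?_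
    rw [Directed.measure_iUnion]
    · refine iSup_le ?_
      rintro ⟨r, t, ht, htr⟩
      exact (measure_mono (Ioi_subset_Ioi htr.le)).trans (h t ht)
    · intro a b
      rcases le_total (a : ℚ) (b : ℚ) with hab | hab
      · exact ⟨a, subset_rfl, Ioi_subset_Ioi (by exact_mod_cast hab)⟩
      · exact ⟨b, Ioi_subset_Ioi (by exact_mod_cast hab), subset_rfl⟩

lemma down_meas (μ : Measure ℝ) [NullSingletonClass μ] (E : Set ℝ) (c : ℝ≥0∞)
    (h : ∀ t ∈ E, μ (Iio t) ≤ c) : μ E ≤ c := by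
  by_cases hb : ∃ b ∈ E, ∀ t ∈ E, t ≤ b
  · obtain ⟨b, hbE, hb⟩ := hb
    calc μ E ≤ μ (Iic b) := measure_mono hb
      _ = μ (Iio b) := (measure_congr Iio_ae_eq_Iic).symm
      _ ≤ c := h b hbE
  · push Not at hb
    have hsub : E ⊆ ⋃ r : {r : ℚ // ∃ t ∈ E, (r : ℝ) < t}, Iio ((r : ℚ) : ℝ) := by
      intro t ht
      obtain ⟨t', ht', hlt⟩ := hb t ht
      obtain ⟨r, hr1, hr2⟩ := exists_rat_btwn hlt
      exact mem_iUnion.2 ⟨⟨r, t', ht', hr2⟩, hr1⟩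
    refine (measure_mono hsub).trans ?_
    rw [Directed.measure_iUnion]
    · refine iSup_le ?_
      rintro ⟨r, t, ht, htr⟩
      exact (measure_mono (Iio_subset_Iio htr.le)).trans (h t ht)
    · intro a b
      rcases le_total (a : ℚ) (b : ℚ) with hab | hab
      · exact ⟨b, Iio_subset_Iio (by exact_mod_cast hab), subset_rfl⟩
      · exact ⟨a, subset_rfl, Iio_subset_Iio (by exact_mod_cast hab)⟩

lemma noAtoms_wd (μ : Measure ℝ) [NullSingletonClass μ] (f : ℝ → ℝ≥0∞) : NullSingletonClass (μ.withDensity f) :=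
  ⟨fun x => withDensity_absolutelyContinuous μ f (measure_singleton x)⟩

lemma up_lint (f : ℝ → ℝ≥0∞) (E : Set ℝ) (c : ℝ≥0∞)
    (h : ∀ t ∈ E, ∫⁻ x in Ioi t, f x ≤ c) : ∫⁻ x in E, f x ≤ c := by
  have := noAtoms_wd volume f
  rw [← withDensity_apply']
  exact up_meas _ E c fun t ht => by rw [withDensity_apply']; exact h t ht

lemma down_lint (f : ℝ → ℝ≥0∞) (E : Set ℝ) (c : ℝ≥0∞) (hE : E ⊆ Ioi 0)
    (h : ∀ t ∈ E, ∫⁻ x in Ioo 0 t, f x ≤ c) : ∫⁻ x in E, f x ≤ c := by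
  have := noAtoms_wd (volume.restrict (Ioi 0)) f
  have := down_meas ((volume.restrict (Ioi 0)).withDensity f) E c fun t ht => by
    rw [withDensity_apply', Measure.restrict_restrict measurableSet_Iio, inter_comm, Ioi_inter_Iio]
    exact h t ht
  rwa [withDensity_apply', Measure.restrict_restrict' measurableSet_Ioi,
    inter_eq_left.2 hE] at this

lemma holder_A (p p' : ℝ) (hpp : p.HolderConjugate p') (V f : ℝ → ℝ≥0∞) (hV : Measurable V)
    (hf : Measurable f) (hVt : ∀ x, V x ≠ ⊤) (A B : Set ℝ) (hA : MeasurableSet A) (hAB : A ⊆ B)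
    (hW : ∫⁻ x in B, V x ^ (-p') ≠ ⊤) :
    ∫⁻ x in A, f x ≤ (∫⁻ x in A, (V x * f x) ^ p) ^ (1/p) *
      (∫⁻ x in B, V x ^ (-p')) ^ (1/p') := by
  have hWA : ∫⁻ x in A, V x ^ (-p') ≤ ∫⁻ x in B, V x ^ (-p') := lintegral_mono_set hAB
  have hae : ∀ᵐ x ∂(volume.restrict A), V x ^ (-p') < ⊤ :=
    ae_lt_top (hV.pow_const _) (ne_top_of_le_ne_top hW hWA)
  have hp' := hpp.symm.pos
  calc ∫⁻ x in A, f x = ∫⁻ x in A, ((fun x => V x * f x) * (fun x => (V x)⁻¹)) x := by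
        refine lintegral_congr_ae ?_
        filter_upwards [hae] with x hx
        have h0 : V x ≠ 0 := by
          intro h0
          rw [h0, ENNReal.zero_rpow_of_neg (by linarith)] at hx
          exact lt_irrefl _ hx
        simp only [Pi.mul_apply]
        rw [mul_comm (V x), mul_assoc, ENNReal.mul_inv_cancel h0 (hVt x), mul_one]
    _ ≤ (∫⁻ x in A, (V x * f x) ^ p) ^ (1/p) * (∫⁻ x in A, ((V x)⁻¹) ^ p') ^ (1/p') :=
        ENNReal.lintegral_mul_le_Lp_mul_Lq _ hpp (hV.mul hf).aemeasurable hV.inv.aemeasurable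
    _ ≤ _ := by
        simp_rw [ENNReal.inv_rpow, ← ENNReal.rpow_neg]
        exact mul_le_mul_right (ENNReal.rpow_le_rpow hWA (by positivity)) _

lemma tsum_rpow_le (a : ℤ → ℝ≥0∞) (r : ℝ) (hr : 1 ≤ r) : ∑' k, a k ^ r ≤ (∑' k, a k) ^ r := by
  have key : ∀ x : ℝ≥0∞, x ^ r = x * x ^ (r-1) := fun x => by
    conv_lhs => rw [show r = 1 + (r-1) by ring]
    rw [ENNReal.rpow_add_of_nonneg _ _ zero_le_one (by linarith), ENNReal.rpow_one]
  calc ∑' k, a k ^ r ≤ ∑' k, a k * (∑' k, a k) ^ (r-1) := by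
        refine ENNReal.tsum_le_tsum fun k => ?_
        rw [key]
        exact mul_le_mul_right (ENNReal.rpow_le_rpow (ENNReal.le_tsum k) (by linarith)) _
    _ = _ := by rw [ENNReal.tsum_mul_right, ← key]

lemma necess (p q p' : ℝ) (hpp : p.HolderConjugate p') (hq : 0 < q) (C : ℝ≥0∞)
    (u v : ℝ → ℝ) (hv : Measurable v)
    (hv0 : ∀ t ∈ Ioi (0:ℝ), 0 ≤ v t)
    (H : ∀ F : ℝ → ℝ, Measurable F → (∀ t, 0 ≤ F t) →
      (∫⁻ t in Ioi (0:ℝ),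
          (ENNReal.ofReal (u t) * ∫⁻ s in Ioo (0:ℝ) t, ENNReal.ofReal (F s)) ^ q) ^ (1/q)
        ≤ C * (∫⁻ t in Ioi (0:ℝ), (ENNReal.ofReal (v t) * ENNReal.ofReal (F t)) ^ p) ^ (1/p))
    (s : ℝ) (hs : 0 < s) :
      (∫⁻ t in Ioi s, ENNReal.ofReal (u t) ^ q) ^ (1/q) *
      (∫⁻ t in Ioo (0:ℝ) s, ENNReal.ofReal (v t) ^ (-p')) ^ (1/p') ≤ C := by
  have hp0 := hpp.pos
  have hp'0 := hpp.symm.pos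
  set Uq := (∫⁻ t in Ioi s, ENNReal.ofReal (u t) ^ q) with hUq
  let e : ℕ → ℝ := fun n => 1 / ((n:ℝ) + 1)
  have he : ∀ n, 0 < e n := fun n => by positivity
  let g : ℕ → ℝ → ℝ≥0∞ := fun n t => (ENNReal.ofReal (v t) + ENNReal.ofReal (e n)) ^ (-p')
  have hgm : ∀ n, Measurable (g n) := fun n =>
    ((ENNReal.measurable_ofReal.comp hv).add_const _).pow_const _
  have hglt : ∀ n t, g n t ≠ ⊤ := fun n t => by
    apply ENNReal.rpow_ne_top_of_ne_zero <;> simp [he n]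
  -- bound at level n
  have step : ∀ n, Uq ^ (1/q) * (∫⁻ t in Ioo (0:ℝ) s, g n t) ^ (1/p') ≤ C := by
    intro n
    set W := ∫⁻ t in Ioo (0:ℝ) s, g n t with hW
    have hWt : W ≠ ⊤ := by
      have : W ≤ ∫⁻ t in Ioo (0:ℝ) s, (ENNReal.ofReal (e n)) ^ (-p') := by
        refine lintegral_mono fun t => ?_
        exact rpow_anti (by linarith) le_add_self
      refine ne_top_of_le_ne_top ?_ this
      rw [setLIntegral_const]
      refine ENNReal.mul_ne_top ?_ (by simp)
      apply ENNReal.rpow_ne_top_of_ne_zero <;> simp [he n]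
    by_cases hW0 : W = 0
    · rw [hW0, ENNReal.zero_rpow_of_pos (by positivity), mul_zero]; exact zero_le
    let F : ℝ → ℝ := (Ioo (0:ℝ) s).indicator fun t => (g n t).toReal
    have hFm : Measurable F := (hgm n).ennreal_toReal.indicator measurableSet_Ioo
    have hF0 : ∀ t, 0 ≤ F t := fun t => indicator_nonneg (fun _ _ => ENNReal.toReal_nonneg) t
    have hFg : ∀ t, ENNReal.ofReal (F t) = (Ioo (0:ℝ) s).indicator (g n) t := fun t => by
      by_cases ht : t ∈ Ioo (0:ℝ) s
      · simp only [F, indicator_of_mem ht]; exact ENNReal.ofReal_toReal (hglt n t)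
      · simp only [F, indicator_of_notMem ht]; simp
    have h1 := H F hFm hF0
    have hleft : Uq ^ (1/q) * W ≤ (∫⁻ t in Ioi (0:ℝ),
          (ENNReal.ofReal (u t) * ∫⁻ s in Ioo (0:ℝ) t, ENNReal.ofReal (F s)) ^ q) ^ (1/q) := by
      have : Uq * W ^ q ≤ ∫⁻ t in Ioi (0:ℝ),
          (ENNReal.ofReal (u t) * ∫⁻ s in Ioo (0:ℝ) t, ENNReal.ofReal (F s)) ^ q := by
        calc Uq * W ^ q = ∫⁻ t in Ioi s, ENNReal.ofReal (u t) ^ q * W ^ q := by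
              rw [lintegral_mul_const']
              exact ENNReal.rpow_ne_top_of_nonneg hq.le hWt
          _ ≤ ∫⁻ t in Ioi s,
              (ENNReal.ofReal (u t) * ∫⁻ s in Ioo (0:ℝ) t, ENNReal.ofReal (F s)) ^ q := by
              refine setLIntegral_mono' measurableSet_Ioi fun t ht => ?_
              rw [ENNReal.mul_rpow_of_nonneg _ _ hq.le]
              gcongr
              calc W = ∫⁻ x in Ioo 0 s, ENNReal.ofReal (F x) := by
                    refine setLIntegral_congr_fun measurableSet_Ioo fun x hx => ?_
                    simp only [hFg, indicator_of_mem hx]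
                _ ≤ _ := lintegral_mono_set (Ioo_subset_Ioo_right (le_of_lt ht))
          _ ≤ _ := lintegral_mono_set (Ioi_subset_Ioi hs.le)
      calc Uq ^ (1/q) * W = (Uq * W ^ q) ^ (1/q) := by
            rw [ENNReal.mul_rpow_of_nonneg _ _ (by positivity), ← ENNReal.rpow_mul,
              mul_one_div_cancel hq.ne', ENNReal.rpow_one]
        _ ≤ _ := by gcongr
    have hright : (∫⁻ t in Ioi (0:ℝ), (ENNReal.ofReal (v t) * ENNReal.ofReal (F t)) ^ p) ≤ W := by
      rw [hW, ← lintegral_indicator measurableSet_Ioo]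
      refine (setLIntegral_le_lintegral _ _).trans (lintegral_mono fun t => ?_)
      dsimp only
      rw [hFg]
      by_cases ht : t ∈ Ioo (0:ℝ) s
      · simp only [indicator_of_mem ht]
        set y := ENNReal.ofReal (v t) + ENNReal.ofReal (e n) with hy
        have hy0 : y ≠ 0 := by simp [hy, he n]
        have hyt : y ≠ ⊤ := by simp [hy]
        calc (ENNReal.ofReal (v t) * g n t) ^ p ≤ (y * y ^ (-p')) ^ p := by
              gcongr
              exact le_self_add
          _ = y ^ (-p') := by
              conv_lhs => rw [← ENNReal.rpow_one y, ← ENNReal.rpow_mul, ← ENNReal.rpow_add _ _ hy0 hyt,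
                ← ENNReal.rpow_mul]
              congr 1
              have := hpp.mul_eq_add
              linarith
      · simp [indicator_of_notMem ht, ENNReal.zero_rpow_of_pos hp0]
    have h2 : Uq ^ (1/q) * W ≤ C * W ^ (1/p) := by
      refine hleft.trans (h1.trans ?_)
      gcongr
    have hWp0 : W ^ (1/p) ≠ 0 := by simp [hW0, hWt]
    have hWpt : W ^ (1/p) ≠ ⊤ := by simp [hW0, hWt]
    rw [← ENNReal.mul_le_mul_iff_left hWp0 hWpt, mul_assoc, ← ENNReal.rpow_add _ _ hW0 hWt]
    rwa [show 1/p' + 1/p = 1 by have := hpp.inv_add_inv_eq_one; simp only [one_div]; linarith, ENNReal.rpow_one]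
  have hmono : Monotone g := by
    intro m n hmn t
    refine rpow_anti (by linarith) ?_
    refine add_le_add_right ?_ _
    exact ENNReal.ofReal_le_ofReal (Nat.one_div_le_one_div hmn)
  have hlim : Filter.Tendsto (fun n => ∫⁻ t in Ioo (0:ℝ) s, g n t) Filter.atTop
      (nhds (∫⁻ t in Ioo (0:ℝ) s, ENNReal.ofReal (v t) ^ (-p'))) := by
    refine lintegral_tendsto_of_tendsto_of_monotone (fun n => (hgm n).aemeasurable)
      (ae_of_all _ fun t m n hmn => hmono hmn t) (ae_of_all _ fun t => ?_)
    refine (ENNReal.continuous_rpow_const.tendsto _).comp ?_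
    have h0 : Filter.Tendsto (fun n => ENNReal.ofReal (e n)) Filter.atTop (nhds 0) := by
      simpa [e] using ENNReal.tendsto_ofReal (tendsto_one_div_add_atTop_nhds_zero_nat (𝕜 := ℝ))
    simpa using h0.const_add (ENNReal.ofReal (v t))
  have hsup : ∫⁻ t in Ioo (0:ℝ) s, ENNReal.ofReal (v t) ^ (-p') = ⨆ n, ∫⁻ t in Ioo (0:ℝ) s, g n t :=
    tendsto_nhds_unique hlim (tendsto_atTop_iSup fun m n hmn => lintegral_mono (hmono hmn))
  have : (⨆ n, ∫⁻ t in Ioo (0:ℝ) s, g n t) ^ (1/p') = ⨆ n, (∫⁻ t in Ioo (0:ℝ) s, g n t) ^ (1/p') :=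
    (ENNReal.orderIsoRpow (1/p') (by positivity)).map_iSup _
  rw [hsup, this, ENNReal.mul_iSup]
  exact iSup_le step

lemma suff (p q p' : ℝ) (hpp : p.HolderConjugate p') (hpq : p ≤ q) (M : ℝ≥0∞) (hM0 : M ≠ 0)
    (hMt : M ≠ ⊤) (U V f : ℝ → ℝ≥0∞) (hU : Measurable U) (hV : Measurable V) (hf : Measurable f)
    (hVt : ∀ x, V x ≠ ⊤)
    (H : ∀ s : ℝ, 0 < s →
      (∫⁻ t in Ioi s, U t ^ q) ^ (1/q) * (∫⁻ t in Ioo (0:ℝ) s, V t ^ (-p')) ^ (1/p') ≤ M) :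
    (∫⁻ t in Ioi (0:ℝ), (U t * ∫⁻ s in Ioo (0:ℝ) t, f s) ^ q) ^ (1/q)
      ≤ 4 * M * 2 ^ (1/p) * (∫⁻ t in Ioi (0:ℝ), (V t * f t) ^ p) ^ (1/p) := by
  have hp0 := hpp.pos
  have hp'0 := hpp.symm.pos
  have hq0 : 0 < q := by linarith
  set I := ∫⁻ t in Ioi (0:ℝ), (V t * f t) ^ p with hI
  by_cases hIt : I = ⊤
  · rw [hIt, ENNReal.top_rpow_of_pos (by positivity), ENNReal.mul_top]
    · exact le_top
    · simp [hM0]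
  set G : ℝ → ℝ≥0∞ := fun t => ∫⁻ s in Ioo (0:ℝ) t, f s with hG
  set W : ℝ → ℝ≥0∞ := fun t => ∫⁻ s in Ioo (0:ℝ) t, V s ^ (-p') with hW
  have hGmono : Monotone G := fun a b hab => lintegral_mono_set (Ioo_subset_Ioo_right hab)
  have hGm : Measurable G := hGmono.measurable
  let N : Set ℝ := {t | 0 < t ∧ W t = ⊤}
  let Z : Set ℝ := {t | G t = 0}
  let L : ℤ → Set ℝ := fun k => {t | 0 < t ∧ (2:ℝ≥0∞) ^ k < G t ∧ G t ≤ 2 ^ (k+1)}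
  let E : ℤ → Set ℝ := fun k => L k ∩ {t | W t ≠ ⊤}
  have hLm : ∀ k, MeasurableSet (L k) := fun k =>
    measurableSet_Ioi.inter ((measurableSet_lt measurable_const hGm).inter
      (measurableSet_le hGm measurable_const))
  have hLd : Pairwise (Function.onFun Disjoint L) := by
    have aux : ∀ i j, i < j → Disjoint (L i) (L j) := by
      intro i j hij
      rw [Set.disjoint_left]
      rintro t ⟨_, _, h1⟩ ⟨_, h2, _⟩
      have : (2:ℝ≥0∞) ^ (i+1) ≤ 2 ^ j := ENNReal.zpow_le_of_le (by norm_num) (by omega)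
      exact absurd (h2.trans_le (h1.trans this)) (lt_irrefl _)
    intro i j hij
    rcases lt_or_gt_of_ne hij with h | h
    · exact aux i j h
    · exact (aux j i h).symm
  let b : ℤ → ℝ≥0∞ := fun k => ∫⁻ t in L k, (V t * f t) ^ p
  have hb : ∑' k, b k ≤ I := by
    rw [← lintegral_iUnion hLm hLd]
    refine lintegral_mono_set (iUnion_subset fun k t ht => ht.1)
  let a : ℤ → ℝ≥0∞ := fun k => b k + b (k-1)
  have ha : ∑' k, a k ≤ 2 * I := by
    have hsh : ∑' k, b (k-1) = ∑' k, b k := (Equiv.subRight (1:ℤ)).tsum_eq b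
    rw [ENNReal.tsum_add, hsh, two_mul]
    exact add_le_add hb hb
  -- integral over N
  have hN : ∫⁻ t in N, (U t * G t) ^ q = 0 := by
    have h0 : ∫⁻ t in N, U t ^ q ≤ 0 := by
      refine up_lint _ _ _ ?_
      rintro t ⟨ht, hWt⟩
      have := H t ht
      change _ * (W t) ^ (1/p') ≤ M at this
      rw [hWt, ENNReal.top_rpow_of_pos (by positivity)] at this
      by_contra hne
      have hne' : (∫⁻ t in Ioi t, U t ^ q) ^ (1/q) ≠ 0 := by
        intro h
        rw [ENNReal.rpow_eq_zero_iff_of_pos (by positivity)] at h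
        exact hne h.le
      rw [ENNReal.mul_top hne', top_le_iff] at this
      exact hMt this
    have h1 := (lintegral_eq_zero_iff (hU.pow_const q)).1 (le_antisymm h0 zero_le)
    rw [← lintegral_zero (μ := volume.restrict N)]
    refine lintegral_congr_ae ?_
    filter_upwards [h1] with t ht
    have : U t = 0 := by
      simpa [ENNReal.rpow_eq_zero_iff_of_pos hq0] using ht
    simp [this, hq0]
  have hZ : ∫⁻ t in Z, (U t * G t) ^ q ≤ 0 := by
    refine (setLIntegral_mono (g := fun _ => 0) measurable_const ?_).trans (by simp)
    intro t ht
    have : G t = 0 := ht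
    simp [this, hq0]
  -- pointwise bound on E k
  have hpt : ∀ k, ∀ t ∈ E k, (2:ℝ≥0∞) ^ (k+1) ≤ 4 * (a k ^ (1/p) * W t ^ (1/p')) := by
    rintro k t ⟨⟨ht0, hkl, hku⟩, hWt⟩
    have hz0 : (2:ℝ≥0∞) ^ (k-1) ≠ ⊤ := ENNReal.zpow_ne_top (by norm_num) (by norm_num) _
    have e1 : (2:ℝ≥0∞) ^ k = 2 ^ (k-1) + 2 ^ (k-1) := by
      have := ENNReal.zpow_add (x := 2) (by norm_num) (by norm_num) (k-1) 1
      rw [sub_add_cancel, zpow_one] at this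
      rw [this, mul_two]
    have e2 : (2:ℝ≥0∞) ^ (k+1) = 4 * 2 ^ (k-1) := by
      rw [ENNReal.zpow_add (by norm_num) (by norm_num), e1, zpow_one]
      ring
    let A : Set ℝ := Ioo 0 t ∩ (L k ∪ L (k-1))
    have hAm : MeasurableSet A := measurableSet_Ioo.inter ((hLm _).union (hLm _))
    have hsplit : Ioo 0 t ⊆ {s | 0 < s ∧ G s ≤ 2 ^ (k-1)} ∪ A := by
      intro s hs
      by_cases h1 : G s ≤ 2 ^ (k-1)
      · exact Or.inl ⟨hs.1, h1⟩
      · right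
        refine ⟨hs, ?_⟩
        push Not at h1
        by_cases h2 : G s ≤ 2 ^ k
        · right
          exact ⟨hs.1, h1, by simpa using h2⟩
        · left
          exact ⟨hs.1, not_le.1 h2, (hGmono hs.2.le).trans hku⟩
    have hlow : ∫⁻ s in {s | 0 < s ∧ G s ≤ 2 ^ (k-1)}, f s ≤ 2 ^ (k-1) :=
      down_lint f _ _ (fun s hs => hs.1) fun s hs => hs.2
    have hX : (2:ℝ≥0∞) ^ (k-1) ≤ ∫⁻ s in A, f s := by
      have h3 : G t ≤ 2 ^ (k-1) + ∫⁻ s in A, f s :=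
        (lintegral_mono_set hsplit).trans ((lintegral_union_le _ _ _).trans (by gcongr))
      have h4 := hkl.trans_le h3
      rw [e1] at h4
      exact ((ENNReal.add_lt_add_iff_left hz0).1 h4).le
    have hAa : ∫⁻ s in A, (V s * f s) ^ p ≤ a k :=
      (lintegral_mono_set inter_subset_right).trans (lintegral_union_le _ _ _)
    rw [e2]
    refine mul_le_mul_right (hX.trans ?_) _
    refine (holder_A p p' hpp V f hV hf hVt A (Ioo 0 t) hAm inter_subset_left hWt).trans ?_
    exact mul_le_mul_left (ENNReal.rpow_le_rpow hAa (by positivity)) _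
  have hEk : ∀ k, ∫⁻ t in E k, (U t * G t) ^ q ≤ (4 * M) ^ q * a k ^ (q/p) := by
    intro k
    set c : ℝ≥0∞ := (2 ^ (k+1)) ^ q with hc
    have hct : c ≠ ⊤ := ENNReal.rpow_ne_top_of_nonneg hq0.le
      (ENNReal.zpow_ne_top (by norm_num) (by norm_num) _)
    calc ∫⁻ t in E k, (U t * G t) ^ q ≤ ∫⁻ t in E k, U t ^ q * c := by
          refine setLIntegral_mono ((hU.pow_const q).mul_const c) fun t ht => ?_
          rw [ENNReal.mul_rpow_of_nonneg _ _ hq0.le]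
          exact mul_le_mul_right (ENNReal.rpow_le_rpow ht.1.2.2 hq0.le) _
      _ ≤ _ := by
          refine up_lint _ _ _ fun t ht => ?_
          rw [lintegral_mul_const' _ _ hct]
          have h1 := H t ht.1.1
          set J := ∫⁻ t in Ioi t, U t ^ q with hJ
          have eJ : J = (J ^ (1/q)) ^ q := by
            rw [← ENNReal.rpow_mul, one_div_mul_cancel hq0.ne', ENNReal.rpow_one]
          have ea : a k ^ (q/p) = (a k ^ (1/p)) ^ q := by
            rw [← ENNReal.rpow_mul]; congr 1; ring
          rw [eJ, ea, hc, ← ENNReal.mul_rpow_of_nonneg _ _ hq0.le,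
            ← ENNReal.mul_rpow_of_nonneg _ _ hq0.le]
          refine ENNReal.rpow_le_rpow ?_ hq0.le
          calc J ^ (1/q) * 2 ^ (k+1) ≤ J ^ (1/q) * (4 * (a k ^ (1/p) * W t ^ (1/p'))) :=
                mul_le_mul_right (hpt k t ht) _
            _ = 4 * (J ^ (1/q) * W t ^ (1/p')) * a k ^ (1/p) := by ring
            _ ≤ 4 * M * a k ^ (1/p) :=
                mul_le_mul_left (mul_le_mul_right h1 _) _
  have hcover : Ioi (0:ℝ) ⊆ (N ∪ Z) ∪ ⋃ k, E k := by
    intro t ht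
    by_cases hWt : W t = ⊤
    · exact Or.inl (Or.inl ⟨ht, hWt⟩)
    by_cases hG0 : G t = 0
    · exact Or.inl (Or.inr hG0)
    have hGt : G t ≠ ⊤ := by
      have := holder_A p p' hpp V f hV hf hVt (Ioo 0 t) (Ioo 0 t) measurableSet_Ioo subset_rfl hWt
      refine ne_top_of_le_ne_top (ENNReal.mul_ne_top ?_ ?_) this
      · refine ENNReal.rpow_ne_top_of_nonneg (by positivity) (ne_top_of_le_ne_top hIt ?_)
        exact lintegral_mono_set Ioo_subset_Ioi_self
      · exact ENNReal.rpow_ne_top_of_nonneg (by positivity) hWt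
    obtain ⟨k, hk1, hk2⟩ := ENNReal.exists_mem_Ioc_zpow hG0 hGt (y := 2) (by norm_num) (by norm_num)
    exact Or.inr (mem_iUnion.2 ⟨k, ⟨ht, hk1, hk2⟩, hWt⟩)
  have hfin : ∫⁻ t in Ioi (0:ℝ), (U t * G t) ^ q ≤ (4 * M) ^ q * (2 * I) ^ (q/p) := by
    calc ∫⁻ t in Ioi (0:ℝ), (U t * G t) ^ q
        ≤ ((∫⁻ t in N, (U t * G t) ^ q) + ∫⁻ t in Z, (U t * G t) ^ q)
          + ∑' k, ∫⁻ t in E k, (U t * G t) ^ q :=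
          (lintegral_mono_set hcover).trans ((lintegral_union_le _ _ _).trans
            (add_le_add (lintegral_union_le _ _ _) (lintegral_iUnion_le _ _)))
      _ ≤ (0 + 0) + ∑' k, (4 * M) ^ q * a k ^ (q/p) :=
          add_le_add (add_le_add hN.le hZ) (ENNReal.tsum_le_tsum hEk)
      _ = (4 * M) ^ q * ∑' k, a k ^ (q/p) := by rw [ENNReal.tsum_mul_left]; simp
      _ ≤ (4 * M) ^ q * (2 * I) ^ (q/p) := by
          refine mul_le_mul_right ((tsum_rpow_le a _ ((one_le_div hp0).2 hpq)).trans ?_) _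
          exact ENNReal.rpow_le_rpow ha (by positivity)
  calc (∫⁻ t in Ioi (0:ℝ), (U t * G t) ^ q) ^ (1/q)
      ≤ ((4 * M) ^ q * (2 * I) ^ (q/p)) ^ (1/q) := ENNReal.rpow_le_rpow hfin (by positivity)
    _ = 4 * M * (2 * I) ^ (1/p) := by
        rw [ENNReal.mul_rpow_of_nonneg _ _ (by positivity), ← ENNReal.rpow_mul, ← ENNReal.rpow_mul,
          mul_one_div_cancel hq0.ne', ENNReal.rpow_one]
        congr 2
        field_simp
    _ = _ := by
        rw [ENNReal.mul_rpow_of_nonneg _ _ (by positivity), mul_assoc (4 * M)]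

/-- weighted Hardy inequality of Muckenhoupt and Bradley. For
`1 < p ≤ q < ∞`, the inequality
`(∫₀^∞ (u(t) ∫₀^t F)^q dt)^{1/q} ≤ C (∫₀^∞ (v F)^p dt)^{1/p}` holds for all non-negative
measurable `F` iff `sup_{s>0} (∫_s^∞ u^q)^{1/q} (∫₀^s v^{-p'})^{1/p'} < ∞`. -/
theorem stmt3 (p q p' : ℝ) (hp : 1 < p) (hpq : p ≤ q) (hp'def : p' = p / (p - 1))
    (u v : ℝ → ℝ) (hu : Measurable u) (hv : Measurable v)
    (hu0 : ∀ t ∈ Ioi (0:ℝ), 0 ≤ u t) (hv0 : ∀ t ∈ Ioi (0:ℝ), 0 ≤ v t) :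
    (∃ C : ℝ, 0 < C ∧ ∀ F : ℝ → ℝ, Measurable F → (∀ t, 0 ≤ F t) →
      (∫⁻ t in Ioi (0:ℝ),
          (ENNReal.ofReal (u t) * ∫⁻ s in Ioo (0:ℝ) t, ENNReal.ofReal (F s)) ^ q) ^ (1/q)
        ≤ ENNReal.ofReal C *
          (∫⁻ t in Ioi (0:ℝ), (ENNReal.ofReal (v t) * ENNReal.ofReal (F t)) ^ p) ^ (1/p))
    ↔ (∃ M : ℝ, ∀ s : ℝ, 0 < s →
      (∫⁻ t in Ioi s, ENNReal.ofReal (u t) ^ q) ^ (1/q) *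
      (∫⁻ t in Ioo (0:ℝ) s, ENNReal.ofReal (v t) ^ (-p')) ^ (1/p')
        ≤ ENNReal.ofReal M) := by
  have hpp : p.HolderConjugate p' := by
    rw [hp'def]; exact Real.HolderConjugate.conjExponent hp
  have hp0 := hpp.pos
  constructor
  · rintro ⟨C, hC, H⟩
    exact ⟨C, fun s hs => necess p q p' hpp (by linarith) _ u v hv hv0 H s hs⟩
  · rintro ⟨M, H⟩
    have hM : 0 < max M 1 := lt_max_of_lt_right one_pos
    refine ⟨4 * max M 1 * 2 ^ (1/p), by positivity, fun F hF _ => ?_⟩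
    have := suff p q p' hpp hpq (ENNReal.ofReal (max M 1)) (by simp) (by simp)
      (fun t => ENNReal.ofReal (u t)) (fun t => ENNReal.ofReal (v t))
      (fun t => ENNReal.ofReal (F t)) hu.ennreal_ofReal hv.ennreal_ofReal hF.ennreal_ofReal
      (by simp) (fun s hs => (H s hs).trans (ENNReal.ofReal_le_ofReal (le_max_left _ _)))
    refine this.trans (le_of_eq ?_)
    congr 1
    rw [ENNReal.ofReal_mul (by positivity), ENNReal.ofReal_mul (by positivity),
      ← ENNReal.ofReal_rpow_of_pos (by positivity)]
    simp
end

section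
/- Let 1 < p ≤ q < ∞ with p' = p/(p−1), and let u, v be non-negative measurable functions on (0,∞). There exists a constant C > 0 such that (∫₀^{∞} ( u(t) ∫_{t}^{∞} F(s) ds )^q dt)^{1/q} ≤ C (∫₀^{∞} ( v(t) F(t) )^p dt)^{1/p} for every non-negative measurable function F on (0,∞), if and only if sup_{s>0} (∫₀^{s} u(t)^q dt)^{1/q} (∫_{s}^{∞} v(t)^{−p'} dt)^{1/p'} < ∞. -/
open MeasureTheory Set ENNReal

lemma aux_tsum (a : ℕ → ℝ≥0∞) (r : ℝ) (hr : 1 ≤ r) : ∑' k, a k ^ r ≤ (∑' k, a k) ^ r := by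
  have e : ∀ x : ℝ≥0∞, x ^ r = x * x ^ (r - 1) := fun x => by
    conv_lhs => rw [show r = 1 + (r - 1) by ring]
    rw [ENNReal.rpow_add_of_nonneg _ _ (by norm_num) (by linarith), ENNReal.rpow_one]
  rw [e (∑' k, a k), ← ENNReal.tsum_mul_right]
  refine ENNReal.tsum_le_tsum fun k => ?_
  rw [e]
  gcongr
  exact ENNReal.le_tsum k

lemma aux_holder (p p' : ℝ) (h : p.HolderConjugate p') (V f : ℝ → ℝ≥0∞) (hV : Measurable V)
    (hf : Measurable f) (hVt : ∀ t, V t ≠ ∞) (a : ℝ) (J : Set ℝ) (hJ : J ⊆ Ioi a)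
    (hB : ∫⁻ t in Ioi a, V t ^ (-p') ≠ ∞) :
    ∫⁻ t in J, f t ≤ (∫⁻ t in J, (V t * f t) ^ p) ^ (1/p) *
      (∫⁻ t in Ioi a, V t ^ (-p')) ^ (1/p') := by
  have hp' : 0 < p' := h.symm.pos
  have h1 : ∀ᵐ t ∂(volume.restrict J), V t ^ (-p') < ∞ :=
    ae_mono (Measure.restrict_mono hJ le_rfl) (ae_lt_top (hV.pow_const _) hB)
  calc ∫⁻ t in J, f t = ∫⁻ t in J, ((fun t => V t * f t) * (fun t => (V t)⁻¹)) t := by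
        refine lintegral_congr_ae ?_
        filter_upwards [h1] with t ht
        have h0 : V t ≠ 0 := by
          intro h0
          rw [h0, ENNReal.zero_rpow_of_neg (by linarith)] at ht
          exact lt_irrefl _ ht
        simp only [Pi.mul_apply]
        rw [mul_comm (V t), mul_assoc, ENNReal.mul_inv_cancel h0 (hVt t), mul_one]
    _ ≤ (∫⁻ t in J, (V t * f t) ^ p) ^ (1/p) * (∫⁻ t in J, ((V t)⁻¹) ^ p') ^ (1/p') :=
        ENNReal.lintegral_mul_le_Lp_mul_Lq _ h (hV.mul hf).aemeasurable hV.inv.aemeasurable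
    _ ≤ _ := by
        have : ∀ t, (V t)⁻¹ ^ p' = V t ^ (-p') := fun t => by
          rw [ENNReal.inv_rpow, ENNReal.rpow_neg]
        simp only [this]
        gcongr

lemma aux_levels (G : ℝ → ℝ) (hG0 : ∀ t, 0 ≤ G t) (hGi : Integrable G)
    (N : ℝ) (hN : 0 < N) (hGN : ∀ t, N < t → G t = 0) (T : ℝ) (hT : T = ∫ s in Ioi 0, G s) :
    ∃ x : ℕ → ℝ, ∀ k, 0 ≤ x k ∧ ∫ s in Ioi (x k), G s = T * (1/2)^k := by
  have e : ∀ t, 0 ≤ t → ∫ s in Ioi t, G s = T - ∫ s in (0:ℝ)..t, G s := fun t ht => by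
    rw [← intervalIntegral.integral_Ioi_sub_Ioi hGi.integrableOn ht, hT]; ring
  have hc : Continuous fun t => T - ∫ s in (0:ℝ)..t, G s :=
    continuous_const.sub (intervalIntegral.continuous_primitive
      (fun a b => hGi.intervalIntegrable) 0)
  have hT0 : 0 ≤ T := hT ▸ integral_nonneg hG0
  have hz : ∫ s in Ioi N, G s = 0 := by
    rw [setIntegral_congr_fun (g := fun _ => (0:ℝ)) measurableSet_Ioi (fun s hs => hGN s hs)]
    simp
  have key : ∀ k : ℕ, ∃ x, 0 ≤ x ∧ ∫ s in Ioi x, G s = T * (1/2)^k := fun k => by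
    have := intermediate_value_Icc' hN.le hc.continuousOn
    obtain ⟨x, hx, hx2⟩ := this (show T * (1/2)^k ∈ _ by
      rw [← e N hN.le, hz]
      simp only [intervalIntegral.integral_same, sub_zero]
      refine ⟨by positivity, ?_⟩
      exact mul_le_of_le_one_right hT0 (pow_le_one₀ (by norm_num) (by norm_num)))
    exact ⟨x, hx.1, by rw [e x hx.1]; exact hx2⟩
  choose x hx using key
  exact ⟨x, hx⟩

lemma aux_cut (p q p' : ℝ) (h : p.HolderConjugate p') (hpq : p ≤ q) (U V : ℝ → ℝ≥0∞)
    (hU : Measurable U) (hV : Measurable V) (hVt : ∀ t, V t ≠ ∞) (M : ℝ≥0∞) (hMt : M ≠ ∞)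
    (hM : ∀ s : ℝ, 0 < s → (∫⁻ t in Ioo (0:ℝ) s, U t ^ q) ^ (1/q) *
      (∫⁻ t in Ioi s, V t ^ (-p')) ^ (1/p') ≤ M)
    (G : ℝ → ℝ) (hGm : Measurable G) (hG0 : ∀ t, 0 ≤ G t) (hGi : Integrable G)
    (N : ℝ) (hN : 0 < N) (hGN : ∀ t, N < t → G t = 0) :
    ∫⁻ t in Ioi (0:ℝ), (U t * ∫⁻ s in Ioi t, ENNReal.ofReal (G s)) ^ q ≤
      (4 * M) ^ q * (∫⁻ t in Ioi (0:ℝ), (V t * ENNReal.ofReal (G t)) ^ p) ^ (q/p) := by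
  have hp : 0 < p := h.pos
  have hp' : 0 < p' := h.symm.pos
  have hq : 0 < q := by linarith
  obtain ⟨x, hx⟩ := aux_levels G hG0 hGi N hN hGN _ rfl
  set T := ∫ s in Ioi (0:ℝ), G s with hT
  have eΦ : ∀ t, ∫⁻ s in Ioi t, ENNReal.ofReal (G s) = ENNReal.ofReal (∫ s in Ioi t, G s) :=
    fun t => (ofReal_integral_eq_lintegral_ofReal hGi.integrableOn
      (Filter.Eventually.of_forall hG0)).symm
  have anti : ∀ {a b : ℝ}, a ≤ b → ∫ s in Ioi b, G s ≤ ∫ s in Ioi a, G s := fun {a b} hab =>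
    setIntegral_mono_set hGi.integrableOn (Filter.Eventually.of_forall hG0)
      (Ioi_subset_Ioi hab).eventuallyLE
  have hT0 : 0 ≤ T := integral_nonneg hG0
  rcases hT0.eq_or_lt with hT1 | hT1
  · have : ∫⁻ t in Ioi (0:ℝ), (U t * ∫⁻ s in Ioi t, ENNReal.ofReal (G s)) ^ q = 0 := by
      rw [setLIntegral_congr_fun (g := fun _ => 0) measurableSet_Ioi]
      · simp
      · intro t ht
        have : ∫ s in Ioi t, G s ≤ 0 := hT1 ▸ anti (le_of_lt ht)
        simp only [eΦ, ENNReal.ofReal_of_nonpos this, mul_zero, ENNReal.zero_rpow_of_pos hq]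
    rw [this]; exact zero_le
  have xlt : ∀ k (t : ℝ), T * (1/2)^k < ∫ s in Ioi t, G s → t < x k := fun k t hk => by
    by_contra hcon
    have := anti (not_lt.1 hcon)
    rw [(hx k).2] at this
    linarith
  have xmono : StrictMono x := strictMono_nat_of_lt_succ fun k => by
    apply xlt
    rw [(hx k).2, pow_succ]
    have : 0 < T * (1/2:ℝ)^k := by positivity
    linarith
  have xpos : ∀ k, 0 < x (k+1) := fun k => lt_of_le_of_lt (hx 0).1 (xmono (Nat.succ_pos k))
  -- pointwise bound
  have pt : ∀ t ∈ Ioi (0:ℝ), (U t * ∫⁻ s in Ioi t, ENNReal.ofReal (G s)) ^ q ≤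
      ∑' k : ℕ, (Ioo 0 (x (k+1))).indicator
        (fun t => ENNReal.ofReal (T * (1/2)^k) ^ q * U t ^ q) t := by
    intro t ht
    have hle : ∫ s in Ioi t, G s ≤ T := anti (le_of_lt ht)
    have hge : 0 ≤ ∫ s in Ioi t, G s := integral_nonneg hG0
    rw [eΦ]
    rcases hge.eq_or_lt with h0 | h0
    · rw [← h0]; simp [ENNReal.zero_rpow_of_pos hq]
    · obtain ⟨k, hk1, hk2⟩ := exists_nat_pow_near_of_lt_one (y := (1/2:ℝ))
        (div_pos h0 hT1) ((div_le_one hT1).2 hle) (by norm_num) (by norm_num)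
      rw [lt_div_iff₀ hT1, mul_comm] at hk1
      rw [div_le_iff₀ hT1, mul_comm] at hk2
      refine le_trans ?_ (ENNReal.le_tsum k)
      rw [indicator_of_mem (show t ∈ Ioo 0 (x (k+1)) from ⟨ht, xlt _ _ hk1⟩),
        ENNReal.mul_rpow_of_nonneg _ _ hq.le, mul_comm]
      gcongr
  set P : ℕ → ℝ≥0∞ := fun k => ∫⁻ t in Ioc (x (k+1)) (x (k+2)), (V t * ENNReal.ofReal (G t)) ^ p
    with hP
  have term : ∀ k, ENNReal.ofReal (T * (1/2)^k) ^ q * (∫⁻ t in Ioo 0 (x (k+1)), U t ^ q) ≤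
      (4 * M) ^ q * P k ^ (q/p) := by
    intro k
    by_cases hA : ∫⁻ t in Ioo 0 (x (k+1)), U t ^ q = 0
    · rw [hA, mul_zero]; exact zero_le
    have hB : ∫⁻ t in Ioi (x (k+1)), V t ^ (-p') ≠ ∞ := by
      intro hB
      have := hM _ (xpos k)
      rw [hB, ENNReal.top_rpow_of_pos (by positivity), ENNReal.mul_top] at this
      · exact hMt (top_le_iff.1 this)
      · rw [ne_eq, ENNReal.rpow_eq_zero_iff_of_pos (by positivity)]; exact hA
    have hh := aux_holder p p' h V (fun t => ENNReal.ofReal (G t)) hV hGm.ennreal_ofReal hVt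
      (x (k+1)) (Ioc (x (k+1)) (x (k+2))) Ioc_subset_Ioi_self hB
    have hval : ∫⁻ t in Ioc (x (k+1)) (x (k+2)), ENNReal.ofReal (G t)
        = ENNReal.ofReal (T * (1/2)^k * (1/4)) := by
      rw [← ofReal_integral_eq_lintegral_ofReal hGi.integrableOn
        (Filter.Eventually.of_forall hG0),
        ← intervalIntegral.integral_of_le (xmono (Nat.lt_succ_self _)).le,
        ← intervalIntegral.integral_Ioi_sub_Ioi hGi.integrableOn (xmono (Nat.lt_succ_self _)).le,
        (hx _).2, (hx _).2, Nat.succ_eq_add_one]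
      congr 1
      ring
    have hval2 : ENNReal.ofReal (T * (1/2)^k) =
        4 * ∫⁻ t in Ioc (x (k+1)) (x (k+2)), ENNReal.ofReal (G t) := by
      rw [hval, show (4:ℝ≥0∞) = ENNReal.ofReal 4 by simp, ← ENNReal.ofReal_mul (by norm_num)]
      congr 1
      ring
    set A := ∫⁻ t in Ioo 0 (x (k+1)), U t ^ q
    set B := ∫⁻ t in Ioi (x (k+1)), V t ^ (-p')
    have hAq : A = (A ^ (1/q)) ^ q := by
      rw [← ENNReal.rpow_mul, one_div_mul_cancel hq.ne', ENNReal.rpow_one]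
    have hPq : P k ^ (q/p) = (P k ^ (1/p)) ^ q := by
      rw [← ENNReal.rpow_mul]; congr 1; ring
    rw [hval2, hPq, hAq, ← ENNReal.mul_rpow_of_nonneg _ _ hq.le,
      ← ENNReal.mul_rpow_of_nonneg _ _ hq.le]
    refine ENNReal.rpow_le_rpow ?_ hq.le
    calc _ ≤ 4 * (P k ^ (1/p) * B ^ (1/p')) * A ^ (1/q) := by gcongr
      _ = 4 * (A ^ (1/q) * B ^ (1/p')) * P k ^ (1/p) := by ring
      _ ≤ _ := by gcongr; exact hM _ (xpos k)
  have hdisj : Pairwise (Function.onFun Disjoint fun k => Ioc (x (k+1)) (x (k+2))) :=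
    (xmono.monotone.comp (fun a b hab => Nat.succ_le_succ hab :
      Monotone Nat.succ)).pairwise_disjoint_on_Ioc_succ
  calc ∫⁻ t in Ioi (0:ℝ), (U t * ∫⁻ s in Ioi t, ENNReal.ofReal (G s)) ^ q
      ≤ ∫⁻ t in Ioi (0:ℝ), ∑' k : ℕ, (Ioo 0 (x (k+1))).indicator
        (fun t => ENNReal.ofReal (T * (1/2)^k) ^ q * U t ^ q) t :=
        setLIntegral_mono' measurableSet_Ioi pt
    _ = ∑' k : ℕ, ENNReal.ofReal (T * (1/2)^k) ^ q * (∫⁻ t in Ioo 0 (x (k+1)), U t ^ q) := by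
        rw [lintegral_tsum fun k => (((hU.pow_const _).const_mul _).indicator
          measurableSet_Ioo).aemeasurable]
        congr 1; ext k
        rw [lintegral_indicator measurableSet_Ioo, Measure.restrict_restrict measurableSet_Ioo,
          inter_eq_left.2 Ioo_subset_Ioi_self, lintegral_const_mul _ (hU.pow_const _)]
    _ ≤ ∑' k, (4 * M) ^ q * P k ^ (q/p) := ENNReal.tsum_le_tsum term
    _ = (4 * M) ^ q * ∑' k, P k ^ (q/p) := ENNReal.tsum_mul_left
    _ ≤ (4 * M) ^ q * (∑' k, P k) ^ (q/p) := by
        gcongr; exact aux_tsum _ _ ((one_le_div hp).2 hpq)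
    _ ≤ _ := by
        gcongr
        rw [hP, ← lintegral_iUnion (fun k => measurableSet_Ioc) hdisj]
        refine lintegral_mono_set (iUnion_subset fun k t ht => ?_)
        exact (xpos k).trans ht.1

lemma aux_suff (p q p' : ℝ) (h : p.HolderConjugate p') (hpq : p ≤ q) (U V : ℝ → ℝ≥0∞)
    (hU : Measurable U) (hV : Measurable V) (hUt : ∀ t, U t ≠ ∞)
    (hVt : ∀ t, V t ≠ ∞) (M : ℝ≥0∞) (hMt : M ≠ ∞)
    (hM : ∀ s : ℝ, 0 < s → (∫⁻ t in Ioo (0:ℝ) s, U t ^ q) ^ (1/q) *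
      (∫⁻ t in Ioi s, V t ^ (-p')) ^ (1/p') ≤ M)
    (F : ℝ → ℝ) (hFm : Measurable F) (hF0 : ∀ t, 0 ≤ F t) :
    ∫⁻ t in Ioi (0:ℝ), (U t * ∫⁻ s in Ioi t, ENNReal.ofReal (F s)) ^ q ≤
      (4 * M) ^ q * (∫⁻ t in Ioi (0:ℝ), (V t * ENNReal.ofReal (F t)) ^ p) ^ (q/p) := by
  have hp : 0 < p := h.pos
  have hq : 0 < q := by linarith
  set G : ℕ → ℝ → ℝ := fun n => (Icc (-(n:ℝ)) n).indicator (fun t => min (F t) n) with hG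
  have hGm : ∀ n, Measurable (G n) := fun n =>
    (hFm.min measurable_const).indicator measurableSet_Icc
  have hG0 : ∀ n t, 0 ≤ G n t := fun n t =>
    indicator_nonneg (fun s _ => le_min (hF0 s) (Nat.cast_nonneg n)) t
  have hGF : ∀ n t, G n t ≤ F t := fun n t =>
    indicator_le' (fun s _ => min_le_left _ _) (fun s _ => hF0 s) t
  have hGi : ∀ n, Integrable (G n) := fun n => by
    refine Integrable.mono' (g := (Icc (-(n:ℝ)) n).indicator (fun t => (n:ℝ))) ?_
      (hGm n).aestronglyMeasurable (Filter.Eventually.of_forall fun t => ?_)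
    · rw [integrable_indicator_iff measurableSet_Icc]
      exact integrableOn_const (by simp) (by simp)
    · rw [Real.norm_of_nonneg (hG0 n t)]
      exact indicator_le_indicator (min_le_right _ _)
  have hmono : ∀ t, Monotone fun n => G n t := fun t m n hmn => by
    have hc : (m:ℝ) ≤ n := by exact_mod_cast hmn
    simp only [hG, indicator_apply]
    split_ifs with h1 h2
    · exact min_le_min le_rfl hc
    · exact absurd ⟨by linarith [h1.1], h1.2.trans hc⟩ h2
    · exact le_min (hF0 t) (Nat.cast_nonneg n)
    · exact le_rfl
  have hlim : ∀ t, Filter.Tendsto (fun n => G n t) Filter.atTop (nhds (F t)) := fun t => by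
    refine tendsto_const_nhds.congr' ?_
    obtain ⟨m, hm⟩ := exists_nat_ge (max (F t) |t|)
    filter_upwards [Filter.eventually_ge_atTop m] with n hn
    have hc : (m:ℝ) ≤ n := by exact_mod_cast hn
    have h1 : F t ≤ n := (le_max_left _ _).trans (hm.trans hc)
    have h2 : |t| ≤ n := (le_max_right _ _).trans (hm.trans hc)
    simp only [hG]
    rw [indicator_of_mem (show t ∈ Icc (-(n:ℝ)) n from abs_le.1 h2), min_eq_left h1]
  have hΦm : ∀ g : ℝ → ℝ, Measurable fun t => ∫⁻ s in Ioi t, ENNReal.ofReal (g s) := fun g =>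
    Antitone.measurable fun a b hab => lintegral_mono_set (Ioi_subset_Ioi hab)
  have hΦlim : ∀ t, Filter.Tendsto (fun n => ∫⁻ s in Ioi t, ENNReal.ofReal (G n s)) Filter.atTop
      (nhds (∫⁻ s in Ioi t, ENNReal.ofReal (F s))) := fun t =>
    lintegral_tendsto_of_tendsto_of_monotone (fun n => (hGm n).ennreal_ofReal.aemeasurable)
      (Filter.Eventually.of_forall fun s m n hmn => ENNReal.ofReal_le_ofReal (hmono s hmn))
      (Filter.Eventually.of_forall fun s => ENNReal.tendsto_ofReal (hlim s))
  have hL : Filter.Tendsto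
      (fun n => ∫⁻ t in Ioi (0:ℝ), (U t * ∫⁻ s in Ioi t, ENNReal.ofReal (G n s)) ^ q) Filter.atTop
      (nhds (∫⁻ t in Ioi (0:ℝ), (U t * ∫⁻ s in Ioi t, ENNReal.ofReal (F s)) ^ q)) := by
    refine lintegral_tendsto_of_tendsto_of_monotone
      (fun n => ((hU.mul (hΦm _)).pow_const _).aemeasurable)
      (Filter.Eventually.of_forall fun t m n hmn => ?_)
      (Filter.Eventually.of_forall fun t => ?_)
    · refine ENNReal.rpow_le_rpow (mul_le_mul_right (lintegral_mono fun s => ?_) _) hq.le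
      exact ENNReal.ofReal_le_ofReal (hmono s hmn)
    · exact (ENNReal.continuous_rpow_const.tendsto _).comp
        (ENNReal.Tendsto.const_mul (hΦlim t) (Or.inr (hUt t)))
  refine le_of_tendsto hL (Filter.eventually_atTop.2 ⟨1, fun n hn => ?_⟩)
  have hn' : (0:ℝ) < n := by exact_mod_cast hn
  refine (aux_cut p q p' h hpq U V hU hV hVt M hMt hM (G n) (hGm n) (hG0 n) (hGi n) n hn'
    (fun t ht => indicator_of_notMem (fun hc => absurd hc.2 (not_le.2 ht)) _)).trans ?_
  gcongr
  exact hGF n _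

lemma aux_nec (p q p' : ℝ) (h : p.HolderConjugate p') (hpq : p ≤ q) (U V : ℝ → ℝ≥0∞)
    (hU : Measurable U) (hV : Measurable V) (C : ℝ≥0∞)
    (hC : ∀ F : ℝ → ℝ, Measurable F → (∀ t, 0 ≤ F t) →
      (∫⁻ t in Ioi (0:ℝ), (U t * ∫⁻ s in Ioi t, ENNReal.ofReal (F s)) ^ q) ^ (1/q)
        ≤ C * (∫⁻ t in Ioi (0:ℝ), (V t * ENNReal.ofReal (F t)) ^ p) ^ (1/p))
    (s : ℝ) (hs : 0 < s) : (∫⁻ t in Ioo (0:ℝ) s, U t ^ q) ^ (1/q) *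
      (∫⁻ t in Ioi s, V t ^ (-p')) ^ (1/p') ≤ C := by
  have hp : 0 < p := h.pos
  have hp1 : 1 < p := h.lt
  have hp' : 0 < p' := h.symm.pos
  have hq : 0 < q := by linarith
  set E : ℕ → ℝ → ℝ≥0∞ := fun n => (Ioc s n).indicator (fun t => min (V t ^ (-p')) n) with hE
  have hEm : ∀ n, Measurable (E n) := fun n =>
    ((hV.pow_const _).min measurable_const).indicator measurableSet_Ioc
  have hEn : ∀ n t, E n t ≤ n := fun n t =>
    indicator_le' (fun s _ => min_le_right _ _) (fun s _ => zero_le) t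
  have hEt : ∀ n t, E n t ≠ ∞ := fun n t => ne_top_of_le_ne_top (ENNReal.natCast_ne_top n) (hEn n t)
  have hEV : ∀ n t, E n t ≤ V t ^ (-p') := fun n t =>
    indicator_le' (fun s _ => min_le_left _ _) (fun s _ => zero_le) t
  have hmono : ∀ t, Monotone fun n => E n t := fun t m n hmn => by
    have hc : (m:ℝ) ≤ n := by exact_mod_cast hmn
    have hc' : (m:ℝ≥0∞) ≤ n := by exact_mod_cast hmn
    simp only [hE, indicator_apply]
    split_ifs with h1 h2
    · exact min_le_min le_rfl hc'
    · exact absurd ⟨h1.1, h1.2.trans hc⟩ h2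
    · exact zero_le
    · exact le_rfl
  have hlim : Filter.Tendsto (fun n => ∫⁻ t in Ioi s, E n t) Filter.atTop
      (nhds (∫⁻ t in Ioi s, V t ^ (-p'))) := by
    refine lintegral_tendsto_of_tendsto_of_monotone (fun n => (hEm n).aemeasurable)
      (Filter.Eventually.of_forall hmono) ?_
    filter_upwards [self_mem_ae_restrict measurableSet_Ioi] with t ht
    have h1 : Filter.Tendsto (fun n : ℕ => min (V t ^ (-p')) (n:ℝ≥0∞)) Filter.atTop
        (nhds (min (V t ^ (-p')) ∞)) := tendsto_const_nhds.min ENNReal.tendsto_nat_nhds_top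
    rw [min_eq_left le_top] at h1
    refine h1.congr' ?_
    obtain ⟨m, hm⟩ := exists_nat_ge t
    filter_upwards [Filter.eventually_ge_atTop m] with n hn
    have hc : (m:ℝ) ≤ n := by exact_mod_cast hn
    simp only [hE]
    rw [indicator_of_mem (show t ∈ Ioc s (n:ℝ) from ⟨ht, hm.trans hc⟩)]
  have hbound : ∀ n, (∫⁻ t in Ioo (0:ℝ) s, U t ^ q) ^ (1/q) *
      (∫⁻ t in Ioi s, E n t) ^ (1/p') ≤ C := by
    intro n
    have h1 := hC (fun t => (E n t).toReal) (hEm n).ennreal_toReal (fun t => ENNReal.toReal_nonneg)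
    simp only [ENNReal.ofReal_toReal (hEt n _)] at h1
    set b := ∫⁻ t in Ioi s, E n t with hb
    have hbt : b ≠ ∞ := by
      have : b ≤ ∫⁻ t in Ioi s, (Ioc s (n:ℝ)).indicator (fun _ => (n:ℝ≥0∞)) t :=
        lintegral_mono fun t => indicator_le_indicator (min_le_right _ _)
      refine ne_top_of_le_ne_top ?_ (this.trans (setLIntegral_le_lintegral _ _))
      rw [lintegral_indicator measurableSet_Ioc, setLIntegral_const, Real.volume_Ioc]
      exact ENNReal.mul_ne_top (ENNReal.natCast_ne_top n) ENNReal.ofReal_ne_top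
    have hl : (∫⁻ t in Ioo (0:ℝ) s, U t ^ q) ^ (1/q) * b ≤
        (∫⁻ t in Ioi (0:ℝ), (U t * ∫⁻ r in Ioi t, E n r) ^ q) ^ (1/q) := by
      have : b = (b ^ q) ^ (1/q) := by
        rw [← ENNReal.rpow_mul, mul_one_div_cancel hq.ne', ENNReal.rpow_one]
      rw [this, ← ENNReal.mul_rpow_of_nonneg _ _ (by positivity),
        ← lintegral_mul_const _ (hU.pow_const _)]
      refine ENNReal.rpow_le_rpow ?_ (by positivity)
      refine le_trans ?_ (lintegral_mono_set (show Ioo 0 s ⊆ Ioi 0 from Ioo_subset_Ioi_self))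
      refine setLIntegral_mono' measurableSet_Ioo fun t ht => ?_
      rw [← ENNReal.mul_rpow_of_nonneg _ _ hq.le]
      refine ENNReal.rpow_le_rpow (mul_le_mul_right ?_ _) hq.le
      exact lintegral_mono_set (Ioi_subset_Ioi ht.2.le)
    have hr : ∫⁻ t in Ioi (0:ℝ), (V t * E n t) ^ p ≤ b := by
      have e1 : b = ∫⁻ t in Ioi (0:ℝ), E n t := by
        have : ∀ S : Set ℝ, Ioi s ⊆ S → ∫⁻ t in S, E n t = ∫⁻ t in Ioc s (n:ℝ), min (V t ^ (-p')) n :=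
          fun S hS => by
            simp only [hE]
            rw [lintegral_indicator measurableSet_Ioc, Measure.restrict_restrict measurableSet_Ioc,
              inter_eq_left.2 (Ioc_subset_Ioi_self.trans hS)]
        rw [hb, this _ le_rfl, this _ (Ioi_subset_Ioi hs.le)]
      rw [e1]
      refine lintegral_mono fun t => ?_
      by_cases hv0 : V t = 0
      · simp [hv0, ENNReal.zero_rpow_of_pos hp]
      have hpp : p' * (p - 1) = p := by
        have := h.symm.sub_one_mul_conj
        have h2 := h.sub_one_mul_conj
        linarith
      have e2 : E n t ^ p = E n t ^ (p-1) * E n t := by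
        conv_lhs => rw [show p = (p - 1) + 1 by ring]
        rw [ENNReal.rpow_add_of_nonneg _ _ (by linarith) (by norm_num), ENNReal.rpow_one]
      have e3 : E n t ^ (p-1) ≤ V t ^ (-p) := by
        refine (ENNReal.rpow_le_rpow (hEV n t) (by linarith)).trans ?_
        rw [← ENNReal.rpow_mul, neg_mul, hpp]
      rw [ENNReal.mul_rpow_of_nonneg _ _ hp.le, e2, ← mul_assoc]
      calc _ ≤ V t ^ p * V t ^ (-p) * E n t := by gcongr
        _ ≤ 1 * E n t := by
          gcongr
          rw [ENNReal.rpow_neg]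
          exact ENNReal.mul_inv_le_one _
        _ = _ := one_mul _
    have h2 : (∫⁻ t in Ioo (0:ℝ) s, U t ^ q) ^ (1/q) * b ≤ C * b ^ (1/p) :=
      hl.trans (h1.trans (by gcongr))
    by_cases hb0 : b = 0
    · rw [hb0, ENNReal.zero_rpow_of_pos (by positivity), mul_zero]; exact zero_le
    have e4 : b = b ^ (1/p') * b ^ (1/p) := by
      rw [← ENNReal.rpow_add _ _ hb0 hbt]
      have := h.symm.inv_add_inv_eq_one
      rw [one_div, one_div, this, ENNReal.rpow_one]
    have hn0 : b ^ (1/p) ≠ 0 := by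
      rw [ne_eq, ENNReal.rpow_eq_zero_iff_of_pos (by positivity)]; exact hb0
    have hnt : b ^ (1/p) ≠ ∞ := ENNReal.rpow_ne_top_of_nonneg (by positivity) hbt
    nth_rw 1 [e4] at h2
    rw [← mul_assoc] at h2
    exact (ENNReal.mul_le_mul_iff_left hn0 hnt).1 h2
  -- pass to the limit
  by_cases hA : (∫⁻ t in Ioo (0:ℝ) s, U t ^ q) ^ (1/q) = 0
  · rw [hA, zero_mul]; exact zero_le
  have hB0 : ∀ c : ℝ≥0∞, (∀ n, (∫⁻ t in Ioi s, E n t) ^ (1/p') ≤ c) →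
      (∫⁻ t in Ioi s, V t ^ (-p')) ^ (1/p') ≤ c := fun c hc =>
    le_of_tendsto' ((ENNReal.continuous_rpow_const.tendsto _).comp hlim) hc
  have hsup : (∫⁻ t in Ioi s, V t ^ (-p')) ^ (1/p') ≤ ⨆ n, (∫⁻ t in Ioi s, E n t) ^ (1/p') :=
    hB0 _ fun n => le_iSup (fun n => (∫⁻ t in Ioi s, E n t) ^ (1/p')) n
  refine (mul_le_mul_right hsup _).trans ?_
  rw [ENNReal.mul_iSup]
  exact iSup_le hbound



/-- dual weighted Hardy inequality of Muckenhoupt and Bradley. For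
`1 < p ≤ q < ∞`, the inequality
`(∫₀^∞ (u(t) ∫_t^∞ F)^q dt)^{1/q} ≤ C (∫₀^∞ (v F)^p dt)^{1/p}` holds for all non-negative
measurable `F` iff `sup_{s>0} (∫₀^s u^q)^{1/q} (∫_s^∞ v^{-p'})^{1/p'} < ∞`. -/
theorem stmt4 (p q p' : ℝ) (hp : 1 < p) (hpq : p ≤ q) (hp'def : p' = p / (p - 1))
    (u v : ℝ → ℝ) (hu : Measurable u) (hv : Measurable v)
    (hu0 : ∀ t ∈ Ioi (0:ℝ), 0 ≤ u t) (hv0 : ∀ t ∈ Ioi (0:ℝ), 0 ≤ v t) :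
    (∃ C : ℝ, 0 < C ∧ ∀ F : ℝ → ℝ, Measurable F → (∀ t, 0 ≤ F t) →
      (∫⁻ t in Ioi (0:ℝ),
          (ENNReal.ofReal (u t) * ∫⁻ s in Ioi t, ENNReal.ofReal (F s)) ^ q) ^ (1/q)
        ≤ ENNReal.ofReal C *
          (∫⁻ t in Ioi (0:ℝ), (ENNReal.ofReal (v t) * ENNReal.ofReal (F t)) ^ p) ^ (1/p))
    ↔ (∃ M : ℝ, ∀ s : ℝ, 0 < s →
      (∫⁻ t in Ioo (0:ℝ) s, ENNReal.ofReal (u t) ^ q) ^ (1/q) *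
      (∫⁻ t in Ioi s, ENNReal.ofReal (v t) ^ (-p')) ^ (1/p')
        ≤ ENNReal.ofReal M) := by

  have h : p.HolderConjugate p' := by
    rw [Real.holderConjugate_iff_eq_conjExponent hp]; exact hp'def
  have hq : 0 < q := by linarith
  have hU : Measurable fun t => ENNReal.ofReal (u t) := hu.ennreal_ofReal
  have hV : Measurable fun t => ENNReal.ofReal (v t) := hv.ennreal_ofReal
  constructor
  · rintro ⟨C, -, hC⟩
    exact ⟨C, fun s hs => aux_nec p q p' h hpq _ _ hU hV _ hC s hs⟩
  · rintro ⟨M, hM⟩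
    refine ⟨4 * max M 1, by positivity, fun F hF hF0 => ?_⟩
    have := aux_suff p q p' h hpq _ _ hU hV (fun _ => ENNReal.ofReal_ne_top)
      (fun _ => ENNReal.ofReal_ne_top) (ENNReal.ofReal (max M 1)) ENNReal.ofReal_ne_top
      (fun s hs => (hM s hs).trans (ENNReal.ofReal_le_ofReal (le_max_left _ _))) F hF hF0
    refine (ENNReal.rpow_le_rpow this (show 0 ≤ 1/q by positivity)).trans ?_
    rw [ENNReal.mul_rpow_of_nonneg _ _ (by positivity), ← ENNReal.rpow_mul, ← ENNReal.rpow_mul,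
      mul_one_div_cancel hq.ne', ENNReal.rpow_one, ENNReal.ofReal_mul (by norm_num),
      show q / p * (1 / q) = 1 / p by field_simp]
    simp
end

section
/- Let m₁, m₂ ≥ 1 be integers and let 0 < θ₀ < π/2 be fixed. Then for every λ ∈ ℝ and t > 0 with |λ| t ≤ θ₀ one has cos(θ₀) · Φ(0, t) ≤ Φ(λ, t) ≤ Φ(0, t); in particular Φ(λ, t) ≍ Φ(0, t) with constants depending only on θ₀, m₁, m₂ whenever |λ t| ≤ θ₀. -/
open Set intervalIntegral

/-- The density `Δ(t) = (2 sinh t)^{m₁+m₂} (2 cosh t)^{m₂}`. -/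
noncomputable def Δ (m₁ m₂ : ℕ) (t : ℝ) : ℝ :=
  (2 * Real.sinh t) ^ (m₁ + m₂) * (2 * Real.cosh t) ^ m₂

/-- The constant `c₀ = √π 2^{m₂/2-2} Γ((n-1)/2)/Γ(n/2)`, `n = m₁+m₂+1`. -/
noncomputable def c₀ (m₁ m₂ : ℕ) : ℝ :=
  Real.sqrt Real.pi * 2 ^ ((m₂ : ℝ)/2 - 2) *
    Real.Gamma (((m₁ : ℝ) + m₂ + 1 - 1)/2) / Real.Gamma (((m₁ : ℝ) + m₂ + 1)/2)

/-- The Koornwinder integral representation of the elementary spherical function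
`φ_λ(a_t)`, for real `λ` (where it is real-valued). -/
noncomputable def PhiR (m₁ m₂ : ℕ) (lam t : ℝ) : ℝ :=
  (c₀ m₁ m₂ * Real.sinh (2*t) / Δ m₁ m₂ t) *
    ∫ s in (0:ℝ)..t, (Real.cosh (2*t) - Real.cosh (2*s)) ^ ((m₂ : ℝ)/2 - 1) *
      (∫ r in (0:ℝ)..s, (Real.cosh s - Real.cosh r) ^ ((m₁ : ℝ)/2 - 1) * Real.cos (lam * r)) *
      Real.sinh s

lemma aux_cosh {s u : ℝ} (hs : 0 < s) (hu : 0 ≤ u) (hu1 : u < 1) :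
    s ^ 2 * ((1 - u) * (1 / 2)) ≤ Real.cosh s - Real.cosh (s * u) := by
  have e : Real.cosh s - Real.cosh (s * u)
      = 2 * (Real.sinh (s * (1 + u) / 2) * Real.sinh (s * (1 - u) / 2)) := by
    have h1 : s = s * (1 + u) / 2 + s * (1 - u) / 2 := by ring
    have h2 : s * u = s * (1 + u) / 2 - s * (1 - u) / 2 := by ring
    have h3 := Real.cosh_add (s * (1 + u) / 2) (s * (1 - u) / 2)
    have h4 := Real.cosh_sub (s * (1 + u) / 2) (s * (1 - u) / 2)
    rw [← h1] at h3
    rw [← h2] at h4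
    rw [h3, h4]; ring
  rw [e]
  have p0 : 0 ≤ s * (1 + u) / 2 := by positivity
  have q0 : 0 ≤ s * (1 - u) / 2 := by
    have : 0 ≤ 1 - u := by linarith
    positivity
  have a1 := Real.self_le_sinh_iff.2 p0
  have a2 := Real.self_le_sinh_iff.2 q0
  have a3 := mul_le_mul a1 a2 q0 (p0.trans a1)
  have : 0 ≤ s ^ 2 * u * (1 - u) := by
    have : 0 ≤ 1 - u := by linarith
    positivity
  nlinarith

lemma aux_bound {s u T a : ℝ} (ha : -(1/2) ≤ a) (hs : 0 < s) (hsT : s ≤ T) (hu : 0 ≤ u)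
    (hu1 : u < 1) :
    s * (Real.cosh s - Real.cosh (s * u)) ^ a ≤
      (Real.cosh T) ^ (a + 1/2) * (1/2 : ℝ) ^ (-(1/2) : ℝ) * (1 - u) ^ (-(1/2) : ℝ) := by
  have h1 := aux_cosh hs hu hu1
  have hu2 : 0 < 1 - u := by linarith
  have hy : 0 < s ^ 2 * ((1 - u) * (1 / 2)) := by positivity
  set x := Real.cosh s - Real.cosh (s * u) with hx
  have hx0 : 0 < x := hy.trans_le h1
  have hxT : x ≤ Real.cosh T := by
    have := Real.cosh_pos (s * u)
    have : Real.cosh s ≤ Real.cosh T := Real.cosh_le_cosh.2 (by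
      rw [abs_of_pos hs, abs_of_pos (hs.trans_le hsT)]; exact hsT)
    linarith
  have e1 : x ^ a = x ^ (-(1/2) : ℝ) * x ^ (a + 1/2) := by
    rw [← Real.rpow_add hx0]; congr 1; ring
  have e2 : x ^ (-(1/2) : ℝ) ≤ (s ^ 2 * ((1 - u) * (1 / 2))) ^ (-(1/2) : ℝ) :=
    Real.rpow_le_rpow_of_nonpos hy h1 (by norm_num)
  have e3 : x ^ (a + 1/2) ≤ (Real.cosh T) ^ (a + 1/2) :=
    Real.rpow_le_rpow hx0.le hxT (by linarith)
  have e4 : (s ^ 2 * ((1 - u) * (1 / 2))) ^ (-(1/2) : ℝ)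
      = s⁻¹ * ((1 - u) ^ (-(1/2) : ℝ) * (1/2 : ℝ) ^ (-(1/2) : ℝ)) := by
    rw [Real.mul_rpow (by positivity) (by positivity), Real.mul_rpow (by positivity) (by positivity)]
    congr 1
    rw [← Real.rpow_natCast, ← Real.rpow_mul hs.le, ← Real.rpow_neg_one]
    norm_num
  rw [e1]
  have e5 := mul_le_mul e2 e3 (by positivity) (by positivity)
  rw [e4] at e5
  calc s * _ ≤ s * _ := mul_le_mul_of_nonneg_left e5 hs.le
    _ = _ := by field_simp

lemma aux_int : IntervalIntegrable (fun u : ℝ => (1 - u) ^ (-(1/2) : ℝ)) MeasureTheory.volume 0 1 := by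
  have := (intervalIntegral.intervalIntegrable_rpow' (a := 0) (b := 1) (r := (-(1/2):ℝ)) (by norm_num)).comp_sub_left 1
  simpa using this.symm

lemma aux_ae (P : ℝ → Prop) (h : ∀ u, 0 ≤ u → u < 1 → P u) :
    ∀ᵐ u ∂(MeasureTheory.volume : MeasureTheory.Measure ℝ), u ∈ Set.Ioc (0:ℝ) 1 → P u := by
  have : ∀ᵐ u ∂(MeasureTheory.volume : MeasureTheory.Measure ℝ), u ≠ 1 := by
    simp [MeasureTheory.ae_iff]
  filter_upwards [this] with u hu hm
  exact h u hm.1.le (lt_of_le_of_ne hm.2 hu)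

lemma aux_norm {s u T a v : ℝ} (ha : -(1/2) ≤ a) (hs : 0 < s) (hsT : s ≤ T) (hu : 0 ≤ u)
    (hu1 : u < 1) :
    ‖s * ((Real.cosh s - Real.cosh (s * u)) ^ a * Real.cos v)‖ ≤
      (Real.cosh T) ^ (a + 1/2) * (1/2 : ℝ) ^ (-(1/2) : ℝ) * (1 - u) ^ (-(1/2) : ℝ) := by
  have h := aux_bound ha hs hsT hu hu1
  have h1 := aux_cosh hs hu hu1
  have h2 : 0 ≤ s ^ 2 * ((1 - u) * (1 / 2)) := by
    have : 0 ≤ 1 - u := by linarith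
    positivity
  have h3 : 0 ≤ s * (Real.cosh s - Real.cosh (s * u)) ^ a :=
    mul_nonneg hs.le (Real.rpow_nonneg (h2.trans h1) _)
  rw [← mul_assoc, norm_mul, Real.norm_of_nonneg h3]
  calc _ ≤ s * (Real.cosh s - Real.cosh (s * u)) ^ a * 1 :=
        mul_le_mul_of_nonneg_left (Real.abs_cos_le_one v) h3
    _ ≤ _ := by rw [mul_one]; exact h

/-- inner integrability -/
lemma aux_inner_int {s a l : ℝ} (ha : -(1/2) ≤ a) (hs : 0 ≤ s) :
    IntervalIntegrable (fun r => (Real.cosh s - Real.cosh r) ^ a * Real.cos (l * r))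
      MeasureTheory.volume 0 s := by
  rcases hs.eq_or_lt with rfl | hs
  · simp
  have h : IntervalIntegrable (fun u => s * ((Real.cosh s - Real.cosh (s * u)) ^ a * Real.cos (l * (s * u))))
      MeasureTheory.volume 0 1 := by
    refine (aux_int.const_mul ((Real.cosh s) ^ (a + 1/2) * (1/2 : ℝ) ^ (-(1/2) : ℝ))).mono_fun' ?_ ?_
    · exact (by fun_prop : Measurable _).aestronglyMeasurable
    · rw [Set.uIoc_of_le zero_le_one]
      refine (MeasureTheory.ae_restrict_iff' measurableSet_Ioc).2 (aux_ae _ ?_)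
      intro u hu hu1
      exact aux_norm ha hs le_rfl hu hu1
  have h' := (h.const_mul s⁻¹).comp_mul_left (c := s⁻¹)
  have e : (fun x => s⁻¹ * (s * ((Real.cosh s - Real.cosh (s * (s⁻¹ * x))) ^ a * Real.cos (l * (s * (s⁻¹ * x))))))
      = fun r => (Real.cosh s - Real.cosh r) ^ a * Real.cos (l * r) := by
    funext x
    field_simp
  rw [e] at h'
  simpa using h'

lemma aux_w_int {t a : ℝ} (ha : -(1/2) ≤ a) (ht : 0 ≤ t) :
    IntervalIntegrable (fun s => (Real.cosh (2 * t) - Real.cosh (2 * s)) ^ a)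
      MeasureTheory.volume 0 t := by
  have h := (aux_inner_int (l := 0) ha (by positivity : 0 ≤ 2 * t)).comp_mul_left (c := 2)
  simpa using h

noncomputable def auxI (a l s : ℝ) : ℝ :=
  ∫ r in (0:ℝ)..s, (Real.cosh s - Real.cosh r) ^ a * Real.cos (l * r)

lemma auxI_eq (a l s : ℝ) : auxI a l s =
    ∫ u in (0:ℝ)..1, s * ((Real.cosh s - Real.cosh (s * u)) ^ a * Real.cos (l * (s * u))) := by
  have := intervalIntegral.mul_integral_comp_mul_left (a := 0) (b := 1)
    (f := fun r => (Real.cosh s - Real.cosh r) ^ a * Real.cos (l * r)) s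
  rw [mul_zero, mul_one] at this
  rw [intervalIntegral.integral_const_mul, this, auxI]

lemma auxI_meas (a l : ℝ) : MeasureTheory.StronglyMeasurable (auxI a l) := by
  have : auxI a l = fun s => ∫ u in Set.Ioc (0:ℝ) 1,
      s * ((Real.cosh s - Real.cosh (s * u)) ^ a * Real.cos (l * (s * u))) := by
    funext s
    rw [auxI_eq, intervalIntegral.integral_of_le zero_le_one]
  rw [this]
  refine MeasureTheory.StronglyMeasurable.integral_prod_right
    (f := fun s u => s * ((Real.cosh s - Real.cosh (s * u)) ^ a * Real.cos (l * (s * u)))) ?_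
  refine Measurable.stronglyMeasurable ?_
  unfold Function.uncurry
  fun_prop

lemma auxI_bdd {a : ℝ} (ha : -(1/2) ≤ a) (l T : ℝ) : ∃ C, ∀ s, 0 < s → s ≤ T → ‖auxI a l s‖ ≤ C := by
  refine ⟨∫ u in (0:ℝ)..1, (Real.cosh T) ^ (a + 1/2) * (1/2 : ℝ) ^ (-(1/2) : ℝ) * (1 - u) ^ (-(1/2) : ℝ),
    fun s hs hsT => ?_⟩
  rw [auxI_eq]
  refine intervalIntegral.norm_integral_le_of_norm_le zero_le_one ?_
    (aux_int.const_mul ((Real.cosh T) ^ (a + 1/2) * (1/2 : ℝ) ^ (-(1/2) : ℝ)))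
  exact aux_ae _ fun u hu hu1 => aux_norm ha hs hsT hu hu1

lemma aux_w_nonneg {s t : ℝ} (b : ℝ) (hs : 0 ≤ s) (hst : s ≤ t) :
    0 ≤ (Real.cosh t - Real.cosh s) ^ b := by
  refine Real.rpow_nonneg (sub_nonneg.2 (Real.cosh_le_cosh.2 ?_)) _
  rw [abs_of_nonneg hs, abs_of_nonneg (hs.trans hst)]; exact hst

lemma aux_outer {a b t : ℝ} (ha : -(1/2) ≤ a) (hb : -(1/2) ≤ b) (ht : 0 < t) (l : ℝ) :
    IntervalIntegrable (fun s => (Real.cosh (2 * t) - Real.cosh (2 * s)) ^ b * auxI a l s * Real.sinh s)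
      MeasureTheory.volume 0 t := by
  obtain ⟨C, hC⟩ := auxI_bdd ha l t
  refine ((aux_w_int hb ht.le).mul_const (C * Real.sinh t)).mono_fun' ?_ ?_
  · have := (auxI_meas a l).measurable
    exact (by fun_prop : Measurable _).aestronglyMeasurable
  · rw [Set.uIoc_of_le ht.le]
    refine (MeasureTheory.ae_restrict_iff' measurableSet_Ioc).2 (Filter.Eventually.of_forall ?_)
    rintro s ⟨hs, hst⟩
    have hw := aux_w_nonneg b (by linarith : 0 ≤ 2 * s) (by linarith : 2 * s ≤ 2 * t)
    have h0 : 0 ≤ Real.sinh s := Real.sinh_nonneg_iff.2 hs.le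
    have hC1 := hC s hs hst
    show ‖_‖ ≤ _
    rw [mul_assoc, norm_mul, norm_mul, Real.norm_of_nonneg hw, Real.norm_of_nonneg h0]
    exact mul_le_mul_of_nonneg_left (mul_le_mul hC1 (Real.sinh_le_sinh.2 hst) h0
      ((norm_nonneg _).trans hC1)) hw

lemma PhiR_eq (m₁ m₂ : ℕ) (l t : ℝ) : PhiR m₁ m₂ l t =
    (c₀ m₁ m₂ * Real.sinh (2*t) / Δ m₁ m₂ t) * ∫ s in (0:ℝ)..t,
      (Real.cosh (2*t) - Real.cosh (2*s)) ^ ((m₂ : ℝ)/2 - 1) * auxI ((m₁ : ℝ)/2 - 1) l s *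
        Real.sinh s := rfl

/-- For `|λ| t ≤ θ₀ < π/2` one has
`cos θ₀ · φ₀(a_t) ≤ φ_λ(a_t) ≤ φ₀(a_t)`; in particular `φ_λ(a_t) ≍ φ₀(a_t)`. -/
theorem stmt5 (m₁ m₂ : ℕ) (hm₁ : 1 ≤ m₁) (hm₂ : 1 ≤ m₂)
    (θ₀ : ℝ) (hθ₀ : 0 < θ₀) (hθ₀' : θ₀ < Real.pi / 2) :
    ∀ lam t : ℝ, 0 < t → |lam| * t ≤ θ₀ →
      Real.cos θ₀ * PhiR m₁ m₂ 0 t ≤ PhiR m₁ m₂ lam t ∧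
      PhiR m₁ m₂ lam t ≤ PhiR m₁ m₂ 0 t := by
  intro lam t ht hlt
  have hm₁' : (1:ℝ) ≤ m₁ := by exact_mod_cast hm₁
  have hm₂' : (1:ℝ) ≤ m₂ := by exact_mod_cast hm₂
  have ha : -(1/2) ≤ (m₁ : ℝ)/2 - 1 := by linarith
  have hb : -(1/2) ≤ (m₂ : ℝ)/2 - 1 := by linarith
  have hK : 0 ≤ c₀ m₁ m₂ * Real.sinh (2*t) / Δ m₁ m₂ t := by
    have h1 : 0 < Real.sinh t := Real.sinh_pos_iff.2 ht
    have h2 : 0 < Real.sinh (2 * t) := Real.sinh_pos_iff.2 (by linarith)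
    have h3 : 0 < Real.Gamma (((m₁ : ℝ) + m₂ + 1 - 1)/2) := Real.Gamma_pos_of_pos (by linarith)
    have h4 : 0 < Real.Gamma (((m₁ : ℝ) + m₂ + 1)/2) := Real.Gamma_pos_of_pos (by linarith)
    have h5 := Real.cosh_pos t
    unfold c₀ Δ
    positivity
  have hcos : ∀ r, 0 ≤ r → r ≤ t → Real.cos θ₀ ≤ Real.cos (lam * r) := by
    intro r hr hrt
    rw [← Real.cos_abs (lam * r)]
    refine Real.cos_le_cos_of_nonneg_of_le_pi (abs_nonneg _) (by linarith) ?_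
    rw [abs_mul, abs_of_nonneg hr]
    exact (mul_le_mul_of_nonneg_left hrt (abs_nonneg _)).trans hlt
  simp only [PhiR_eq]
  constructor
  · rw [mul_left_comm]
    refine mul_le_mul_of_nonneg_left ?_ hK
    rw [← intervalIntegral.integral_const_mul]
    refine intervalIntegral.integral_mono_on ht.le ((aux_outer ha hb ht 0).const_mul _)
      (aux_outer ha hb ht lam) ?_
    rintro s ⟨hs, hst⟩
    have hw := aux_w_nonneg ((m₂ : ℝ)/2 - 1) (by linarith : 0 ≤ 2 * s) (by linarith : 2 * s ≤ 2 * t)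
    have h0 : 0 ≤ Real.sinh s := Real.sinh_nonneg_iff.2 hs
    have key : Real.cos θ₀ * auxI ((m₁ : ℝ)/2 - 1) 0 s ≤ auxI ((m₁ : ℝ)/2 - 1) lam s := by
      unfold auxI
      rw [← intervalIntegral.integral_const_mul]
      refine intervalIntegral.integral_mono_on hs ((aux_inner_int ha hs).const_mul _)
        (aux_inner_int ha hs) ?_
      rintro r ⟨hr, hrs⟩
      rw [zero_mul, Real.cos_zero, mul_one, mul_comm]
      exact mul_le_mul_of_nonneg_left (hcos r hr (hrs.trans hst)) (aux_w_nonneg _ hr hrs)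
    calc _ = (Real.cosh (2*t) - Real.cosh (2*s)) ^ ((m₂ : ℝ)/2 - 1) *
          (Real.cos θ₀ * auxI ((m₁ : ℝ)/2 - 1) 0 s) * Real.sinh s := by ring
      _ ≤ _ := mul_le_mul_of_nonneg_right (mul_le_mul_of_nonneg_left key hw) h0
  · refine mul_le_mul_of_nonneg_left ?_ hK
    refine intervalIntegral.integral_mono_on ht.le (aux_outer ha hb ht lam)
      (aux_outer ha hb ht 0) ?_
    rintro s ⟨hs, hst⟩
    have hw := aux_w_nonneg ((m₂ : ℝ)/2 - 1) (by linarith : 0 ≤ 2 * s) (by linarith : 2 * s ≤ 2 * t)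
    have h0 : 0 ≤ Real.sinh s := Real.sinh_nonneg_iff.2 hs
    refine mul_le_mul_of_nonneg_right (mul_le_mul_of_nonneg_left ?_ hw) h0
    unfold auxI
    refine intervalIntegral.integral_mono_on hs (aux_inner_int ha hs) (aux_inner_int ha hs) ?_
    rintro r ⟨hr, hrs⟩
    refine mul_le_mul_of_nonneg_left ?_ (aux_w_nonneg _ hr hrs)
    rw [zero_mul, Real.cos_zero]
    exact Real.cos_le_one _
end

section
/- Let m₁, m₂ ≥ 1 be integers, p ∈ [1, ∞], α > 0, and let 0 < θ₀ < π/2 be fixed. Let f : (0,∞) → [0,∞) be measurable, vanishing outside (0, α], and satisfying ∫₀^{α} f(t) Φ(iρ_p, t) Δ(t) dt < ∞. Then for every λ ∈ ℝ with |λ| α ≤ θ₀ one has cos(θ₀) · ∫₀^{α} f(t) Φ(iρ_p, t) Δ(t) dt ≤ | ∫₀^{α} f(t) Φ(λ + iρ_p, t) Δ(t) dt | ≤ ∫₀^{α} f(t) Φ(iρ_p, t) Δ(t) dt; in particular the spherical transform of f at λ + iρ_p is comparable, with constants depending only on θ₀, to ∫₀^{α} f(t) Φ(iρ_p, t) Δ(t)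 dt. -/
open Set intervalIntegral MeasureTheory

/-- The half-sum of positive roots `ρ = (m₁ + 2m₂)/2`. -/
noncomputable def ρ₀ (m₁ m₂ : ℕ) : ℝ := ((m₁ : ℝ) + 2 * m₂) / 2

/-- `ρ_p = (2/p - 1) ρ` for `p ∈ [1,∞]` (for `p = ∞` this is `-ρ`). -/
noncomputable def rhoP (m₁ m₂ : ℕ) (p : ENNReal) : ℝ := (2 / p.toReal - 1) * ρ₀ m₁ m₂

/-- The Koornwinder integral representation of the elementary spherical function
`φ_z(a_t)`, `z ∈ ℂ`. -/
noncomputable def PhiC (m₁ m₂ : ℕ) (z : ℂ) (t : ℝ) : ℂ :=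
  ((c₀ m₁ m₂ * Real.sinh (2*t) / Δ m₁ m₂ t : ℝ) : ℂ) *
    ∫ s in (0:ℝ)..t,
      (((Real.cosh (2*t) - Real.cosh (2*s)) ^ ((m₂ : ℝ)/2 - 1) : ℝ) : ℂ) *
      (∫ r in (0:ℝ)..s,
        (((Real.cosh s - Real.cosh r) ^ ((m₁ : ℝ)/2 - 1) : ℝ) : ℂ) * Complex.cos (z * r)) *
      ((Real.sinh s : ℝ) : ℂ)

lemma aux_meas {G : ℝ → ℝ → ℂ} (hG : Measurable (Function.uncurry G)) :
    Measurable (fun s => ∫ r in (0:ℝ)..s, G s r) := by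
  have h1 : MeasurableSet {q : ℝ × ℝ | q.2 ∈ Ioc 0 q.1} :=
    (measurableSet_lt measurable_const measurable_snd).inter
      (measurableSet_le measurable_snd measurable_fst)
  have h2 : MeasurableSet {q : ℝ × ℝ | q.2 ∈ Ioc q.1 0} :=
    (measurableSet_lt measurable_fst measurable_snd).inter
      (measurableSet_le measurable_snd measurable_const)
  have e1 : ∀ s, ∫ r in Ioc 0 s, G s r =
      ∫ r, ({q : ℝ × ℝ | q.2 ∈ Ioc 0 q.1}.indicator (Function.uncurry G)) (s, r) := by
    intro s
    rw [← MeasureTheory.integral_indicator measurableSet_Ioc]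
    rfl
  have e2 : ∀ s, ∫ r in Ioc s 0, G s r =
      ∫ r, ({q : ℝ × ℝ | q.2 ∈ Ioc q.1 0}.indicator (Function.uncurry G)) (s, r) := by
    intro s
    rw [← MeasureTheory.integral_indicator measurableSet_Ioc]
    rfl
  simp only [intervalIntegral, e1, e2]
  exact ((hG.indicator h1).stronglyMeasurable.integral_prod_right'.measurable).sub
    ((hG.indicator h2).stronglyMeasurable.integral_prod_right'.measurable)

lemma aux_int_s6 {S : Set ℝ} (hS : MeasurableSet S) {g : ℝ → ℂ} {k : ℝ → ℝ} {c : ℝ}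
    (hg : Measurable g) (hk : IntegrableOn k S)
    (h : ∀ s ∈ S, ‖g s‖ ≤ k s ∧ c * k s ≤ (g s).re) :
    ‖∫ s in S, g s‖ ≤ ∫ s in S, k s ∧ c * ∫ s in S, k s ≤ (∫ s in S, g s).re := by
  have hgi : IntegrableOn g S := by
    refine Integrable.mono' hk hg.aestronglyMeasurable ?_
    exact (ae_restrict_iff' hS).2 (Filter.Eventually.of_forall fun s hs => (h s hs).1)
  constructor
  · refine norm_integral_le_of_norm_le hk ?_
    exact (ae_restrict_iff' hS).2 (Filter.Eventually.of_forall fun s hs => (h s hs).1)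
  · have e : (∫ s in S, g s).re = ∫ s in S, (g s).re := by
      simpa using (integral_re (𝕜 := ℂ) hgi).symm
    rw [e, ← MeasureTheory.integral_const_mul]
    refine setIntegral_mono_on (hk.const_mul c) hgi.re hS (fun s hs => (h s hs).2)

lemma aux_cosh_s6 {x y : ℝ} (hy : 0 ≤ y) (hxy : y < x) :
    x / 2 * (x - y) ≤ Real.cosh x - Real.cosh y := by
  have e1 : Real.cosh x - Real.cosh y = 2 * Real.sinh ((x+y)/2) * Real.sinh ((x-y)/2) := by
    have ex : x = (x+y)/2 + (x-y)/2 := by ring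
    have ey : y = (x+y)/2 - (x-y)/2 := by ring
    conv_lhs => rw [ex, ey]
    ring_nf
    rw [show x * (1/2) + y * (1/2) = (x+y)/2 by ring] 
    have a := Real.cosh_add ((x+y)/2) ((x-y)/2)
    have b := Real.cosh_sub ((x+y)/2) ((x-y)/2)
    rw [← ex] at a
    rw [← ey] at b
    rw [show x * (1/2) + y * (-1/2) = (x-y)/2 by ring]
    linarith
  have h1 : (x+y)/2 ≤ Real.sinh ((x+y)/2) := Real.self_le_sinh_iff.2 (by linarith)
  have h2 : (x-y)/2 ≤ Real.sinh ((x-y)/2) := Real.self_le_sinh_iff.2 (by linarith)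
  have h3 := mul_le_mul h1 h2 (by linarith) (by linarith)
  rw [e1]
  nlinarith [mul_nonneg hy (sub_nonneg.2 hxy.le)]

lemma aux_w {m : ℕ} (hm : 1 ≤ m) {x y : ℝ} (hy : 0 ≤ y) (hxy : y < x) :
    (Real.cosh x - Real.cosh y) ^ ((m:ℝ)/2 - 1) ≤
      Real.cosh x ^ ((m:ℝ)/2 - 1) + (x/2) ^ (-(1/2):ℝ) * (x - y) ^ (-(1/2):ℝ) := by
  have hc := aux_cosh_s6 hy hxy
  have h0 : 0 < x / 2 * (x - y) := mul_pos (by linarith) (by linarith)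
  rw [← Real.mul_rpow (by linarith) (by linarith)]
  rcases hm.eq_or_lt with rfl | hm
  · have : ((1:ℕ):ℝ)/2 - 1 = -(1/2) := by norm_num
    rw [this]
    have := Real.rpow_le_rpow_of_nonpos h0 hc (by norm_num : (-(1/2):ℝ) ≤ 0)
    have := Real.rpow_nonneg (Real.cosh_pos x).le (-(1/2):ℝ)
    linarith
  · have hm' : (2:ℝ) ≤ m := by exact_mod_cast hm
    have := Real.rpow_le_rpow (h0.le.trans hc)
      (by linarith [Real.cosh_pos y] : Real.cosh x - Real.cosh y ≤ Real.cosh x)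
      (by linarith : 0 ≤ (m:ℝ)/2 - 1)
    have := Real.rpow_nonneg h0.le (-(1/2):ℝ)
    linarith

lemma aux_pow (s : ℝ) (hs : 0 < s) :
    IntegrableOn (fun r => (s - r) ^ (-(1/2):ℝ)) (Ioc 0 s) ∧
    ∫ r in Ioc 0 s, (s - r) ^ (-(1/2):ℝ) = 2 * s ^ ((1/2):ℝ) := by
  constructor
  · have h := (intervalIntegrable_rpow' (a := 0) (b := s) (r := (-(1/2):ℝ)) (by norm_num))
    have h2 := (h.comp_sub_left s).symm
    simp only [sub_zero, sub_self] at h2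
    exact (intervalIntegrable_iff_integrableOn_Ioc_of_le hs.le).1 h2
  · rw [← intervalIntegral.integral_of_le hs.le]
    rw [intervalIntegral.integral_comp_sub_left (fun r => r ^ (-(1/2):ℝ)) s]
    rw [sub_self, sub_zero, integral_rpow (Or.inl (by norm_num))]
    rw [Real.zero_rpow (by norm_num)]
    norm_num
    ring

lemma aux_wint {m : ℕ} (hm : 1 ≤ m) {x : ℝ} (hx : 0 < x) :
    IntegrableOn (fun y => (Real.cosh x - Real.cosh y) ^ ((m:ℝ)/2 - 1)) (Ioc 0 x) := by
  rw [integrableOn_Ioc_iff_integrableOn_Ioo]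
  have hb : IntegrableOn (fun y => Real.cosh x ^ ((m:ℝ)/2 - 1) +
      (x/2) ^ (-(1/2):ℝ) * (x - y) ^ (-(1/2):ℝ)) (Ioc 0 x) :=
    (integrableOn_const (by simp)).add ((aux_pow x hx).1.const_mul _)
  rw [integrableOn_Ioc_iff_integrableOn_Ioo] at hb
  refine Integrable.mono' hb (Measurable.aestronglyMeasurable (by fun_prop)) ?_
  refine (ae_restrict_iff' measurableSet_Ioo).2 (Filter.Eventually.of_forall fun y hy => ?_)
  have h0 : 0 < x / 2 * (x - y) := mul_pos (by linarith) (by linarith [hy.2])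
  rw [Real.norm_of_nonneg (Real.rpow_nonneg (h0.le.trans (aux_cosh_s6 hy.1.le hy.2)) _)]
  exact aux_w hm hy.1.le hy.2

lemma aux_wbd {m : ℕ} (hm : 1 ≤ m) {x : ℝ} (hx : 0 < x) :
    ∫ y in Ioc 0 x, (Real.cosh x - Real.cosh y) ^ ((m:ℝ)/2 - 1) ≤
      x * Real.cosh x ^ ((m:ℝ)/2 - 1) + 2 * 2 ^ ((1/2):ℝ) := by
  have hb : IntegrableOn (fun y => Real.cosh x ^ ((m:ℝ)/2 - 1) +
      (x/2) ^ (-(1/2):ℝ) * (x - y) ^ (-(1/2):ℝ)) (Ioc 0 x) :=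
    (integrableOn_const (by simp)).add ((aux_pow x hx).1.const_mul _)
  have h1 : ∫ y in Ioc 0 x, (Real.cosh x - Real.cosh y) ^ ((m:ℝ)/2 - 1) ≤
      ∫ y in Ioc 0 x, (Real.cosh x ^ ((m:ℝ)/2 - 1) +
      (x/2) ^ (-(1/2):ℝ) * (x - y) ^ (-(1/2):ℝ)) := by
    rw [integral_Ioc_eq_integral_Ioo, integral_Ioc_eq_integral_Ioo]
    refine setIntegral_mono_on ?_ ?_ measurableSet_Ioo (fun y hy => aux_w hm hy.1.le hy.2)
    · exact (aux_wint hm hx).mono_set Ioo_subset_Ioc_self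
    · exact hb.mono_set Ioo_subset_Ioc_self
  refine h1.trans (le_of_eq ?_)
  rw [MeasureTheory.integral_add (integrable_const _) ((aux_pow x hx).1.const_mul _),
    MeasureTheory.integral_const_mul, (aux_pow x hx).2]
  have : (x/2) ^ (-(1/2):ℝ) * (2 * x ^ ((1/2):ℝ)) = 2 * 2 ^ ((1/2):ℝ) := by
    rw [Real.div_rpow hx.le (by norm_num), Real.rpow_neg hx.le, Real.rpow_neg (by norm_num)]
    have := (Real.rpow_pos_of_pos hx (1/2)).ne'
    field_simp
  rw [this]
  simp [hx.le]

lemma aux_wnn (a : ℝ) {x y : ℝ} (hy : 0 ≤ y) (hxy : y ≤ x) :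
    0 ≤ (Real.cosh x - Real.cosh y) ^ a := by
  refine Real.rpow_nonneg (sub_nonneg.2 ?_) _
  rw [Real.cosh_le_cosh, abs_of_nonneg hy, abs_of_nonneg (hy.trans hxy)]
  exact hxy

lemma aux_cos {lam q r α θ₀ : ℝ} (hθ₀' : θ₀ < Real.pi / 2) (h : |lam| * α ≤ θ₀)
    (hr : 0 ≤ r) (hrα : r ≤ α) :
    ‖Complex.cos (((lam : ℂ) + Complex.I * (q : ℝ)) * r)‖ ≤ Real.cosh (q * r) ∧
    Real.cos θ₀ * Real.cosh (q * r) ≤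
      (Complex.cos (((lam : ℂ) + Complex.I * (q : ℝ)) * r)).re := by
  have e : Complex.cos (((lam : ℂ) + Complex.I * (q : ℝ)) * r) =
      ((Real.cos (lam * r) * Real.cosh (q * r) : ℝ) : ℂ)
        - ((Real.sin (lam * r) * Real.sinh (q * r) : ℝ) : ℂ) * Complex.I := by
    have : ((lam : ℂ) + Complex.I * (q : ℝ)) * r = (lam * r : ℝ) + (q * r : ℝ) * Complex.I := by
      push_cast; ring
    rw [this, Complex.cos_add_mul_I]
    push_cast; ring
  have hre : (Complex.cos (((lam : ℂ) + Complex.I * (q : ℝ)) * r)).re =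
      Real.cos (lam * r) * Real.cosh (q * r) := by
    rw [e, Complex.sub_re, Complex.re_ofReal_mul, Complex.ofReal_re]; simp
  have him : (Complex.cos (((lam : ℂ) + Complex.I * (q : ℝ)) * r)).im =
      - (Real.sin (lam * r) * Real.sinh (q * r)) := by
    rw [e, Complex.sub_im, Complex.im_ofReal_mul, Complex.ofReal_im]; simp
  constructor
  · refine abs_le_of_sq_le_sq' ?_ (Real.cosh_pos _).le |>.2
    rw [← Complex.normSq_eq_norm_sq, Complex.normSq_apply, hre, him]
    have h1 := Real.sin_sq_add_cos_sq (lam * r)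
    have h2 := Real.cosh_sq (q * r)
    have h3 : Real.sinh (q*r) ^ 2 = Real.cosh (q * r) ^ 2 - 1 := by linarith
    have h4 : Real.cos (lam*r) ^ 2 = 1 - Real.sin (lam * r) ^ 2 := by linarith
    calc _ = Real.cos (lam*r) ^ 2 * Real.cosh (q*r) ^ 2
          + Real.sin (lam*r) ^ 2 * Real.sinh (q*r) ^ 2 := by ring
      _ ≤ _ := by rw [h3, h4]; nlinarith [sq_nonneg (Real.sin (lam * r))]
  · rw [hre]
    refine mul_le_mul_of_nonneg_right ?_ (Real.cosh_pos _).le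
    rw [← Real.cos_abs (lam * r)]
    have hle : |lam * r| ≤ θ₀ := by
      rw [abs_mul, abs_of_nonneg hr]
      exact (mul_le_mul_of_nonneg_left hrα (abs_nonneg _)).trans h
    exact Real.cos_le_cos_of_nonneg_of_le_pi (abs_nonneg _) (by linarith [Real.pi_pos]) hle

lemma aux_step {w k c : ℝ} {g : ℂ} (hw : 0 ≤ w) (h : ‖g‖ ≤ k ∧ c * k ≤ g.re) :
    ‖(w : ℂ) * g‖ ≤ w * k ∧ c * (w * k) ≤ ((w : ℂ) * g).re := by
  constructor
  · rw [norm_mul, Complex.norm_real, Real.norm_of_nonneg hw]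
    exact mul_le_mul_of_nonneg_left h.1 hw
  · rw [Complex.re_ofReal_mul]
    nlinarith [mul_le_mul_of_nonneg_left h.2 hw]

/-- inner real integral -/
noncomputable def auxK (m₁ : ℕ) (q s : ℝ) : ℝ :=
  ∫ r in (0:ℝ)..s, (Real.cosh s - Real.cosh r) ^ ((m₁ : ℝ)/2 - 1) * Real.cosh (q * r)

/-- real version of the kernel -/
noncomputable def auxR (m₁ m₂ : ℕ) (q t : ℝ) : ℝ :=
  (c₀ m₁ m₂ * Real.sinh (2*t) / Δ m₁ m₂ t) *
    ∫ s in (0:ℝ)..t, (Real.cosh (2*t) - Real.cosh (2*s)) ^ ((m₂ : ℝ)/2 - 1) *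
      auxK m₁ q s * Real.sinh s

lemma aux_real (m₁ m₂ : ℕ) (q t : ℝ) :
    PhiC m₁ m₂ (Complex.I * (q : ℝ)) t = (auxR m₁ m₂ q t : ℂ) := by
  have hc : ∀ r : ℝ, Complex.cos (Complex.I * (q : ℝ) * r) = (Real.cosh (q * r) : ℂ) := by
    intro r
    rw [show Complex.I * (q : ℂ) * r = ((q * r : ℝ) : ℂ) * Complex.I by push_cast; ring,
      Complex.cos_mul_I, Complex.ofReal_cosh]
  unfold PhiC auxR auxK
  simp only [hc, ← Complex.ofReal_mul, intervalIntegral.integral_ofReal]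

lemma aux_measI (m₁ : ℕ) (z : ℂ) : Measurable (fun s : ℝ => ∫ r in (0:ℝ)..s,
        (((Real.cosh s - Real.cosh r) ^ ((m₁ : ℝ)/2 - 1) : ℝ) : ℂ) * Complex.cos (z * r)) := by
  refine aux_meas (G := fun s r => (((Real.cosh s - Real.cosh r) ^ ((m₁ : ℝ)/2 - 1) : ℝ) : ℂ)
    * Complex.cos (z * r)) ?_
  unfold Function.uncurry
  fun_prop

lemma aux_measP (m₁ m₂ : ℕ) (z : ℂ) : Measurable (PhiC m₁ m₂ z) := by
  unfold PhiC
  refine Measurable.mul ?_ ?_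
  · unfold Δ
    fun_prop
  · refine aux_meas (G := fun t s =>
      (((Real.cosh (2*t) - Real.cosh (2*s)) ^ ((m₂ : ℝ)/2 - 1) : ℝ) : ℂ) *
      (∫ r in (0:ℝ)..s,
        (((Real.cosh s - Real.cosh r) ^ ((m₁ : ℝ)/2 - 1) : ℝ) : ℂ) * Complex.cos (z * r)) *
      ((Real.sinh s : ℝ) : ℂ)) ?_
    have := (aux_measI m₁ z).comp (measurable_snd : Measurable (Prod.snd : ℝ × ℝ → ℝ))
    simp only [Function.comp_def] at this
    unfold Function.uncurry
    refine (Measurable.mul (by fun_prop) this).mul (by fun_prop)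

lemma aux_measK (m₁ : ℕ) (q : ℝ) : Measurable (auxK m₁ q) := by
  have h := Complex.measurable_re.comp (aux_measI m₁ (Complex.I * (q:ℝ)))
  convert h using 1
  ext s
  have hc : ∀ r : ℝ, Complex.cos (Complex.I * (q : ℝ) * r) = (Real.cosh (q * r) : ℂ) := by
    intro r
    rw [show Complex.I * (q : ℂ) * r = ((q * r : ℝ) : ℂ) * Complex.I by push_cast; ring,
      Complex.cos_mul_I, Complex.ofReal_cosh]
  simp only [auxK, Function.comp, hc, ← Complex.ofReal_mul, intervalIntegral.integral_ofReal,
    Complex.ofReal_re]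

lemma aux_Kint {m₁ : ℕ} (hm₁ : 1 ≤ m₁) (q : ℝ) {s : ℝ} (hs : 0 < s) :
    IntegrableOn (fun r => (Real.cosh s - Real.cosh r) ^ ((m₁ : ℝ)/2 - 1) * Real.cosh (q * r))
      (Ioc 0 s) := by
  have h := (intervalIntegrable_iff_integrableOn_Ioc_of_le hs.le).2 (aux_wint hm₁ hs)
  exact (intervalIntegrable_iff_integrableOn_Ioc_of_le hs.le).1
    (h.mul_continuousOn (g := fun r => Real.cosh (q * r)) (by fun_prop))

lemma aux_Kbd {m₁ : ℕ} (hm₁ : 1 ≤ m₁) (q : ℝ) {s : ℝ} (hs : 0 < s) :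
    0 ≤ auxK m₁ q s ∧ auxK m₁ q s ≤
     (s * Real.cosh s ^ ((m₁:ℝ)/2 - 1) + 2 * 2 ^ ((1/2):ℝ)) * Real.cosh (q * s) := by
  unfold auxK
  rw [intervalIntegral.integral_of_le hs.le]
  constructor
  · exact setIntegral_nonneg measurableSet_Ioc fun r hr =>
      mul_nonneg (aux_wnn _ hr.1.le hr.2) (Real.cosh_pos _).le
  · have := setIntegral_mono_on (aux_Kint hm₁ q hs)
      ((aux_wint hm₁ hs).mul_const (Real.cosh (q * s))) measurableSet_Ioc
      (fun r hr => mul_le_mul_of_nonneg_left (Real.cosh_le_cosh.2 (by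
        rw [abs_mul, abs_mul, abs_of_pos hr.1, abs_of_pos hs]
        exact mul_le_mul_of_nonneg_left hr.2 (abs_nonneg _))) (aux_wnn _ hr.1.le hr.2))
    refine this.trans ?_
    rw [MeasureTheory.integral_mul_const]
    exact mul_le_mul_of_nonneg_right (aux_wbd hm₁ hs) (Real.cosh_pos _).le

lemma aux_w2int {m : ℕ} (hm : 1 ≤ m) {t : ℝ} (ht : 0 < t) :
    IntervalIntegrable (fun s => (Real.cosh (2*t) - Real.cosh (2*s)) ^ ((m:ℝ)/2 - 1))
      volume 0 t := by
  have h := (intervalIntegrable_iff_integrableOn_Ioc_of_le (by linarith)).2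
    (aux_wint hm (by linarith : 0 < 2 * t))
  have := h.comp_mul_left (c := 2)
  simpa using this

lemma aux_Rint {m₁ m₂ : ℕ} (hm₁ : 1 ≤ m₁) (hm₂ : 1 ≤ m₂) (q : ℝ) {t : ℝ} (ht : 0 < t) :
    IntegrableOn (fun s => (Real.cosh (2*t) - Real.cosh (2*s)) ^ ((m₂ : ℝ)/2 - 1) *
      (auxK m₁ q s * Real.sinh s)) (Ioc 0 t) := by
  have hc : Continuous (fun s => Real.cosh s ^ ((m₁:ℝ)/2 - 1)) :=
    Real.continuous_cosh.rpow_const fun s => Or.inl (Real.cosh_pos s).ne'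
  have hb := (intervalIntegrable_iff_integrableOn_Ioc_of_le ht.le).1
    ((aux_w2int hm₂ ht).mul_continuousOn (g := fun s =>
      ((s * Real.cosh s ^ ((m₁:ℝ)/2 - 1) + 2 * 2 ^ ((1/2):ℝ)) * Real.cosh (q * s)) * Real.sinh s)
      (by fun_prop))
  have hK := aux_measK m₁ q
  refine Integrable.mono' hb (Measurable.aestronglyMeasurable (by fun_prop)) ?_
  refine (ae_restrict_iff' measurableSet_Ioc).2 (Filter.Eventually.of_forall fun s hs => ?_)
  have hw := aux_wnn ((m₂ : ℝ)/2 - 1) (x := 2 * t) (y := 2 * s) (by linarith [hs.1])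
    (by linarith [hs.2])
  have hsh : 0 ≤ Real.sinh s := Real.sinh_nonneg_iff.2 hs.1.le
  obtain ⟨h0, h1⟩ := aux_Kbd hm₁ q hs.1
  rw [Real.norm_of_nonneg (mul_nonneg hw (mul_nonneg h0 hsh))]
  exact mul_le_mul_of_nonneg_left (mul_le_mul_of_nonneg_right h1 hsh) hw

lemma aux_main_s6 {m₁ m₂ : ℕ} (hm₁ : 1 ≤ m₁) (hm₂ : 1 ≤ m₂) (q : ℝ) {lam α θ₀ t : ℝ}
    (hθ₀' : θ₀ < Real.pi / 2) (h : |lam| * α ≤ θ₀) (ht : 0 < t) (htα : t ≤ α) :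
    ‖PhiC m₁ m₂ ((lam : ℂ) + Complex.I * (q : ℝ)) t‖ ≤ auxR m₁ m₂ q t ∧
    Real.cos θ₀ * auxR m₁ m₂ q t ≤ (PhiC m₁ m₂ ((lam : ℂ) + Complex.I * (q : ℝ)) t).re := by
  unfold PhiC auxR
  have hC : 0 ≤ c₀ m₁ m₂ * Real.sinh (2*t) / Δ m₁ m₂ t := by
    have h1 : 0 ≤ Real.sinh (2*t) := Real.sinh_nonneg_iff.2 (by linarith)
    have h2 : 0 ≤ Real.sinh t := Real.sinh_nonneg_iff.2 (by linarith)
    have h3 := (Real.cosh_pos t).le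
    have h4 : 0 ≤ Real.Gamma (((m₁ : ℝ) + m₂ + 1 - 1)/2) :=
      Real.Gamma_nonneg_of_nonneg (by rw [add_sub_cancel_right]; positivity)
    have h5 : 0 ≤ Real.Gamma (((m₁ : ℝ) + m₂ + 1)/2) :=
      Real.Gamma_nonneg_of_nonneg (by positivity)
    unfold c₀ Δ
    positivity
  refine aux_step hC ?_
  simp only [mul_assoc (((_ : ℝ) : ℂ)), mul_assoc ((_ : ℝ) ^ (_:ℝ))]
  rw [intervalIntegral.integral_of_le ht.le, intervalIntegral.integral_of_le ht.le]
  have hI := aux_measI m₁ ((lam : ℂ) + Complex.I * (q : ℝ))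
  refine aux_int_s6 measurableSet_Ioc ?_ (aux_Rint hm₁ hm₂ q ht) ?_
  · exact Measurable.mul (by fun_prop) (hI.mul (by fun_prop))
  · intro s hs
    refine aux_step (aux_wnn _ (by linarith [hs.1]) (by linarith [hs.2])) ?_
    have hsh : 0 ≤ Real.sinh s := Real.sinh_nonneg_iff.2 hs.1.le
    rw [mul_comm _ ((Real.sinh s : ℝ) : ℂ), mul_comm _ (Real.sinh s)]
    refine aux_step hsh ?_
    unfold auxK
    rw [intervalIntegral.integral_of_le hs.1.le, intervalIntegral.integral_of_le hs.1.le]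
    refine aux_int_s6 measurableSet_Ioc (by fun_prop) (aux_Kint hm₁ q hs.1) ?_
    intro r hr
    exact aux_step (aux_wnn _ hr.1.le hr.2)
      (aux_cos hθ₀' h hr.1.le (hr.2.trans (hs.2.trans htα)))

/-- For a non-negative radial `f` supported in `(0, α]` and
`|λ| α ≤ θ₀ < π/2`, the spherical transform of `f` at `λ + iρ_p` is comparable to
`∫₀^α f(t) φ_{iρ_p}(a_t) Δ(t) dt`, with explicit constants `cos θ₀` and `1`. -/
theorem stmt6 (m₁ m₂ : ℕ) (hm₁ : 1 ≤ m₁) (hm₂ : 1 ≤ m₂)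
    (p : ENNReal) (hp : 1 ≤ p) (α : ℝ) (hα : 0 < α)
    (θ₀ : ℝ) (hθ₀ : 0 < θ₀) (hθ₀' : θ₀ < Real.pi / 2)
    (f : ℝ → ℝ) (hf : Measurable f) (hf0 : ∀ t, 0 ≤ f t)
    (hsupp : ∀ t, t ∉ Ioc (0:ℝ) α → f t = 0)
    (hint : IntegrableOn
      (fun t => f t * (PhiC m₁ m₂ (Complex.I * (rhoP m₁ m₂ p : ℝ)) t).re * Δ m₁ m₂ t)
      (Ioc 0 α)) :
    ∀ lam : ℝ, |lam| * α ≤ θ₀ →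
      Real.cos θ₀ *
          ∫ t in Ioc (0:ℝ) α, f t * (PhiC m₁ m₂ (Complex.I * (rhoP m₁ m₂ p : ℝ)) t).re * Δ m₁ m₂ t
        ≤ ‖∫ t in Ioc (0:ℝ) α,
            (f t : ℂ) * PhiC m₁ m₂ ((lam : ℂ) + Complex.I * (rhoP m₁ m₂ p : ℝ)) t *
              (Δ m₁ m₂ t : ℝ)‖ ∧
      ‖∫ t in Ioc (0:ℝ) α,
          (f t : ℂ) * PhiC m₁ m₂ ((lam : ℂ) + Complex.I * (rhoP m₁ m₂ p : ℝ)) t *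
            (Δ m₁ m₂ t : ℝ)‖
        ≤ ∫ t in Ioc (0:ℝ) α,
            f t * (PhiC m₁ m₂ (Complex.I * (rhoP m₁ m₂ p : ℝ)) t).re * Δ m₁ m₂ t := by
  intro lam hlam
  have hD : ∀ t ∈ Ioc (0:ℝ) α, 0 ≤ Δ m₁ m₂ t := by
    intro t ht
    have h2 : 0 ≤ Real.sinh t := Real.sinh_nonneg_iff.2 ht.1.le
    have h3 := (Real.cosh_pos t).le
    unfold Δ
    positivity
  have hP := aux_measP m₁ m₂ ((lam : ℂ) + Complex.I * (rhoP m₁ m₂ p : ℝ))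
  have hDm : Measurable (Δ m₁ m₂) := by unfold Δ; fun_prop
  have key := aux_int_s6 (S := Ioc 0 α) (c := Real.cos θ₀) measurableSet_Ioc (g := fun t =>
    (f t : ℂ) * PhiC m₁ m₂ ((lam : ℂ) + Complex.I * (rhoP m₁ m₂ p : ℝ)) t *
            (Δ m₁ m₂ t : ℝ)) (by fun_prop) hint (by
    intro t ht
    rw [aux_real, Complex.ofReal_re, mul_comm _ ((Δ m₁ m₂ t : ℝ) : ℂ), mul_comm _ (Δ m₁ m₂ t)]
    exact aux_step (hD t ht) (aux_step (hf0 t) (aux_main_s6 hm₁ hm₂ _ hθ₀' hlam ht.1 ht.2)))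
  exact ⟨key.2.trans (Complex.re_le_norm _), key.1⟩
end
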